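/- Let N ≥ 2 and let Ω ⊂ ℝ^N be a bounded Lipschitz domain. Then for every n ∈ ℕ, lim_{s→1⁻} μ_n^{(s)}(Ω) = μ_n^{(1)}(Ω), i.e. the n-th eigenvalue of the fractional Neumann Laplacian converges to the n-th eigenvalue of the local Neumann Laplacian as s → 1⁻. -/

import Mathlib

open MeasureTheory Filter Topology Bornology Set
open scoped ENNReal NNReal

noncomputable section

namespace FracNeumann

abbrev Euc (N : ℕ) : Type := EuclideanSpace ℝ (Fin N)

/-- The kernel weight `|x - y| ^ (N + 2s)`. -/
def kern (N : ℕ) (s : ℝ) (x y : Euc N) : ℝ := ‖x - y‖ ^ ((N : ℝ) + 2 * s)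

/-- The region `ℝ^{2N} \ (Ω^c × Ω^c)`, where `Ω^c := ℝ^N \ closure Ω`. -/
def reg (N : ℕ) (Ω : Set (Euc N)) : Set (Euc N × Euc N) :=
  {q | q.1 ∈ closure Ω ∨ q.2 ∈ closure Ω}

/-- The squared seminorm `[u]_{H^s_{Ω,0}}²`, as an extended real number. -/
def semiSq (N : ℕ) (s : ℝ) (Ω : Set (Euc N)) (u : Euc N → ℝ) : ℝ≥0∞ :=
  ∫⁻ q in reg N Ω, ENNReal.ofReal ((u q.1 - u q.2) ^ 2 / kern N s q.1 q.2)

/-- `∫_Ω u²`, as an extended real number. -/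
def l2sq (N : ℕ) (Ω : Set (Euc N)) (u : Euc N → ℝ) : ℝ≥0∞ :=
  ∫⁻ x in Ω, ENNReal.ofReal ((u x) ^ 2)

/-- Membership in `H^s_{Ω,0}`. -/
def memHs (N : ℕ) (s : ℝ) (Ω : Set (Euc N)) (u : Euc N → ℝ) : Prop :=
  Measurable u ∧ l2sq N Ω u < ⊤ ∧ semiSq N s Ω u < ⊤

/-- The squared Gagliardo seminorm `[u]_{H^s(Ω)}²`. -/
def semiSqOn (N : ℕ) (s : ℝ) (Ω : Set (Euc N)) (u : Euc N → ℝ) : ℝ≥0∞ :=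
  ∫⁻ q in Ω ×ˢ Ω, ENNReal.ofReal ((u q.1 - u q.2) ^ 2 / kern N s q.1 q.2)

/-- Membership in `H^s(Ω)` (for functions defined on all of `ℝ^N`). -/
def memHsOn (N : ℕ) (s : ℝ) (Ω : Set (Euc N)) (u : Euc N → ℝ) : Prop :=
  Measurable u ∧ l2sq N Ω u < ⊤ ∧ semiSqOn N s Ω u < ⊤

/-- The normalizing constant `c_{N,s}` of the fractional Laplacian. -/
def cNs (N : ℕ) (s : ℝ) : ℝ :=
  (4 : ℝ) ^ s * s * Real.Gamma ((N : ℝ) / 2 + s) /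
    (Real.pi ^ ((N : ℝ) / 2) * Real.Gamma (1 - s))

/-- The nonlocal Neumann derivative `𝒩_s u`. -/
def Nneu (N : ℕ) (s : ℝ) (Ω : Set (Euc N)) (u : Euc N → ℝ) (x : Euc N) : ℝ :=
  cNs N s * ∫ y in Ω, (u x - u y) / kern N s x y

/-- Membership in `H̃^s_{Ω,0}`: members of `H^s_{Ω,0}` with `𝒩_s u = 0` a.e. in `Ω^c`. -/
def memHsTilde (N : ℕ) (s : ℝ) (Ω : Set (Euc N)) (u : Euc N → ℝ) : Prop :=
  memHs N s Ω u ∧ ∀ᵐ x ∂(volume.restrict (closure Ω)ᶜ), Nneu N s Ω u x = 0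

/-- The first nontrivial Neumann eigenvalue `μ₁^{(s)}(Ω)`. -/
def mu1 (N : ℕ) (s : ℝ) (Ω : Set (Euc N)) : ℝ :=
  sInf {t : ℝ | ∃ u : Euc N → ℝ, memHs N s Ω u ∧ (∫ x in Ω, (u x) ^ 2) = 1 ∧
    (∫ x in Ω, u x) = 0 ∧ t = cNs N s / 2 * (semiSq N s Ω u).toReal}

/-- The bilinear form (without the constant). -/
def bform (N : ℕ) (s : ℝ) (Ω : Set (Euc N)) (u v : Euc N → ℝ) : ℝ :=
  ∫ q in reg N Ω, (u q.1 - u q.2) * (v q.1 - v q.2) / kern N s q.1 q.2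

/-- First nontrivial eigenfunction: weak solution associated to `μ₁^{(s)}(Ω)`. -/
def IsFirstEigen (N : ℕ) (s : ℝ) (Ω : Set (Euc N)) (u : Euc N → ℝ) : Prop :=
  memHs N s Ω u ∧ ¬ (u =ᵐ[volume.restrict Ω] 0) ∧ (∫ x in Ω, u x) = 0 ∧
    ∀ v : Euc N → ℝ, memHs N s Ω v →
      cNs N s / 2 * bform N s Ω u v = mu1 N s Ω * ∫ x in Ω, u x * v x

/-- Reflection `σ_e(x) = x - 2(x·e)e` across the hyperplane `{x·e = 0}`. -/
def reflect (N : ℕ) (e x : Euc N) : Euc N := x - (2 * (inner ℝ x e : ℝ)) • e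

/-- The polarization `P_e u` with respect to the hyperplane `{x·e = 0}`. -/
def polarize (N : ℕ) (e : Euc N) (u : Euc N → ℝ) (x : Euc N) : ℝ :=
  if 0 ≤ (inner ℝ x e : ℝ) then min (u x) (u (reflect N e x))
  else max (u x) (u (reflect N e x))

/-- Foliated Schwarz symmetry with respect to `p`. -/
def FoliatedSchwarz (N : ℕ) (p : Euc N) (u : Euc N → ℝ) : Prop :=
  ∃ uh : ℝ → ℝ → ℝ, (∀ r : ℝ, AntitoneOn (uh r) (Icc 0 Real.pi)) ∧
    ∀ x : Euc N, x ≠ 0 → u x = uh ‖x‖ (Real.arccos ((inner ℝ x p : ℝ) / ‖x‖))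

/-- Radial symmetry (pointwise). -/
def Radial (N : ℕ) (u : Euc N → ℝ) : Prop := ∃ f : ℝ → ℝ, ∀ x, u x = f ‖x‖

/-- Radial symmetry (a.e.). -/
def RadialAE (N : ℕ) (u : Euc N → ℝ) : Prop :=
  ∃ f : ℝ → ℝ, ∀ᵐ x : Euc N ∂volume, u x = f ‖x‖

/-- The set `{x ∈ Ω : u x ≠ 0}` has exactly two connected components. -/
def TwoNodal (N : ℕ) (Ω : Set (Euc N)) (u : Euc N → ℝ) : Prop :=
  Nat.card (ConnectedComponents {x : Euc N // x ∈ Ω ∧ u x ≠ 0}) = 2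

/-- Bounded Lipschitz domain: open, bounded, connected, and near every boundary point the set
is the region above the graph of a Lipschitz function in some direction `e`. -/
def IsLipschitzDomain (N : ℕ) (Ω : Set (Euc N)) : Prop :=
  IsOpen Ω ∧ IsBounded Ω ∧ IsConnected Ω ∧
    ∀ x ∈ frontier Ω, ∃ e : Euc N, ‖e‖ = 1 ∧ ∃ r : ℝ, 0 < r ∧
      ∃ (L : NNReal) (f : Euc N → ℝ), LipschitzWith L f ∧
        ∀ y ∈ Metric.ball x r,
          (y ∈ Ω ↔ f (y - ((inner ℝ y e : ℝ)) • e) < (inner ℝ y e : ℝ))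

/-- `g` is a weak gradient of `u` in `Ω`, square-integrable on `Ω`. -/
def IsWeakGradient (N : ℕ) (Ω : Set (Euc N)) (u : Euc N → ℝ) (g : Euc N → Euc N) : Prop :=
  Measurable g ∧ (∫⁻ x in Ω, ENNReal.ofReal (‖g x‖ ^ 2)) < ⊤ ∧
    ∀ φ : Euc N → ℝ, ContDiff ℝ (⊤ : ℕ∞) φ → HasCompactSupport φ → tsupport φ ⊆ Ω →
      ∀ i : Fin N, (∫ x in Ω, u x * fderiv ℝ φ x (EuclideanSpace.single i 1)) =
        - ∫ x in Ω, g x i * φ x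

/-- Membership in `H¹(Ω)`. -/
def memH1 (N : ℕ) (Ω : Set (Euc N)) (u : Euc N → ℝ) : Prop :=
  Measurable u ∧ l2sq N Ω u < ⊤ ∧ ∃ g, IsWeakGradient N Ω u g

/-- `∫_Ω |∇u|²`, as an extended real number. -/
def gradSq (N : ℕ) (Ω : Set (Euc N)) (u : Euc N → ℝ) : ℝ≥0∞ :=
  ⨅ (g : Euc N → Euc N) (_ : IsWeakGradient N Ω u g), ∫⁻ x in Ω, ENNReal.ofReal (‖g x‖ ^ 2)

/-- Rayleigh quotient for the fractional Neumann problem. -/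
def rayleighS (N : ℕ) (s : ℝ) (Ω : Set (Euc N)) (u : Euc N → ℝ) : ℝ≥0∞ :=
  ENNReal.ofReal (cNs N s / 2) * semiSq N s Ω u / l2sq N Ω u

/-- Rayleigh quotient for the local Neumann problem. -/
def rayleigh1 (N : ℕ) (Ω : Set (Euc N)) (u : Euc N → ℝ) : ℝ≥0∞ :=
  gradSq N Ω u / l2sq N Ω u

/-- The min-max value `μ_n^{(s)}(Ω)` over `n`-dimensional subspaces of `H^s_{Ω,0} ∩ L²₀(Ω)`. -/
def muNs (N : ℕ) (s : ℝ) (Ω : Set (Euc N)) (n : ℕ) : ℝ≥0∞ :=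
  ⨅ (A : Submodule ℝ (Euc N → ℝ)) (_ : Module.finrank ℝ A = n ∧
      (∀ u ∈ A, memHs N s Ω u ∧ (∫ x in Ω, u x) = 0) ∧
      (∀ u ∈ A, u =ᵐ[(volume : Measure (Euc N))] 0 → u = 0)),
    ⨆ (u : Euc N → ℝ) (_ : u ∈ A ∧ u ≠ 0), rayleighS N s Ω u

/-- The min-max value over `n`-dimensional subspaces of `H̃^s_{Ω,0} ∩ L²₀(Ω)`. -/
def muNsTilde (N : ℕ) (s : ℝ) (Ω : Set (Euc N)) (n : ℕ) : ℝ≥0∞ :=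
  ⨅ (A : Submodule ℝ (Euc N → ℝ)) (_ : Module.finrank ℝ A = n ∧
      (∀ u ∈ A, memHsTilde N s Ω u ∧ (∫ x in Ω, u x) = 0) ∧
      (∀ u ∈ A, u =ᵐ[(volume : Measure (Euc N))] 0 → u = 0)),
    ⨆ (u : Euc N → ℝ) (_ : u ∈ A ∧ u ≠ 0), rayleighS N s Ω u

/-- The min-max value `μ_n^{(1)}(Ω)` over `n`-dimensional subspaces of `H¹(Ω) ∩ L²₀(Ω)`. -/
def muN1 (N : ℕ) (Ω : Set (Euc N)) (n : ℕ) : ℝ≥0∞ :=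
  ⨅ (A : Submodule ℝ (Euc N → ℝ)) (_ : Module.finrank ℝ A = n ∧
      (∀ u ∈ A, memH1 N Ω u ∧ (∫ x in Ω, u x) = 0) ∧
      (∀ u ∈ A, u =ᵐ[volume.restrict Ω] 0 → u = 0)),
    ⨆ (u : Euc N → ℝ) (_ : u ∈ A ∧ u ≠ 0), rayleigh1 N Ω u

/-- `μ_n^{(s)}(Ω)` including `μ₀^{(s)}(Ω) := 0`. -/
def muNsFull (N : ℕ) (s : ℝ) (Ω : Set (Euc N)) (n : ℕ) : ℝ≥0∞ :=
  if n = 0 then 0 else muNs N s Ω n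

/-- `μ_n^{(1)}(Ω)` including `μ₀^{(1)}(Ω) := 0`. -/
def muN1Full (N : ℕ) (Ω : Set (Euc N)) (n : ℕ) : ℝ≥0∞ :=
  if n = 0 then 0 else muN1 N Ω n

/-- The squared `H^s_{Ω,0}`-seminorm of the `s`-minimal extension of `u`:
the minimal value of `[v]²` over `v ∈ H^s_{Ω,0}` with `v = u` a.e. in `Ω`. -/
def minExtSemiSq (N : ℕ) (s : ℝ) (Ω : Set (Euc N)) (u : Euc N → ℝ) : ℝ≥0∞ :=
  ⨅ (v : Euc N → ℝ) (_ : memHs N s Ω v ∧ v =ᵐ[volume.restrict Ω] u), semiSq N s Ω v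

/-- `ω_{N-1}`: volume of the unit ball of `ℝ^{N-1}`. -/
def omegaPrev (N : ℕ) : ℝ := (volume (Metric.ball (0 : Euc (N - 1)) 1)).toReal

/-- Membership in `L²₀(Ω)`. -/
def memL20 (N : ℕ) (Ω : Set (Euc N)) (u : Euc N → ℝ) : Prop :=
  Measurable u ∧ l2sq N Ω u < ⊤ ∧ (∫ x in Ω, u x) = 0

/-- The functional `F_s` (value `+∞` outside `H^s(Ω)`). -/
def Fs (N : ℕ) (s : ℝ) (Ω : Set (Euc N)) (u : Euc N → ℝ) : ℝ≥0∞ :=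
  ENNReal.ofReal (1 - s) * minExtSemiSq N s Ω u

/-- The functional `F₁` (value `+∞` outside `H¹(Ω)`). -/
def F1 (N : ℕ) (Ω : Set (Euc N)) (u : Euc N → ℝ) : ℝ≥0∞ :=
  ENNReal.ofReal (omegaPrev N / (2 * N)) * gradSq N Ω u

end FracNeumann
namespace FracNeumann

section

/-- Uniform positive lower bound over a finite set. -/
theorem exists_pos_le_finset {ι : Type*} (J : Finset ι) (f : ι → ℝ) (hf : ∀ j ∈ J, 0 < f j) :
    ∃ m : ℝ, 0 < m ∧ m ≤ 1 ∧ ∀ j ∈ J, m ≤ f j := by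
  classical
  induction J using Finset.induction_on with
  | empty => exact ⟨1, one_pos, le_rfl, by simp⟩
  | insert a s ha ih =>
    obtain ⟨m, hm, hm1, h⟩ := ih (fun j hj => hf j (Finset.mem_insert_of_mem hj))
    refine ⟨min m (f a), lt_min hm (hf a (Finset.mem_insert_self _ _)),
      (min_le_left _ _).trans hm1, ?_⟩
    intro j hj
    rcases Finset.mem_insert.1 hj with rfl | hj
    · exact min_le_right _ _
    · exact (min_le_left _ _).trans (h j hj)

/-- Local cone property at a boundary point. -/
theorem chart_step {N : ℕ} {Ω : Set (Euc N)} (hΩ : IsLipschitzDomain N Ω) (p : Euc N)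
    (hp : p ∈ frontier Ω) :
    ∃ (e : Euc N) (r c : ℝ), ‖e‖ = 1 ∧ 0 < r ∧ 0 < c ∧
      ∀ y ∈ closure Ω, y ∈ Metric.ball p r → ∀ τ : ℝ, 0 < τ → ∀ z : Euc N, ‖z‖ < c * τ →
        y + τ • e + z ∈ Metric.ball p r → y + τ • e + z ∈ Ω := by
  obtain ⟨e, he, r, hr, L, f, hf, H⟩ := hΩ.2.2.2 p hp
  have hL : (0 : ℝ) < 1 + L := by positivity
  refine ⟨e, r, 1 / (1 + L), he, hr, by positivity, ?_⟩
  intro y hy hyr τ hτ z hz hyz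
  have hee : (inner ℝ e e : ℝ) = 1 := by rw [real_inner_self_eq_norm_sq, he]; norm_num
  have hcl : f (y - (inner ℝ y e : ℝ) • e) ≤ (inner ℝ y e : ℝ) := by
    have h1 : y ∈ closure (Metric.ball p r ∩ Ω) :=
      Metric.isOpen_ball.inter_closure ⟨hyr, hy⟩
    have hcont : IsClosed {y : Euc N | f (y - (inner ℝ y e : ℝ) • e) ≤ (inner ℝ y e : ℝ)} := by
      apply isClosed_le
      · exact hf.continuous.comp (by fun_prop)
      · fun_prop
    refine closure_minimal ?_ hcont h1
    intro w hw
    exact ((H w hw.1).1 hw.2).le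
  rw [H _ hyz]
  have h2 : y + τ • e + z - (inner ℝ (y + τ • e + z) e : ℝ) • e
      = (y - (inner ℝ y e : ℝ) • e) + (z - (inner ℝ z e : ℝ) • e) := by
    simp only [inner_add_left, real_inner_smul_left, hee]
    module
  have hproj : ‖z - (inner ℝ z e : ℝ) • e‖ ≤ ‖z‖ := by
    have : ‖z - (inner ℝ z e : ℝ) • e‖ ^ 2 ≤ ‖z‖ ^ 2 := by
      rw [norm_sub_sq_real, real_inner_smul_right, norm_smul, he]
      simp only [Real.norm_eq_abs, mul_one, sq_abs]
      nlinarith [sq_nonneg (inner ℝ z e : ℝ)]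
    exact (sq_le_sq₀ (norm_nonneg _) (norm_nonneg _)).1 this
  have h3 : f (y + τ • e + z - (inner ℝ (y + τ • e + z) e : ℝ) • e) ≤
      f (y - (inner ℝ y e : ℝ) • e) + L * ‖z‖ := by
    rw [h2]
    have := hf.dist_le_mul (y - (inner ℝ y e : ℝ) • e + (z - (inner ℝ z e : ℝ) • e))
      (y - (inner ℝ y e : ℝ) • e)
    rw [dist_eq_norm, dist_eq_norm, add_sub_cancel_left, Real.norm_eq_abs] at this
    have h4 := (le_abs_self _).trans this
    have h5 : (L : ℝ) * ‖z - (inner ℝ z e : ℝ) • e‖ ≤ L * ‖z‖ := by gcongr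
    linarith
  have h6 : (inner ℝ (y + τ • e + z) e : ℝ) ≥ inner ℝ y e + τ - ‖z‖ := by
    simp only [inner_add_left, real_inner_smul_left, hee]
    have := abs_real_inner_le_norm z e
    rw [he, mul_one] at this
    have := (abs_le.1 this).1
    linarith
  have h7 : (1 + L) * ‖z‖ < τ := by
    rw [one_div, inv_mul_eq_div, lt_div_iff₀ hL] at hz
    linarith
  linarith

theorem geom {N : ℕ} {Ω : Set (Euc N)} (hΩ : IsLipschitzDomain N Ω) :
    ∃ X : Euc N → Euc N, ContDiff ℝ (⊤ : ℕ∞) X ∧ HasCompactSupport X ∧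
      ∃ c : ℝ, 0 < c ∧ ∃ t0 : ℝ, 0 < t0 ∧ ∀ t : ℝ, 0 < t → t ≤ t0 → ∀ x ∈ closure Ω,
        Metric.ball (x + t • X x) (c * t) ⊆ Ω := by
  classical
  have hcpt : IsCompact (closure Ω) := hΩ.2.1.isCompact_closure
  have hfr : IsCompact (frontier Ω) := hcpt.of_isClosed_subset isClosed_frontier
    frontier_subset_closure
  choose! e r c he hr hc H using fun p (hp : p ∈ frontier Ω) => chart_step hΩ p hp
  obtain ⟨J, hJ, hcov⟩ := hfr.elim_nhds_subcover (fun p => Metric.ball p (r p / 4))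
    (fun p hp => Metric.ball_mem_nhds p (by have := hr p hp; positivity))
  have hex : ∀ p : Euc N, ∃ χ : Euc N → ℝ, p ∈ J → (ContDiff ℝ (⊤ : ℕ∞) χ ∧ HasCompactSupport χ ∧
      (∀ x, 0 ≤ χ x) ∧ (∀ x, χ x ≤ 1) ∧ (∀ x ∈ Metric.ball p (r p / 4), χ x = 1) ∧
      (∀ x, χ x ≠ 0 → x ∈ Metric.ball p (r p / 2))) := by
    intro p
    by_cases hp : p ∈ J
    · have hrp := hr p (hJ p hp)
      let b : ContDiffBump p := ⟨r p / 4, r p / 2, by positivity, by linarith⟩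
      refine ⟨b, fun _ => ⟨b.contDiff, b.hasCompactSupport, fun x => b.nonneg, fun x => b.le_one,
        fun x hx => b.one_of_mem_closedBall (Metric.ball_subset_closedBall hx), fun x hx => ?_⟩⟩
      have : x ∈ Function.support b := hx
      rwa [b.support_eq] at this
    · exact ⟨0, fun h => absurd h hp⟩
  choose χ hχ using hex
  obtain ⟨c1, hc1, hc11, hc1le⟩ := exists_pos_le_finset J c (fun p hp => hc p (hJ p hp))
  obtain ⟨r1, hr1, hr11, hr1le⟩ := exists_pos_le_finset J r (fun p hp => hr p (hJ p hp))
  have hKc : IsCompact (closure Ω \ ⋃ p ∈ J, Metric.ball p (r p / 4)) :=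
    hcpt.diff (isOpen_biUnion fun p _ => Metric.isOpen_ball)
  have hKΩ : (closure Ω \ ⋃ p ∈ J, Metric.ball p (r p / 4)) ⊆ Ω := by
    intro x hx
    by_contra hxΩ
    have : x ∈ frontier Ω := by rw [hΩ.1.frontier_eq]; exact ⟨hx.1, hxΩ⟩
    exact hx.2 (hcov this)
  obtain ⟨ε, hε, hεK⟩ := hKc.exists_thickening_subset_open hΩ.1 hKΩ
  set m : ℝ := (J.card : ℝ) + 1 with hm
  have hm0 : 1 ≤ m := by rw [hm]; have : (0:ℝ) ≤ J.card := by positivity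
                         linarith
  set d : ℝ := c1 / 2 with hd
  have hd0 : 0 < d := by positivity
  have hd1 : d ≤ 1 := by rw [hd]; linarith
  set t0 : ℝ := min (r1 / (8 * m)) (ε / (8 * m)) with ht0
  have ht0pos : 0 < t0 := lt_min (by positivity) (by positivity)
  have hsum_le : ∀ S ⊆ J, ∀ y, ∑ j ∈ S, χ j y ≤ m := by
    intro S hS y
    calc ∑ j ∈ S, χ j y ≤ ∑ j ∈ S, (1 : ℝ) :=
          Finset.sum_le_sum fun j hj => (hχ j (hS hj)).2.2.2.1 y
      _ = S.card := by simp
      _ ≤ J.card := by exact_mod_cast Finset.card_le_card hS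
      _ ≤ m := by rw [hm]; linarith
  have hXS : ∀ S ⊆ J, ∀ y, ‖∑ j ∈ S, χ j y • e j‖ ≤ ∑ j ∈ S, χ j y := by
    intro S hS y
    refine (norm_sum_le _ _).trans (Finset.sum_le_sum fun j hj => ?_)
    rw [norm_smul, he j (hJ j (hS hj)), mul_one, Real.norm_eq_abs,
      abs_of_nonneg ((hχ j (hS hj)).2.2.1 y)]
  have hS0 : ∀ S ⊆ J, ∀ y, 0 ≤ ∑ j ∈ S, χ j y := fun S hS y =>
    Finset.sum_nonneg fun j hj => (hχ j (hS hj)).2.2.1 y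
  have key : ∀ t : ℝ, 0 < t → t ≤ t0 → ∀ y ∈ closure Ω, ∀ S : Finset (Euc N), S ⊆ J →
      ∀ z : Euc N, ‖z‖ ≤ d * t * ∑ j ∈ S, χ j y →
        (y + t • (∑ j ∈ S, χ j y • e j) + z ∈ closure Ω ∧
          (0 < ∑ j ∈ S, χ j y → y + t • (∑ j ∈ S, χ j y • e j) + z ∈ Ω)) := by
    intro t ht htt y hy S
    induction S using Finset.induction_on with
    | empty =>
      intro _ z hz
      have : z = 0 := by simpa using hz
      simp [this, hy]
    | insert j S hjS ih =>
      intro hSJ z hz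
      have hj : j ∈ J := hSJ (Finset.mem_insert_self _ _)
      have hS : S ⊆ J := fun i hi => hSJ (Finset.mem_insert_of_mem hi)
      rw [Finset.sum_insert hjS] at hz ⊢
      rw [Finset.sum_insert hjS]
      rcases ((hχ j hj).2.2.1 y).eq_or_lt with h0 | h0
      · rw [← h0] at hz ⊢
        simp only [zero_add, zero_smul] at hz ⊢
        exact ih hS z hz
      · have hyb := (hχ j hj).2.2.2.2.2 y h0.ne'
        set a := χ j y with ha
        set σ := ∑ i ∈ S, χ i y with hσ
        have hσ0 : 0 ≤ σ := hS0 S hS y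
        have hσm : σ ≤ m := hsum_le S hS y
        have haσ : 0 < a + σ := by linarith
        have htot : a + σ ≤ m := by
          have := hsum_le _ hSJ y
          rwa [Finset.sum_insert hjS] at this
        set V := ∑ i ∈ S, χ i y • e i with hV
        have hVn : ‖V‖ ≤ σ := hXS S hS y
        have hz1 : ‖(σ / (a + σ)) • z‖ ≤ d * t * σ := by
          rw [norm_smul, Real.norm_eq_abs, abs_of_nonneg (by positivity)]
          calc σ / (a + σ) * ‖z‖ ≤ σ / (a + σ) * (d * t * (a + σ)) := by gcongr
            _ = d * t * σ := by field_simp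
        have hz2 : ‖(a / (a + σ)) • z‖ < c j * (t * a) := by
          rw [norm_smul, Real.norm_eq_abs, abs_of_nonneg (by positivity)]
          calc a / (a + σ) * ‖z‖ ≤ a / (a + σ) * (d * t * (a + σ)) := by gcongr
            _ = d * (t * a) := by field_simp
            _ < c j * (t * a) := by
              have := hc1le j hj
              have : d < c j := by rw [hd]; linarith
              have : 0 < t * a := by positivity
              gcongr
        have hy1 := (ih hS _ hz1).1
        have hrj := hr1le j hj
        have htm : t * m ≤ r1 / 8 := by
          have : t ≤ r1 / (8 * m) := htt.trans (min_le_left _ _)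
          calc t * m ≤ r1 / (8 * m) * m := by gcongr
            _ = r1 / 8 := by field_simp
        rw [Metric.mem_ball, dist_eq_norm] at hyb
        have hb1 : y + t • V + (σ / (a + σ)) • z ∈ Metric.ball j (r j) := by
          rw [Metric.mem_ball, dist_eq_norm]
          calc ‖y + t • V + (σ / (a + σ)) • z - j‖
              = ‖(y - j) + t • V + (σ / (a + σ)) • z‖ := by congr 1; abel
            _ ≤ ‖y - j‖ + ‖t • V‖ + ‖(σ / (a + σ)) • z‖ := norm_add₃_le
            _ ≤ ‖y - j‖ + t * σ + 1 * t * σ := by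
              rw [norm_smul, Real.norm_eq_abs, abs_of_pos ht]
              gcongr
              exact hz1.trans (by gcongr)
            _ ≤ ‖y - j‖ + t * m + 1 * t * m := by gcongr
            _ < r j := by linarith
        have heq : y + t • (a • e j + V) + z =
            (y + t • V + (σ / (a + σ)) • z) + (t * a) • e j + (a / (a + σ)) • z := by
          have : z = (σ / (a + σ)) • z + (a / (a + σ)) • z := by
            rw [← add_smul, ← add_div, add_comm σ a, div_self haσ.ne', one_smul]
          nth_rewrite 1 [this]
          rw [smul_add, smul_smul]
          abel
        have hb2 : (y + t • V + (σ / (a + σ)) • z) + (t * a) • e j + (a / (a + σ)) • z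
            ∈ Metric.ball j (r j) := by
          rw [← heq, Metric.mem_ball, dist_eq_norm]
          have hn : ‖a • e j + V‖ ≤ m := by
            refine (norm_add_le _ _).trans ?_
            rw [norm_smul, he j (hJ j hj), mul_one, Real.norm_eq_abs, abs_of_pos h0]
            linarith
          calc ‖y + t • (a • e j + V) + z - j‖
              = ‖(y - j) + t • (a • e j + V) + z‖ := by congr 1; abel
            _ ≤ ‖y - j‖ + ‖t • (a • e j + V)‖ + ‖z‖ := norm_add₃_le
            _ ≤ ‖y - j‖ + t * m + 1 * t * m := by
              rw [norm_smul, Real.norm_eq_abs, abs_of_pos ht]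
              gcongr
              exact hz.trans (by gcongr)
            _ < r j := by linarith
        have hfin := H j (hJ j hj) _ hy1 hb1 (t * a) (by positivity) _ hz2 hb2
        rw [← heq] at hfin
        exact ⟨subset_closure hfin, fun _ => hfin⟩
  refine ⟨fun x => ∑ j ∈ J, χ j x • e j, ?_, ?_, d, hd0, t0, ht0pos, ?_⟩
  · exact ContDiff.sum fun j hj => (hχ j hj).1.smul contDiff_const
  · have hc2 : IsCompact (⋃ j ∈ J, tsupport (χ j)) := 
      J.isCompact_biUnion fun j hj => (hχ j hj).2.1
    refine HasCompactSupport.intro hc2 ?_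
    intro x hx
    refine Finset.sum_eq_zero fun j hj => ?_
    have : x ∉ tsupport (χ j) := fun h => hx (Set.mem_biUnion hj h)
    rw [image_eq_zero_of_notMem_tsupport this, zero_smul]
  · intro t ht htt x hx y hy
    rw [Metric.mem_ball, dist_eq_norm] at hy
    by_cases hxJ : ∃ j ∈ J, x ∈ Metric.ball j (r j / 4)
    · obtain ⟨j, hj, hxj⟩ := hxJ
      have h1 : 1 ≤ ∑ i ∈ J, χ i x := by
        rw [← (hχ j hj).2.2.2.2.1 x hxj]
        exact Finset.single_le_sum (fun i hi => (hχ i hi).2.2.1 x) hj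
      have := (key t ht htt x hx J subset_rfl (y - (x + t • ∑ j ∈ J, χ j x • e j)) ?_).2
        (by linarith)
      · simpa using this
      · refine hy.le.trans ?_
        have : 0 ≤ d * t := by positivity
        nlinarith
    · apply hεK
      rw [Metric.mem_thickening_iff]
      refine ⟨x, ⟨hx, ?_⟩, ?_⟩
      · simpa using hxJ
      · rw [dist_eq_norm]
        have htm : t * m ≤ ε / 8 := by
          have : t ≤ ε / (8 * m) := htt.trans (min_le_right _ _)
          calc t * m ≤ ε / (8 * m) * m := by gcongr
            _ = ε / 8 := by field_simp
        have hdt : d * t ≤ t * m := by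
          rw [mul_comm]; gcongr; linarith
        calc ‖y - x‖ = ‖(y - (x + t • ∑ j ∈ J, χ j x • e j)) + t • ∑ j ∈ J, χ j x • e j‖ := by
              congr 1; abel
          _ ≤ ‖y - (x + t • ∑ j ∈ J, χ j x • e j)‖ + ‖t • ∑ j ∈ J, χ j x • e j‖ :=
              norm_add_le _ _
          _ ≤ d * t + t * m := by
            rw [norm_smul, Real.norm_eq_abs, abs_of_pos ht]
            gcongr
            exact (hXS J subset_rfl x).trans (hsum_le J subset_rfl x)
          _ < ε := by linarith


end

section

/-- Squared difference, as an extended real. -/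
def Dd {N : ℕ} (u : Euc N → ℝ) (q : Euc N × Euc N) : ℝ≥0∞ := ENNReal.ofReal ((u q.1 - u q.2) ^ 2)

/-- The moving cone region. -/
def Sset {N : ℕ} (Ω : Set (Euc N)) (X : Euc N → Euc N) (τ c : ℝ) : Set (Euc N × Euc N) :=
  {q | q.1 ∈ Ω ∧ ‖q.2 - q.1 - τ • X q.1‖ < c * τ}

def Gf {N : ℕ} (Ω : Set (Euc N)) (X : Euc N → Euc N) (u : Euc N → ℝ) (τ c : ℝ) : ℝ≥0∞ :=
  ∫⁻ x, ∫⁻ y, (Sset Ω X τ c).indicator (Dd u) (x, y)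

theorem measurable_Dd {N : ℕ} {u : Euc N → ℝ} (hu : Measurable u) : Measurable (Dd u) := by
  unfold Dd; fun_prop

theorem measurableSet_Sset {N : ℕ} {Ω : Set (Euc N)} (hΩ : IsOpen Ω) {X : Euc N → Euc N}
    (hX : Continuous X) (τ c : ℝ) : MeasurableSet (Sset Ω X τ c) := by
  apply MeasurableSet.inter
  · exact measurable_fst hΩ.measurableSet
  · have h1 : Continuous fun q : Euc N × Euc N => ‖q.2 - q.1 - τ • X q.1‖ := by fun_prop
    exact (isOpen_lt h1 continuous_const).measurableSet

theorem lintegral_half {N : ℕ} (f : Euc N → ℝ≥0∞) (hf : Measurable f) (x : Euc N) :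
    ∫⁻ y, f ((1 / 2 : ℝ) • (x + y)) = 2 ^ N * ∫⁻ w, f w := by
  have h1 : ∫⁻ y, f ((1 / 2 : ℝ) • (x + y)) = ∫⁻ y, f ((1 / 2 : ℝ) • y) :=
    lintegral_add_left_eq_self (fun y => f ((1 / 2 : ℝ) • y)) x
  rw [h1]
  have h2 := Measure.map_addHaar_smul (volume : Measure (Euc N)) (r := (1 / 2 : ℝ)) (by norm_num)
  have h3 : ∫⁻ w, f w ∂(Measure.map ((1 / 2 : ℝ) • ·) (volume : Measure (Euc N)))
      = ∫⁻ y, f ((1 / 2 : ℝ) • y) :=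
    lintegral_map hf (measurable_const_smul _)
  rw [← h3, h2, lintegral_smul_measure]
  congr 1
  simp only [finrank_euclideanSpace, Fintype.card_fin]
  rw [abs_of_pos (by positivity)]
  simp

theorem Dd_split {N : ℕ} (u : Euc N → ℝ) (x w y : Euc N) :
    Dd u (x, y) ≤ 2 * Dd u (x, w) + 2 * Dd u (w, y) := by
  unfold Dd
  have h2 : (2 : ℝ≥0∞) = ENNReal.ofReal 2 := by simp
  rw [h2, ← ENNReal.ofReal_mul (by norm_num), ← ENNReal.ofReal_mul (by norm_num),
    ← ENNReal.ofReal_add (by positivity) (by positivity)]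
  apply ENNReal.ofReal_le_ofReal
  simp only
  nlinarith [sq_nonneg (u x - u w - (u w - u y))]

set_option maxHeartbeats 1000000 in
theorem Gf_half {N : ℕ} {Ω : Set (Euc N)} (hΩ : IsOpen Ω) {X : Euc N → Euc N}
    (hX : Continuous X) {M L c0 t0 : ℝ} (hL0 : 0 ≤ L)
    (hM : ∀ x, ‖X x‖ ≤ M) (hL : ∀ x y, ‖X x - X y‖ ≤ L * ‖x - y‖)
    (hball : ∀ t : ℝ, 0 < t → t ≤ t0 → ∀ x ∈ closure Ω, Metric.ball (x + t • X x) (c0 * t) ⊆ Ω)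
    {u : Euc N → ℝ} (hu : Measurable u) {τ c : ℝ} (hτ : 0 < τ) (hτ0 : τ ≤ t0) (hc0 : c ≤ c0) :
    Gf Ω X u τ c ≤ 2 ^ (N + 2) * Gf Ω X u (τ / 2) (c + L * (M + c0) * (τ / 2)) := by
  set c' := c + L * (M + c0) * (τ / 2) with hc'
  by_cases hpos : 0 ≤ M + c0
  swap
  · -- empty region
    have : Sset Ω X τ c = ∅ := by
      ext q
      simp only [Sset, mem_ofPred_eq, mem_empty_iff_false, iff_false, not_and, not_lt]
      intro _
      have := hM q.1
      have := norm_nonneg (X q.1)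
      have : c < 0 := by linarith
      have : c * τ ≤ 0 := by nlinarith
      exact this.trans (norm_nonneg _)
    simp [Gf, this]
  have hcc' : c ≤ c' := by
    have : 0 ≤ L * (M + c0) * (τ / 2) := by positivity
    linarith
  set F := (Sset Ω X (τ / 2) c').indicator (Dd u) with hF
  have hFm : Measurable F := (measurable_Dd hu).indicator (measurableSet_Sset hΩ hX _ _)
  have hpt : ∀ x y, (Sset Ω X τ c).indicator (Dd u) (x, y) ≤
      2 * F (x, (1 / 2 : ℝ) • (x + y)) + 2 * F ((1 / 2 : ℝ) • (x + y), y) := by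
    intro x y
    by_cases hxy : (x, y) ∈ Sset Ω X τ c
    swap
    · rw [indicator_of_notMem hxy]; exact zero_le
    have hxy' := hxy
    obtain ⟨hx, hn⟩ := hxy
    simp only at hx hn
    set w := (1 / 2 : ℝ) • (x + y) with hw
    have hwx : w - x - (τ / 2) • X x = (1 / 2 : ℝ) • (y - x - τ • X x) := by
      rw [hw]; module
    have hn1 : ‖w - x - (τ / 2) • X x‖ < c * (τ / 2) := by
      rw [hwx, norm_smul, Real.norm_eq_abs, abs_of_pos (by norm_num)]
      linarith
    have hwΩ : w ∈ Ω := by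
      apply hball (τ / 2) (by positivity) (by linarith) x (subset_closure hx)
      rw [Metric.mem_ball, dist_eq_norm, ← sub_sub]
      refine hn1.trans_le ?_
      gcongr
    have hwxn : ‖x - w‖ ≤ (M + c0) * (τ / 2) := by
      rw [norm_sub_rev]
      calc ‖w - x‖ = ‖(w - x - (τ / 2) • X x) + (τ / 2) • X x‖ := by congr 1; abel
        _ ≤ ‖w - x - (τ / 2) • X x‖ + ‖(τ / 2) • X x‖ := norm_add_le _ _
        _ ≤ c * (τ / 2) + (τ / 2) * M := by
          rw [norm_smul, Real.norm_eq_abs, abs_of_pos (by positivity)]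
          gcongr
          exact hM x
        _ ≤ c0 * (τ / 2) + (τ / 2) * M := by gcongr
        _ = (M + c0) * (τ / 2) := by ring
    have hm1 : (x, w) ∈ Sset Ω X (τ / 2) c' := by
      refine ⟨hx, hn1.trans_le ?_⟩
      gcongr
    have hm2 : (w, y) ∈ Sset Ω X (τ / 2) c' := by
      refine ⟨hwΩ, ?_⟩
      simp only
      have : y - w - (τ / 2) • X w = (w - x - (τ / 2) • X x) + (τ / 2) • (X x - X w) := by
        rw [hw]; module
      rw [this]
      calc _ ≤ ‖w - x - (τ / 2) • X x‖ + ‖(τ / 2) • (X x - X w)‖ := norm_add_le _ _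
        _ < c * (τ / 2) + (τ / 2) * (L * ((M + c0) * (τ / 2))) := by
          rw [norm_smul (τ / 2), Real.norm_eq_abs, abs_of_pos (by positivity : 0 < τ / 2)]
          refine add_lt_add_of_lt_of_le hn1 ?_
          gcongr
          exact (hL x w).trans (by gcongr)
        _ = c' * (τ / 2) := by rw [hc']; ring
    rw [indicator_of_mem hxy', hF, indicator_of_mem hm1, indicator_of_mem hm2]
    exact Dd_split u x w y
  have hm3 : Measurable fun q : Euc N × Euc N => F (q.1, (1 / 2 : ℝ) • (q.1 + q.2)) :=
    hFm.comp (by fun_prop)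
  have hm4 : Measurable fun q : Euc N × Euc N => F ((1 / 2 : ℝ) • (q.1 + q.2), q.2) :=
    hFm.comp (by fun_prop)
  have hG : ∫⁻ x, ∫⁻ y, F (x, y) = Gf Ω X u (τ / 2) c' := rfl
  have hR1 : Measurable fun x => ∫⁻ y, F (x, y) := hFm.lintegral_prod_right'
  have hR2 : Measurable fun y => ∫⁻ x, F (x, y) := hFm.lintegral_prod_left'
  have hR3 : Measurable fun x => ∫⁻ y, F (x, (1 / 2 : ℝ) • (x + y)) := hm3.lintegral_prod_right'
  have hR4 : Measurable fun x => ∫⁻ y, F ((1 / 2 : ℝ) • (x + y), y) := hm4.lintegral_prod_right'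
  have hA : ∫⁻ x, ∫⁻ y, F (x, (1 / 2 : ℝ) • (x + y)) = 2 ^ N * Gf Ω X u (τ / 2) c' := by
    rw [← hG, ← lintegral_const_mul _ hR1]
    refine lintegral_congr fun x => ?_
    exact lintegral_half (fun w => F (x, w)) (hFm.comp (by fun_prop)) x
  have hB : ∫⁻ x, ∫⁻ y, F ((1 / 2 : ℝ) • (x + y), y) = 2 ^ N * Gf Ω X u (τ / 2) c' := by
    rw [← hG, lintegral_lintegral_swap hm4.aemeasurable,
      lintegral_lintegral_swap (f := fun x y => F (x, y)) hFm.aemeasurable,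
      ← lintegral_const_mul _ hR2]
    refine lintegral_congr fun y => ?_
    rw [← lintegral_half (fun w => F (w, y)) (hFm.comp (by fun_prop)) y]
    refine lintegral_congr fun x => ?_
    rw [add_comm]
  calc Gf Ω X u τ c ≤ ∫⁻ x, ∫⁻ y, (2 * F (x, (1 / 2 : ℝ) • (x + y)) +
        2 * F ((1 / 2 : ℝ) • (x + y), y)) :=
        lintegral_mono fun x => lintegral_mono fun y => hpt x y
    _ = ∫⁻ x, (2 * (∫⁻ y, F (x, (1 / 2 : ℝ) • (x + y))) +
        2 * ∫⁻ y, F ((1 / 2 : ℝ) • (x + y), y)) := by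
        refine lintegral_congr fun x => ?_
        have h3 : Measurable fun y => F (x, (1 / 2 : ℝ) • (x + y)) :=
          hm3.comp (measurable_const.prodMk measurable_id)
        have h4 : Measurable fun y => F ((1 / 2 : ℝ) • (x + y), y) :=
          hm4.comp (measurable_const.prodMk measurable_id)
        rw [lintegral_add_left (h3.const_mul 2), lintegral_const_mul _ h3,
          lintegral_const_mul _ h4]
    _ = 2 * (2 ^ N * Gf Ω X u (τ / 2) c') + 2 * (2 ^ N * Gf Ω X u (τ / 2) c') := by
        rw [lintegral_add_left (hR3.const_mul 2), lintegral_const_mul _ hR3,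
          lintegral_const_mul _ hR4, hA, hB]
    _ = _ := by ring

theorem Gf_iter {N : ℕ} {Ω : Set (Euc N)} (hΩ : IsOpen Ω) {X : Euc N → Euc N}
    (hX : Continuous X) {M L c0 t0 : ℝ} (hL0 : 0 ≤ L) (hMc : 0 ≤ M + c0)
    (hM : ∀ x, ‖X x‖ ≤ M) (hL : ∀ x y, ‖X x - X y‖ ≤ L * ‖x - y‖)
    (hball : ∀ t : ℝ, 0 < t → t ≤ t0 → ∀ x ∈ closure Ω, Metric.ball (x + t • X x) (c0 * t) ⊆ Ω)
    {u : Euc N → ℝ} (hu : Measurable u) {τ c : ℝ} (hτ : 0 < τ) (hτ0 : τ ≤ t0)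
    (hc : c + L * (M + c0) * τ ≤ c0) (k : ℕ) :
    Gf Ω X u τ c ≤ (2 ^ (N + 2)) ^ k *
      Gf Ω X u (τ / 2 ^ k) (c + L * (M + c0) * τ * (1 - 1 / 2 ^ k)) := by
  have ha : 0 ≤ L * (M + c0) * τ := by positivity
  induction k with
  | zero => simp
  | succ k ih =>
    refine ih.trans ?_
    rw [pow_succ ((2 : ℝ≥0∞) ^ (N + 2)) k, mul_assoc (((2 : ℝ≥0∞) ^ (N + 2)) ^ k)]
    refine mul_le_mul_right (α := ℝ≥0∞) ?_ _
    have h2k : (1 : ℝ) ≤ 2 ^ k := one_le_pow₀ (by norm_num)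
    refine (Gf_half hΩ hX hL0 hM hL hball hu (τ := τ / 2 ^ k) (by positivity) ?_ ?_).trans_eq ?_
    · exact (div_le_self hτ.le h2k).trans hτ0
    · have : 0 ≤ (1 : ℝ) / 2 ^ k := by positivity
      nlinarith
    · congr 2
      · rw [pow_succ, div_div]
      · rw [pow_succ]; field_simp; ring

theorem Gf_le_near {N : ℕ} {Ω : Set (Euc N)} {X : Euc N → Euc N}
    {M c0 t0 : ℝ} (hM : ∀ x, ‖X x‖ ≤ M)
    (hball : ∀ t : ℝ, 0 < t → t ≤ t0 → ∀ x ∈ closure Ω, Metric.ball (x + t • X x) (c0 * t) ⊆ Ω)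
    {u : Euc N → ℝ} {τ c : ℝ} (hτ : 0 < τ) (hτ0 : τ ≤ t0) (hc : c ≤ c0) :
    Gf Ω X u τ c ≤ ∫⁻ x, ∫⁻ y, {q : Euc N × Euc N | q ∈ Ω ×ˢ Ω ∧
      ‖q.1 - q.2‖ < (M + c0) * τ}.indicator (Dd u) (x, y) := by
  refine lintegral_mono fun x => lintegral_mono fun y => ?_
  apply indicator_le_indicator_of_subset _ (fun _ => zero_le)
  rintro ⟨x, y⟩ ⟨hx, hn⟩
  simp only at hx hn
  have hn' : ‖y - x - τ • X x‖ < c0 * τ := hn.trans_le (by gcongr)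
  refine ⟨⟨hx, ?_⟩, ?_⟩
  · apply hball τ hτ hτ0 x (subset_closure hx)
    rwa [Metric.mem_ball, dist_eq_norm, ← sub_sub]
  · simp only
    rw [norm_sub_rev]
    calc ‖y - x‖ = ‖(y - x - τ • X x) + τ • X x‖ := by congr 1; abel
      _ ≤ ‖y - x - τ • X x‖ + ‖τ • X x‖ := norm_add_le _ _
      _ < c0 * τ + τ * M := by
        rw [norm_smul, Real.norm_eq_abs, abs_of_pos hτ]
        refine add_lt_add_of_lt_of_le hn' ?_
        gcongr
        exact hM x
      _ = (M + c0) * τ := by ring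

theorem geom_partial (q A : ℝ) (hq : 2 ≤ q) (hA : 0 ≤ A) (m : ℕ) :
    ∑ k ∈ Finset.range m, (if q ^ k < A then q ^ k else 0) ≤ 2 * A := by
  have hs : ∀ m : ℕ, ∑ k ∈ Finset.range (m + 1), q ^ k ≤ 2 * q ^ m := by
    intro m
    induction m with
    | zero => simp
    | succ m ih =>
      rw [Finset.sum_range_succ]
      have : 0 ≤ q ^ m := by positivity
      rw [pow_succ]
      nlinarith
  induction m with
  | zero => simpa using hA
  | succ m ih =>
    by_cases h : q ^ m < A
    · calc _ ≤ ∑ k ∈ Finset.range (m + 1), q ^ k := by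
            refine Finset.sum_le_sum fun k _ => ?_
            split_ifs
            · exact le_rfl
            · positivity
        _ ≤ 2 * q ^ m := hs m
        _ ≤ 2 * A := by linarith
    · rw [Finset.sum_range_succ, if_neg h, add_zero]
      exact ih

theorem kern_pt {N : ℕ} {s R : ℝ} (hs : 1 / 2 ≤ s) (hR : 0 < R) (u : Euc N → ℝ)
    (q : Euc N × Euc N) :
    ∑' k : ℕ, ENNReal.ofReal (((2 : ℝ) ^ ((N : ℝ) + 2 * s)) ^ k) *
      (if ‖q.1 - q.2‖ < R / 2 ^ k then Dd u q else 0) ≤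
      ENNReal.ofReal (2 * R ^ ((N : ℝ) + 2 * s)) *
        ENNReal.ofReal ((u q.1 - u q.2) ^ 2 / kern N s q.1 q.2) := by
  set p := (N : ℝ) + 2 * s with hp
  have hN0 : (0 : ℝ) ≤ N := by positivity
  have hp1 : 1 ≤ p := by rw [hp]; linarith
  by_cases h0 : ‖q.1 - q.2‖ = 0
  · have : q.1 = q.2 := by rwa [norm_eq_zero, sub_eq_zero] at h0
    have : Dd u q = 0 := by simp [Dd, this]
    simp [this]
  have hd : 0 < ‖q.1 - q.2‖ := lt_of_le_of_ne (norm_nonneg _) (Ne.symm h0)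
  set d := ‖q.1 - q.2‖ with hdd
  have hq2 : (2 : ℝ) ≤ 2 ^ p := by
    calc (2 : ℝ) = 2 ^ (1 : ℝ) := by simp
      _ ≤ 2 ^ p := Real.rpow_le_rpow_of_exponent_le (by norm_num) hp1
  have hterm : ∀ k : ℕ, ENNReal.ofReal (((2 : ℝ) ^ p) ^ k) *
      (if d < R / 2 ^ k then Dd u q else 0) =
      ENNReal.ofReal (if ((2 : ℝ) ^ p) ^ k < (R / d) ^ p then ((2 : ℝ) ^ p) ^ k else 0) *
        Dd u q := by
    intro k
    have hiff : d < R / 2 ^ k ↔ ((2 : ℝ) ^ p) ^ k < (R / d) ^ p := by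
      have : ((2 : ℝ) ^ p) ^ k = ((2 : ℝ) ^ k) ^ p := by
        rw [← Real.rpow_natCast, ← Real.rpow_natCast, ← Real.rpow_mul (by norm_num),
          ← Real.rpow_mul (by norm_num), mul_comm]
      rw [this, Real.rpow_lt_rpow_iff (by positivity) (by positivity) (by linarith),
        lt_div_iff₀ (by positivity), lt_div_iff₀ hd, mul_comm]
    by_cases h : d < R / 2 ^ k
    · rw [if_pos h, if_pos (hiff.1 h)]
    · rw [if_neg h, if_neg (fun h' => h (hiff.2 h'))]; simp
  simp_rw [hterm]
  rw [ENNReal.tsum_mul_right]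
  have hsum : ∑' k : ℕ, ENNReal.ofReal
      (if ((2 : ℝ) ^ p) ^ k < (R / d) ^ p then ((2 : ℝ) ^ p) ^ k else 0) ≤
      ENNReal.ofReal (2 * (R / d) ^ p) := by
    rw [ENNReal.tsum_eq_iSup_nat]
    refine iSup_le fun m => ?_
    rw [← ENNReal.ofReal_sum_of_nonneg]
    · exact ENNReal.ofReal_le_ofReal (geom_partial _ _ hq2 (by positivity) m)
    · intro k _
      split_ifs <;> positivity
  refine (mul_le_mul_left hsum _).trans_eq ?_
  rw [Dd, ← ENNReal.ofReal_mul (by positivity), ← ENNReal.ofReal_mul (by positivity), kern,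
    ← hdd, ← hp, Real.div_rpow hR.le hd.le]
  congr 1
  ring

theorem geom_lower (s : ℝ) (hs1 : s < 1) :
    ENNReal.ofReal (1 / (2 * (1 - s))) ≤ ∑' k : ℕ, ENNReal.ofReal (((1 / 4 : ℝ) ^ (1 - s)) ^ k) := by
  have h1 : (0 : ℝ) < 1 - s := by linarith
  set r : ℝ := (1 / 4 : ℝ) ^ (1 - s) with hr
  have hr0 : 0 < r := by positivity
  have hr1 : r < 1 := Real.rpow_lt_one (by norm_num) (by norm_num) h1
  have hge : 1 - r ≤ 2 * (1 - s) := by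
    have : r = Real.exp (Real.log (1 / 4) * (1 - s)) := Real.rpow_def_of_pos (by norm_num) _
    have h2 := Real.add_one_le_exp (Real.log (1 / 4) * (1 - s))
    have h3 : Real.log (1 / 4) = - (2 * Real.log 2) := by
      rw [one_div, Real.log_inv, show (4 : ℝ) = 2 ^ 2 by norm_num, Real.log_pow]; norm_num
    have h4 : Real.log 2 < 1 := by have := Real.log_two_lt_d9; linarith
    rw [← this, h3] at h2
    nlinarith
  rw [← ENNReal.ofReal_tsum_of_nonneg (fun k => by positivity)
    (summable_geometric_of_lt_one hr0.le hr1), tsum_geometric_of_lt_one hr0.le hr1]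
  apply ENNReal.ofReal_le_ofReal
  rw [one_div]
  exact inv_anti₀ (by linarith) hge

theorem Gf_bound {N : ℕ} {Ω : Set (Euc N)} (hΩ : IsOpen Ω) {X : Euc N → Euc N}
    (hX : Continuous X) {M L c0 t0 : ℝ} (hL0 : 0 ≤ L) (hMc : 0 < M + c0)
    (hM : ∀ x, ‖X x‖ ≤ M) (hL : ∀ x y, ‖X x - X y‖ ≤ L * ‖x - y‖)
    (hball : ∀ t : ℝ, 0 < t → t ≤ t0 → ∀ x ∈ closure Ω, Metric.ball (x + t • X x) (c0 * t) ⊆ Ω)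
    {u : Euc N → ℝ} (hu : Measurable u) {τ c s : ℝ} (hτ : 0 < τ) (hτ0 : τ ≤ t0)
    (hc : c + L * (M + c0) * τ ≤ c0) (hs : 1 / 2 ≤ s) (hs1 : s < 1) :
    Gf Ω X u τ c ≤ ENNReal.ofReal (4 * (1 - s) * ((M + c0) * τ) ^ ((N : ℝ) + 2 * s)) *
      semiSqOn N s Ω u := by
  set R := (M + c0) * τ with hR
  have hR0 : 0 < R := by positivity
  set p := (N : ℝ) + 2 * s with hp
  have ha : 0 ≤ L * (M + c0) * τ := by positivity
  have hone : 0 < 1 - s := by linarith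
  let K : ℕ → Euc N × Euc N → ℝ≥0∞ := fun k =>
    {q : Euc N × Euc N | q ∈ Ω ×ˢ Ω ∧ ‖q.1 - q.2‖ < R / 2 ^ k}.indicator (Dd u)
  have hKm : ∀ k, Measurable (K k) := fun k => by
    refine (measurable_Dd hu).indicator ?_
    have h1 : Continuous fun q : Euc N × Euc N => ‖q.1 - q.2‖ := by fun_prop
    exact (hΩ.measurableSet.prod hΩ.measurableSet).inter
      (isOpen_lt h1 continuous_const).measurableSet
  have hstep : ∀ k : ℕ, Gf Ω X u τ c ≤ (2 ^ (N + 2)) ^ k * ∫⁻ q, K k q := by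
    intro k
    have h2k : (1 : ℝ) ≤ 2 ^ k := one_le_pow₀ (by norm_num)
    refine (Gf_iter hΩ hX hL0 hMc.le hM hL hball hu hτ hτ0 hc k).trans ?_
    gcongr
    refine (Gf_le_near hM hball (by positivity) ((div_le_self hτ.le h2k).trans hτ0) ?_).trans ?_
    · have : 0 ≤ (1 : ℝ) / 2 ^ k := by positivity
      nlinarith
    · have : (volume : Measure (Euc N × Euc N)) = volume.prod volume := rfl
      rw [this, lintegral_prod _ (hKm k).aemeasurable]
      simp only [K, hR, mul_div_assoc]
      exact le_rfl
  have hsum : ∑' k : ℕ, ENNReal.ofReal (((1 / 4 : ℝ) ^ (1 - s)) ^ k) * Gf Ω X u τ c ≤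
      ∑' k : ℕ, ENNReal.ofReal (((2 : ℝ) ^ p) ^ k) * ∫⁻ q, K k q := by
    refine ENNReal.tsum_le_tsum fun k => ?_
    refine (mul_le_mul_right (hstep k) _).trans_eq ?_
    rw [← mul_assoc]
    congr 1
    have : ((2 : ℝ≥0∞) ^ (N + 2)) ^ k = ENNReal.ofReal (((2 : ℝ) ^ (N + 2)) ^ k) := by
      rw [ENNReal.ofReal_pow (by positivity), ENNReal.ofReal_pow (by positivity)]; simp
    rw [this, ← ENNReal.ofReal_mul (by positivity), ← mul_pow]
    congr 2
    have h4 : (1 / 4 : ℝ) = (2 : ℝ) ^ (-2 : ℝ) := by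
      rw [Real.rpow_neg (by norm_num)]; norm_num
    rw [h4, ← Real.rpow_mul (by norm_num), ← Real.rpow_natCast, ← Real.rpow_add (by norm_num)]
    congr 1
    push_cast
    rw [hp]; ring
  rw [ENNReal.tsum_mul_right] at hsum
  have hR2 : ∑' k : ℕ, ENNReal.ofReal (((2 : ℝ) ^ p) ^ k) * ∫⁻ q, K k q ≤
      ENNReal.ofReal (2 * R ^ p) * semiSqOn N s Ω u := by
    have : ∀ k : ℕ, ENNReal.ofReal (((2 : ℝ) ^ p) ^ k) * ∫⁻ q, K k q =
        ∫⁻ q, ENNReal.ofReal (((2 : ℝ) ^ p) ^ k) * K k q := fun k =>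
      (lintegral_const_mul _ (hKm k)).symm
    simp_rw [this]
    rw [← lintegral_tsum (fun k => ((hKm k).const_mul _).aemeasurable), semiSqOn,
      ← lintegral_indicator (hΩ.measurableSet.prod hΩ.measurableSet),
      ← lintegral_const_mul' _ _ ENNReal.ofReal_ne_top]
    refine lintegral_mono fun q => ?_
    by_cases hq : q ∈ Ω ×ˢ Ω
    · rw [indicator_of_mem hq]
      refine le_trans (le_of_eq ?_) (kern_pt hs hR0 u q)
      refine tsum_congr fun k => ?_
      congr 1
      by_cases h : ‖q.1 - q.2‖ < R / 2 ^ k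
      · rw [if_pos h]
        exact indicator_of_mem (s := {q : Euc N × Euc N | q ∈ Ω ×ˢ Ω ∧ ‖q.1 - q.2‖ < R / 2 ^ k})
          ⟨hq, h⟩ _
      · rw [if_neg h]
        exact indicator_of_notMem (s := {q : Euc N × Euc N | q ∈ Ω ×ˢ Ω ∧ ‖q.1 - q.2‖ < R / 2 ^ k})
          (fun h' => h h'.2) _
    · simp [K, hq, -mem_prod]
  have hfin : ENNReal.ofReal (1 / (2 * (1 - s))) * Gf Ω X u τ c ≤
      ENNReal.ofReal (2 * R ^ p) * semiSqOn N s Ω u :=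
    ((mul_le_mul_left (geom_lower s hs1) _).trans hsum).trans hR2
  calc Gf Ω X u τ c = ENNReal.ofReal (2 * (1 - s)) *
        (ENNReal.ofReal (1 / (2 * (1 - s))) * Gf Ω X u τ c) := by
        rw [← mul_assoc, ← ENNReal.ofReal_mul (by positivity), mul_one_div_cancel (by positivity)]
        simp
    _ ≤ ENNReal.ofReal (2 * (1 - s)) * (ENNReal.ofReal (2 * R ^ p) * semiSqOn N s Ω u) := by
        gcongr
    _ = _ := by
        rw [← mul_assoc, ← ENNReal.ofReal_mul (by positivity)]
        congr 2
        ring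


end

section

theorem volume_preimage_le {N : ℕ} {Φ : Euc N → Euc N} {K : ℝ≥0}
    (hK : AntilipschitzWith K Φ) (S : Set (Euc N)) :
    volume (Φ ⁻¹' S) ≤ (K : ℝ≥0∞) ^ N * volume S := by
  have hfr : Module.finrank ℝ (Euc N) = N := by simp
  have h1 := hK.hausdorffMeasure_preimage_le (d := (Module.finrank ℝ (Euc N) : ℝ))
    (by positivity) S
  have h2 := Measure.isAddLeftInvariant_eq_smul (volume : Measure (Euc N))
    (Measure.hausdorffMeasure (Module.finrank ℝ (Euc N) : ℝ))
  rw [h2]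
  simp only [Measure.smul_apply]
  have hpw : (K : ℝ≥0∞) ^ ((Module.finrank ℝ (Euc N) : ℕ) : ℝ) = (K : ℝ≥0∞) ^ N := by
    rw [ENNReal.rpow_natCast, hfr]
  rw [hpw] at h1
  calc _ ≤ _ := smul_le_smul_of_nonneg_left h1 zero_le
    _ = _ := by rw [mul_smul_comm]

theorem lintegral_comp_le {N : ℕ} {Φ : Euc N → Euc N} {K : ℝ≥0} (hΦ : Continuous Φ)
    (hK : AntilipschitzWith K Φ) {F : Euc N → ℝ≥0∞} (hF : Measurable F) :
    ∫⁻ x, F (Φ x) ≤ (K : ℝ≥0∞) ^ N * ∫⁻ x, F x := by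
  rw [← lintegral_map hF hΦ.measurable, ← smul_eq_mul, ← lintegral_smul_measure]
  apply lintegral_mono' _ le_rfl
  rw [Measure.le_iff]
  intro S hS
  rw [Measure.map_apply hΦ.measurable hS]
  simpa using volume_preimage_le hK S

theorem antilipschitz_shift {N : ℕ} {X : Euc N → Euc N} {L t : ℝ} (ht : 0 ≤ t)
    (hL : ∀ x y, ‖X x - X y‖ ≤ L * ‖x - y‖) (htL : t * L < 1) :
    AntilipschitzWith (Real.toNNReal (1 / (1 - t * L))) (fun x => x + t • X x) := by
  have hpos : 0 < 1 - t * L := by linarith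
  apply AntilipschitzWith.of_le_mul_dist
  intro x y
  rw [Real.coe_toNNReal _ (by positivity), dist_eq_norm, dist_eq_norm, one_div, inv_mul_eq_div,
    le_div_iff₀ hpos]
  have h1 : ‖x - y‖ ≤ ‖x + t • X x - (y + t • X y)‖ + ‖t • (X x - X y)‖ := by
    calc ‖x - y‖ = ‖(x + t • X x - (y + t • X y)) - t • (X x - X y)‖ := by congr 1; module
      _ ≤ _ := norm_sub_le _ _
  rw [norm_smul, Real.norm_eq_abs, abs_of_nonneg ht] at h1
  have h2 : t * ‖X x - X y‖ ≤ t * (L * ‖x - y‖) := by gcongr; exact hL x y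
  nlinarith

/-- the factor `(1/(1-tL))^N` -/
def Kf (N : ℕ) (L t : ℝ) : ℝ≥0∞ := ((Real.toNNReal (1 / (1 - t * L)) : ℝ≥0) : ℝ≥0∞) ^ N

theorem Kf_tendsto (N : ℕ) (L : ℝ) : Tendsto (fun t => Kf N L t) (𝓝[>] 0) (𝓝 1) := by
  have h1 : Tendsto (fun t : ℝ => 1 / (1 - t * L)) (𝓝 0) (𝓝 1) := by
    have : ContinuousAt (fun t : ℝ => 1 / (1 - t * L)) 0 := by
      apply ContinuousAt.div continuousAt_const (by fun_prop) (by simp)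
    simpa using this.tendsto
  have h2 : Tendsto (fun t : ℝ => ENNReal.ofReal (1 / (1 - t * L)) ^ N) (𝓝 0) (𝓝 (1 ^ N)) := by
    apply ENNReal.Tendsto.pow
    simpa using ENNReal.tendsto_ofReal h1
  rw [one_pow] at h2
  exact h2.mono_left nhdsWithin_le_nhds

theorem volume_closure_le {N : ℕ} {Ω : Set (Euc N)} {X : Euc N → Euc N}
    {L c0 t0 : ℝ} (hc0 : 0 < c0) (ht0 : 0 < t0)
    (hL : ∀ x y, ‖X x - X y‖ ≤ L * ‖x - y‖)
    (hball : ∀ t : ℝ, 0 < t → t ≤ t0 → ∀ x ∈ closure Ω, Metric.ball (x + t • X x) (c0 * t) ⊆ Ω) :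
    volume (closure Ω) ≤ volume Ω := by
  have h1 : Tendsto (fun t => Kf N L t * volume Ω) (𝓝[>] 0) (𝓝 (1 * volume Ω)) :=
    ENNReal.Tendsto.mul_const (Kf_tendsto N L) (Or.inl one_ne_zero)
  rw [one_mul] at h1
  refine ge_of_tendsto h1 ?_
  have hev : ∀ᶠ t : ℝ in 𝓝[>] 0, t * L < 1 := by
    have : Tendsto (fun t : ℝ => t * L) (𝓝[>] 0) (𝓝 (0 * L)) :=
      (Continuous.tendsto (by fun_prop) 0).mono_left nhdsWithin_le_nhds
    rw [zero_mul] at this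
    exact this.eventually (gt_mem_nhds one_pos)
  filter_upwards [hev, Ioc_mem_nhdsGT ht0] with t ht1 ht2
  refine le_trans (measure_mono ?_) (volume_preimage_le (antilipschitz_shift ht2.1.le hL ht1) Ω)
  intro x hx
  exact hball t ht2.1 ht2.2 x hx (Metric.mem_ball_self (by have := ht2.1; positivity))

theorem jensen_sq {α E : Type*} [MeasurableSpace α] {μ : Measure α} [NormedAddCommGroup E]
    [NormedSpace ℝ E] (k : α → ℝ) (hk : ∀ y, 0 ≤ k y) (hkm : Measurable k)
    (hk1 : ∫⁻ y, ENNReal.ofReal (k y) ∂μ ≤ 1) (f : α → E) (hf : AEMeasurable (fun y => ‖f y‖ₑ) μ) :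
    ENNReal.ofReal (‖∫ y, k y • f y ∂μ‖ ^ 2) ≤
      ∫⁻ y, ENNReal.ofReal (k y) * ENNReal.ofReal (‖f y‖ ^ 2) ∂μ := by
  set a : α → ℝ≥0∞ := fun y => ENNReal.ofReal (k y) with ha
  have ham : Measurable a := by fun_prop
  have h1 : ‖∫ y, k y • f y ∂μ‖ₑ ≤ ∫⁻ y, (a y) ^ (1 / 2 : ℝ) * ((a y) ^ (1 / 2 : ℝ) * ‖f y‖ₑ) ∂μ := by
    refine (enorm_integral_le_lintegral_enorm _).trans (le_of_eq (lintegral_congr fun y => ?_))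
    rw [enorm_smul, ← mul_assoc, ← ENNReal.rpow_add_of_nonneg _ _ (by norm_num) (by norm_num)]
    norm_num
    rw [ha, Real.enorm_eq_ofReal (hk y)]
  have h2 := ENNReal.lintegral_mul_le_Lp_mul_Lq μ (Real.HolderConjugate.two_two)
    (f := fun y => (a y) ^ (1 / 2 : ℝ)) (g := fun y => (a y) ^ (1 / 2 : ℝ) * ‖f y‖ₑ)
    (ham.pow_const _).aemeasurable ((ham.pow_const _).aemeasurable.mul hf)
  have h3 := h1.trans h2
  have h4 : ∀ y, (((a y) ^ (1 / 2 : ℝ)) ^ (2 : ℝ)) = a y := fun y => by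
    rw [← ENNReal.rpow_mul]; norm_num
  have h5 : ∀ y, (((a y) ^ (1 / 2 : ℝ) * ‖f y‖ₑ) ^ (2 : ℝ)) = a y * ENNReal.ofReal (‖f y‖ ^ 2) := by
    intro y
    rw [ENNReal.mul_rpow_of_nonneg _ _ (by norm_num), h4, ENNReal.ofReal_pow (norm_nonneg _),
      ofReal_norm]
    norm_num
  simp_rw [h4, h5] at h3
  have h6 : (∫⁻ y, a y ∂μ) ^ (1 / 2 : ℝ) ≤ 1 := by
    calc _ ≤ (1 : ℝ≥0∞) ^ (1 / 2 : ℝ) := ENNReal.rpow_le_rpow hk1 (by norm_num)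
      _ = 1 := by simp
  have h7 : ‖∫ y, k y • f y ∂μ‖ₑ ≤
      (∫⁻ y, a y * ENNReal.ofReal (‖f y‖ ^ 2) ∂μ) ^ (1 / 2 : ℝ) := by
    refine h3.trans ?_
    calc _ ≤ 1 * (∫⁻ y, a y * ENNReal.ofReal (‖f y‖ ^ 2) ∂μ) ^ (1 / 2 : ℝ) := by gcongr
      _ = _ := one_mul _
  rw [ENNReal.ofReal_pow (norm_nonneg _), ofReal_norm]
  calc ‖∫ y, k y • f y ∂μ‖ₑ ^ 2
      ≤ ((∫⁻ y, a y * ENNReal.ofReal (‖f y‖ ^ 2) ∂μ) ^ (1 / 2 : ℝ)) ^ 2 := by gcongr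
    _ = _ := by
      rw [← ENNReal.rpow_natCast, ← ENNReal.rpow_mul,
        show (1 / 2 : ℝ) * ((2 : ℕ) : ℝ) = 1 by norm_num, ENNReal.rpow_one]


end

section

theorem smooth_compact_bounds {N : ℕ} {F : Type*} [NormedAddCommGroup F] [NormedSpace ℝ F]
    {f : Euc N → F} (hf : ContDiff ℝ (⊤ : ℕ∞) f) (hc : HasCompactSupport f) :
    ∃ B : ℝ, 0 < B ∧ (∀ x, ‖f x‖ ≤ B) ∧ (∀ x, ‖fderiv ℝ f x‖ ≤ B) ∧
      (∀ x y, ‖fderiv ℝ f x - fderiv ℝ f y‖ ≤ B * ‖x - y‖) ∧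
      (∀ x y, ‖f x - f y‖ ≤ B * ‖x - y‖) := by
  obtain ⟨B1, hB1⟩ := hc.exists_bound_of_continuous hf.continuous
  have hf' : ContDiff ℝ 1 (fderiv ℝ f) := hf.fderiv_right (m := 1) (by
    exact WithTop.coe_le_coe.2 (le_top : ((1 + 1 : ℕ∞)) ≤ ⊤))
  obtain ⟨B2, hB2⟩ := (hc.fderiv ℝ).exists_bound_of_continuous hf'.continuous
  obtain ⟨K, hK⟩ := ContDiff.lipschitzWith_of_hasCompactSupport (hc.fderiv ℝ) hf' one_ne_zero
  obtain ⟨K2, hK2⟩ := ContDiff.lipschitzWith_of_hasCompactSupport hc hf (by simp)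
  have e1 := abs_nonneg B1
  have e2 := abs_nonneg B2
  have e3 := K.2
  have e4 := K2.2
  have f1 := le_abs_self B1
  have f2 := le_abs_self B2
  simp only [NNReal.val_eq_coe] at *
  refine ⟨|B1| + |B2| + K + K2 + 1, by positivity, fun x => ?_, fun x => ?_, fun x y => ?_,
    fun x y => ?_⟩
  · have := hB1 x; linarith
  · have := hB2 x; linarith
  · have := hK.dist_le_mul x y
    rw [dist_eq_norm, dist_eq_norm] at this
    refine this.trans (mul_le_mul_of_nonneg_right ?_ (norm_nonneg _))
    linarith
  · have := hK2.dist_le_mul x y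
    rw [dist_eq_norm, dist_eq_norm] at this
    refine this.trans (mul_le_mul_of_nonneg_right ?_ (norm_nonneg _))
    linarith

/-- `w` is `C^{1,1}` with derivative `w'`, and all bounds are `M`. -/
structure C2B (N : ℕ) (w : Euc N → ℝ) (w' : Euc N → (Euc N →L[ℝ] ℝ)) (M : ℝ) : Prop where
  nonneg : 0 ≤ M
  hasF : ∀ x, HasFDerivAt w (w' x) x
  bd : ∀ x, |w x| ≤ M
  bd' : ∀ x, ‖w' x‖ ≤ M
  lip : ∀ x y, ‖w' x - w' y‖ ≤ M * ‖x - y‖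

theorem C2B.cont' {N : ℕ} {w : Euc N → ℝ} {w' : Euc N → (Euc N →L[ℝ] ℝ)} {M : ℝ}
    (h : C2B N w w' M) : Continuous w' := by
  have : LipschitzWith (Real.toNNReal M) w' := by
    apply LipschitzWith.of_dist_le_mul
    intro x y
    rw [dist_eq_norm, dist_eq_norm, Real.coe_toNNReal _ h.nonneg]
    exact h.lip x y
  exact this.continuous

theorem C2B.cont {N : ℕ} {w : Euc N → ℝ} {w' : Euc N → (Euc N →L[ℝ] ℝ)} {M : ℝ}
    (h : C2B N w w' M) : Continuous w :=
  continuous_iff_continuousAt.2 fun x => (h.hasF x).continuousAt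

theorem C2B.taylor {N : ℕ} {w : Euc N → ℝ} {w' : Euc N → (Euc N →L[ℝ] ℝ)} {M : ℝ}
    (h : C2B N w w' M) (x y : Euc N) : |w y - w x - w' x (y - x)| ≤ M * ‖y - x‖ ^ 2 := by
  have := (convex_segment x y).norm_image_sub_le_of_norm_hasFDerivWithin_le' (f := w) (f' := w')
    (φ := w' x) (C := M * ‖y - x‖) (fun z _ => (h.hasF z).hasFDerivWithinAt)
    (fun z hz => ?_) (left_mem_segment ℝ x y) (right_mem_segment ℝ x y)
  · rw [Real.norm_eq_abs] at this
    calc _ ≤ _ := this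
      _ = _ := by ring
  · refine (h.lip z x).trans (mul_le_mul_of_nonneg_left ?_ h.nonneg)
    exact norm_sub_le_of_mem_segment hz

theorem C2B.sub_const {N : ℕ} {w : Euc N → ℝ} {w' : Euc N → (Euc N →L[ℝ] ℝ)} {M : ℝ}
    (h : C2B N w w' M) {m : ℝ} (hm : |m| ≤ M) : C2B N (fun x => w x - m) w' (2 * M) where
  nonneg := by linarith [h.nonneg]
  hasF := fun x => (h.hasF x).sub_const m
  bd := fun x => (abs_sub _ _).trans (by linarith [h.bd x])
  bd' := fun x => (h.bd' x).trans (by linarith [h.nonneg])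
  lip := fun x y => (h.lip x y).trans
    (mul_le_mul_of_nonneg_right (by linarith [h.nonneg]) (norm_nonneg _))

theorem C2B.comp_shift {N : ℕ} {w : Euc N → ℝ} {w' : Euc N → (Euc N →L[ℝ] ℝ)} {M : ℝ}
    (h : C2B N w w' M) {X : Euc N → Euc N} (hX : Differentiable ℝ X) {L : ℝ} (hL : 0 ≤ L)
    (h1 : ∀ x, ‖fderiv ℝ X x‖ ≤ L) (h2 : ∀ x y, ‖fderiv ℝ X x - fderiv ℝ X y‖ ≤ L * ‖x - y‖)
    (h3 : ∀ x y, ‖X x - X y‖ ≤ L * ‖x - y‖) {t : ℝ} (ht : 0 ≤ t) (ht1 : t ≤ 1) :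
    C2B N (fun x => w (x + t • X x))
      (fun x => (w' (x + t • X x)).comp (ContinuousLinearMap.id ℝ _ + t • fderiv ℝ X x))
      (M * ((1 + L) ^ 2 + L)) where
  nonneg := by have := h.nonneg; positivity
  hasF := fun x => (h.hasF _).comp x ((hasFDerivAt_id x).add ((hX x).hasFDerivAt.const_smul t))
  bd := fun x => (h.bd _).trans (by have := h.nonneg; nlinarith [mul_nonneg this hL])
  bd' := fun x => by
    have hM := h.nonneg
    have hid : ‖ContinuousLinearMap.id ℝ (Euc N) + t • fderiv ℝ X x‖ ≤ 1 + L := by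
      refine (norm_add_le _ _).trans (add_le_add ContinuousLinearMap.norm_id_le ?_)
      rw [norm_smul, Real.norm_eq_abs, abs_of_nonneg ht]
      nlinarith [h1 x, norm_nonneg (fderiv ℝ X x)]
    refine (ContinuousLinearMap.opNorm_comp_le _ _).trans ?_
    refine (mul_le_mul (h.bd' _) hid (norm_nonneg _) hM).trans ?_
    apply mul_le_mul_of_nonneg_left _ hM
    nlinarith
  lip := fun x y => by
    have hM := h.nonneg
    have hid : ‖ContinuousLinearMap.id ℝ (Euc N) + t • fderiv ℝ X x‖ ≤ 1 + L := by
      refine (norm_add_le _ _).trans (add_le_add ContinuousLinearMap.norm_id_le ?_)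
      rw [norm_smul, Real.norm_eq_abs, abs_of_nonneg ht]
      nlinarith [h1 x, norm_nonneg (fderiv ℝ X x)]
    have e : (w' (x + t • X x)).comp (ContinuousLinearMap.id ℝ _ + t • fderiv ℝ X x) -
        (w' (y + t • X y)).comp (ContinuousLinearMap.id ℝ _ + t • fderiv ℝ X y) =
        (w' (x + t • X x) - w' (y + t • X y)).comp
          (ContinuousLinearMap.id ℝ _ + t • fderiv ℝ X x) +
        (w' (y + t • X y)).comp (t • (fderiv ℝ X x - fderiv ℝ X y)) := by
      ext z; simp; ring
    rw [e]
    refine (norm_add_le _ _).trans ?_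
    have a1 := (ContinuousLinearMap.opNorm_comp_le (w' (x + t • X x) - w' (y + t • X y))
      (ContinuousLinearMap.id ℝ _ + t • fderiv ℝ X x))
    have a2 := (ContinuousLinearMap.opNorm_comp_le (w' (y + t • X y))
      (t • (fderiv ℝ X x - fderiv ℝ X y)))
    have a3 : ‖x + t • X x - (y + t • X y)‖ ≤ (1 + L) * ‖x - y‖ := by
      have : x + t • X x - (y + t • X y) = (x - y) + t • (X x - X y) := by module
      rw [this]
      refine (norm_add_le _ _).trans ?_
      rw [norm_smul, Real.norm_eq_abs, abs_of_nonneg ht]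
      nlinarith [h3 x y, norm_nonneg (X x - X y)]
    have a4 : ‖t • (fderiv ℝ X x - fderiv ℝ X y)‖ ≤ L * ‖x - y‖ := by
      rw [norm_smul, Real.norm_eq_abs, abs_of_nonneg ht]
      nlinarith [h2 x y, norm_nonneg (fderiv ℝ X x - fderiv ℝ X y)]
    have a5 : ‖w' (x + t • X x) - w' (y + t • X y)‖ ≤ M * ((1 + L) * ‖x - y‖) :=
      (h.lip _ _).trans (mul_le_mul_of_nonneg_left a3 hM)
    have a6 := mul_le_mul a5 hid (norm_nonneg _) (by positivity)
    have a7 := mul_le_mul (h.bd' (y + t • X y)) a4 (norm_nonneg _) (by positivity)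
    calc _ ≤ M * ((1 + L) * ‖x - y‖) * (1 + L) + M * (L * ‖x - y‖) := by linarith
      _ = _ := by ring

/-- mollifier at scale `δ` -/
structure Moll (N : ℕ) (δ : ℝ) (ρ : Euc N → ℝ) (B : ℝ) : Prop where
  smooth : ContDiff ℝ (⊤ : ℕ∞) ρ
  nonneg : ∀ z, 0 ≤ ρ z
  supp : Function.support ρ = Metric.ball 0 δ
  tsupp : tsupport ρ = Metric.closedBall 0 δ
  int1 : ∫⁻ z, ENNReal.ofReal (ρ z) = 1
  Bpos : 0 < B
  bd : ∀ x, ‖ρ x‖ ≤ B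
  bd' : ∀ x, ‖fderiv ℝ ρ x‖ ≤ B
  lip' : ∀ x y, ‖fderiv ℝ ρ x - fderiv ℝ ρ y‖ ≤ B * ‖x - y‖
  sup : ∀ z, ρ z ≤ 1 / (volume (Metric.closedBall (0 : Euc N) (δ / 2))).toReal

theorem exists_moll (N : ℕ) {δ : ℝ} (hδ : 0 < δ) : ∃ ρ B, Moll N δ ρ B := by
  let b : ContDiffBump (0 : Euc N) := ⟨δ / 2, δ, by positivity, by linarith⟩
  have hs : ContDiff ℝ (⊤ : ℕ∞) (b.normed volume) := b.contDiff_normed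
  have hc : HasCompactSupport (b.normed volume) := b.hasCompactSupport_normed
  obtain ⟨B, hB, h1, h2, h3, h4⟩ := smooth_compact_bounds hs hc
  refine ⟨b.normed volume, B, hs, b.nonneg_normed, b.support_normed_eq, b.tsupport_normed_eq,
    ?_, hB, h1, h2, h3, fun z => ?_⟩
  · rw [← ofReal_integral_eq_lintegral_ofReal b.integrable_normed
      (Eventually.of_forall b.nonneg_normed), b.integral_normed, ENNReal.ofReal_one]
  · have := b.normed_le_div_measure_closedBall_rIn volume z
    exact this

/-- mollification of `u` restricted to `Ω` -/
def mol (N : ℕ) (Ω : Set (Euc N)) (ρ u : Euc N → ℝ) (x : Euc N) : ℝ :=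
  ∫ y in Ω, ρ (x - y) * u y

def mol' (N : ℕ) (Ω : Set (Euc N)) (ρ u : Euc N → ℝ) (x : Euc N) : Euc N →L[ℝ] ℝ :=
  ∫ y in Ω, u y • fderiv ℝ ρ (x - y)

theorem mol_C2B {N : ℕ} {Ω : Set (Euc N)} {ρ u : Euc N → ℝ} {δ B : ℝ} (hρ : Moll N δ ρ B)
    (hu : IntegrableOn u Ω) :
    C2B N (mol N Ω ρ u) (mol' N Ω ρ u) (B * ∫ y in Ω, |u y|) := by
  have hBp := hρ.Bpos
  have hf'c : Continuous (fderiv ℝ ρ) := hρ.smooth.continuous_fderiv (by simp)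
  have hρc := hρ.smooth.continuous
  have hm1 : ∀ x, AEStronglyMeasurable (fun y => ρ (x - y) * u y) (volume.restrict Ω) := fun x =>
    (Continuous.aestronglyMeasurable (by fun_prop)).mul hu.aestronglyMeasurable
  have hm2 : ∀ x, AEStronglyMeasurable (fun y => u y • fderiv ℝ ρ (x - y)) (volume.restrict Ω) :=
    fun x => hu.aestronglyMeasurable.smul (Continuous.aestronglyMeasurable (by fun_prop))
  have hi : Integrable (fun y => B * |u y|) (volume.restrict Ω) := hu.abs.const_mul B
  have hint1 : ∀ x, Integrable (fun y => ρ (x - y) * u y) (volume.restrict Ω) := fun x =>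
    hi.mono' (hm1 x) (Eventually.of_forall fun y => by
      rw [norm_mul]; exact mul_le_mul_of_nonneg_right (hρ.bd _) (norm_nonneg _))
  have hint2 : ∀ x, Integrable (fun y => u y • fderiv ℝ ρ (x - y)) (volume.restrict Ω) := fun x =>
    hi.mono' (hm2 x) (Eventually.of_forall fun y => by
      rw [norm_smul, mul_comm]; exact mul_le_mul_of_nonneg_right (hρ.bd' _) (norm_nonneg _))
  refine ⟨?_, fun x => ?_, fun x => ?_, fun x => ?_, fun x y => ?_⟩
  · exact mul_nonneg hBp.le (integral_nonneg fun _ => abs_nonneg _)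
  · refine hasFDerivAt_integral_of_dominated_of_fderiv_le (bound := fun y => B * |u y|)
      (F := fun x y => ρ (x - y) * u y) (F' := fun x y => u y • fderiv ℝ ρ (x - y))
      (s := univ) Filter.univ_mem (Eventually.of_forall hm1) (hint1 x) (hm2 x) ?_ hi ?_
    · refine Eventually.of_forall fun y z _ => ?_
      rw [norm_smul, mul_comm]; exact mul_le_mul_of_nonneg_right (hρ.bd' _) (norm_nonneg _)
    · refine Eventually.of_forall fun y z _ => ?_
      have h1 : HasFDerivAt ρ (fderiv ℝ ρ (z - y)) (z - y) :=
        (hρ.smooth.differentiable (by simp) _).hasFDerivAt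
      have h2 : HasFDerivAt (fun z => ρ (z - y)) (fderiv ℝ ρ (z - y)) z := by
        have h3 := h1.comp z ((hasFDerivAt_id z).sub_const y)
        rw [ContinuousLinearMap.comp_id] at h3
        exact h3
      exact h2.mul_const (u y)
  · rw [← Real.norm_eq_abs, ← integral_const_mul]
    refine norm_integral_le_of_norm_le hi (Eventually.of_forall fun y => ?_)
    rw [norm_mul]; exact mul_le_mul_of_nonneg_right (hρ.bd _) (norm_nonneg _)
  · rw [← integral_const_mul]
    refine norm_integral_le_of_norm_le hi (Eventually.of_forall fun y => ?_)
    rw [norm_smul, mul_comm]; exact mul_le_mul_of_nonneg_right (hρ.bd' _) (norm_nonneg _)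
  · unfold mol'
    rw [← integral_sub (hint2 x) (hint2 y), ← integral_const_mul, ← integral_mul_const]
    refine norm_integral_le_of_norm_le (hi.mul_const _) (Eventually.of_forall fun z => ?_)
    rw [← smul_sub, norm_smul, Real.norm_eq_abs]
    have := hρ.lip' (x - z) (y - z)
    rw [sub_sub_sub_cancel_right] at this
    nlinarith [abs_nonneg (u z)]

theorem l1_le_l2 {N : ℕ} {Ω : Set (Euc N)} (hΩ : IsBounded Ω) {u : Euc N → ℝ}
    (hu : Measurable u) (h2 : l2sq N Ω u < ⊤) :
    IntegrableOn u Ω ∧ MemLp u 2 (volume.restrict Ω) ∧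
      ENNReal.ofReal ((∫ y in Ω, |u y|) ^ 2) ≤ volume Ω * l2sq N Ω u := by
  have hfin : volume Ω < ⊤ := hΩ.measure_lt_top
  have : IsFiniteMeasure (volume.restrict Ω) := ⟨by simpa using hfin⟩
  have hM : MemLp u 2 (volume.restrict Ω) := by
    refine ⟨hu.aestronglyMeasurable, ?_⟩
    rw [eLpNorm_lt_top_iff_lintegral_rpow_enorm_lt_top (by norm_num) (by norm_num)]
    refine lt_of_eq_of_lt (lintegral_congr fun x => ?_) h2
    rw [← sq_abs, ENNReal.ofReal_pow (abs_nonneg _), Real.enorm_eq_ofReal_abs]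
    norm_num
  have hi : IntegrableOn u Ω := hM.integrable (by norm_num)
  refine ⟨hi, hM, ?_⟩
  have h2 := ENNReal.lintegral_mul_le_Lp_mul_Lq (volume.restrict Ω) (Real.HolderConjugate.two_two)
    (f := fun y => 1) (g := fun y => ‖u y‖ₑ) aemeasurable_const hu.enorm.aemeasurable
  have h3 : ENNReal.ofReal (∫ y in Ω, |u y|) = ∫⁻ y in Ω, ‖u y‖ₑ := by
    rw [ofReal_integral_eq_lintegral_ofReal hi.abs (Eventually.of_forall fun _ => abs_nonneg _)]
    simp_rw [Real.enorm_eq_ofReal_abs]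
  rw [ENNReal.ofReal_pow (integral_nonneg fun _ => abs_nonneg _), h3]
  simp only [Pi.mul_apply, one_mul] at h2
  have h4 : ∫⁻ y in Ω, ‖u y‖ₑ ^ (2 : ℝ) = l2sq N Ω u := by
    refine lintegral_congr fun x => ?_
    rw [← sq_abs, ENNReal.ofReal_pow (abs_nonneg _), Real.enorm_eq_ofReal_abs]
    norm_num
  rw [h4] at h2
  calc (∫⁻ y in Ω, ‖u y‖ₑ) ^ 2 ≤ _ := pow_le_pow_left' h2 2
    _ = _ := by
      rw [mul_pow, ← ENNReal.rpow_natCast, ← ENNReal.rpow_mul, ← ENNReal.rpow_natCast,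
        ← ENNReal.rpow_mul, show (1 / 2 : ℝ) * ((2 : ℕ) : ℝ) = 1 by norm_num, ENNReal.rpow_one,
        ENNReal.rpow_one]
      simp


end

section

theorem J_inv {N : ℕ} {φ : ℝ → ℝ≥0∞} (hφ : Measurable φ) {a b : Euc N} (hab : ‖a‖ = ‖b‖) :
    ∫⁻ h : Euc N, ENNReal.ofReal ((inner ℝ a h : ℝ) ^ 2) * φ ‖h‖ =
      ∫⁻ h : Euc N, ENNReal.ofReal ((inner ℝ b h : ℝ) ^ 2) * φ ‖h‖ := by
  let R := (ℝ ∙ (a - b))ᗮ.reflection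
  have hR : R a = b := Submodule.reflection_sub hab
  have hm : Measurable (fun h : Euc N => ENNReal.ofReal ((inner ℝ b h : ℝ) ^ 2) * φ ‖h‖) := by
    apply Measurable.mul
    · exact ((by fun_prop : Continuous fun h : Euc N => (inner ℝ b h : ℝ) ^ 2).measurable).ennreal_ofReal
    · exact hφ.comp measurable_norm
  rw [← R.measurePreserving.lintegral_comp hm]
  refine lintegral_congr fun h => ?_
  rw [← hR, LinearIsometryEquiv.inner_map_map, LinearIsometryEquiv.norm_map]

theorem J_eq {N : ℕ} {φ : ℝ → ℝ≥0∞} (hφ : Measurable φ) (a : Euc N) :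
    (N : ℝ≥0∞) * ∫⁻ h : Euc N, ENNReal.ofReal ((inner ℝ a h : ℝ) ^ 2) * φ ‖h‖ =
      ENNReal.ofReal (‖a‖ ^ 2) * ∫⁻ h : Euc N, ENNReal.ofReal (‖h‖ ^ 2) * φ ‖h‖ := by
  have hm : ∀ b : Euc N,
      Measurable (fun h : Euc N => ENNReal.ofReal ((inner ℝ b h : ℝ) ^ 2) * φ ‖h‖) := by
    intro b
    apply Measurable.mul
    · exact ((by fun_prop : Continuous fun h : Euc N => (inner ℝ b h : ℝ) ^ 2).measurable).ennreal_ofReal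
    · exact hφ.comp measurable_norm
  have h1 : ∀ i : Fin N, ∫⁻ h : Euc N, ENNReal.ofReal ((inner ℝ a h : ℝ) ^ 2) * φ ‖h‖ =
      ∫⁻ h : Euc N, ENNReal.ofReal ((inner ℝ (‖a‖ • EuclideanSpace.single i (1 : ℝ)) h : ℝ) ^ 2)
        * φ ‖h‖ := by
    intro i
    apply J_inv hφ
    rw [norm_smul]; simp
  have h2 : (N : ℝ≥0∞) * ∫⁻ h : Euc N, ENNReal.ofReal ((inner ℝ a h : ℝ) ^ 2) * φ ‖h‖ =
      ∑ i : Fin N, ∫⁻ h : Euc N, ENNReal.ofReal ((inner ℝ a h : ℝ) ^ 2) * φ ‖h‖ := by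
    simp
  rw [h2, Finset.sum_congr rfl (fun i _ => h1 i), ← lintegral_finsetSum _ (fun i _ => hm _)]
  have hm2 : Measurable (fun h : Euc N => ENNReal.ofReal (‖h‖ ^ 2) * φ ‖h‖) := by
    apply Measurable.mul (by fun_prop) (hφ.comp measurable_norm)
  rw [← lintegral_const_mul _ hm2]
  refine lintegral_congr fun h => ?_
  rw [← Finset.sum_mul, ← mul_assoc]
  congr 1
  rw [← ENNReal.ofReal_sum_of_nonneg (fun _ _ => sq_nonneg _), ← ENNReal.ofReal_mul (sq_nonneg _),
    EuclideanSpace.norm_sq_eq h, Finset.mul_sum]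
  congr 1
  refine Finset.sum_congr rfl fun i _ => ?_
  rw [inner_smul_left, EuclideanSpace.inner_single_left]
  simp [mul_pow]

/-- truncated kernel weight -/
def wt (N : ℕ) (s δ : ℝ) (r : ℝ) : ℝ≥0∞ :=
  (Iio δ).indicator (fun r => ENNReal.ofReal (1 / r ^ ((N : ℝ) + 2 * s))) r

theorem measurable_wt (N : ℕ) (s δ : ℝ) : Measurable (wt N s δ) := by
  unfold wt
  apply Measurable.indicator _ measurableSet_Iio
  fun_prop

/-- volume of the unit ball -/
def om (N : ℕ) : ℝ := (volume (Metric.ball (0 : Euc N) 1)).toReal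

theorem om_pos (N : ℕ) : 0 < om N :=
  ENNReal.toReal_pos (Metric.measure_ball_pos _ _ one_pos).ne' measure_ball_lt_top.ne

theorem radial_int {N : ℕ} (hN : 2 ≤ N) {s δ : ℝ} (hs1 : s < 1) (hδ : 0 < δ) :
    ∫⁻ h : Euc N, ENNReal.ofReal (‖h‖ ^ 2) * wt N s δ ‖h‖ =
      ENNReal.ofReal (N * om N * (δ ^ (2 - 2 * s) / (2 - 2 * s))) := by
  have hNn : Nontrivial (Euc N) := by
    have : Nonempty (Fin N) := ⟨⟨0, by omega⟩⟩
    infer_instance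
  have hfr : Module.finrank ℝ (Euc N) = N := by simp
  let f : ℝ → ℝ := (Iio δ).indicator (fun r => r ^ 2 * (1 / r ^ ((N : ℝ) + 2 * s)))
  have hfn : ∀ h : Euc N, 0 ≤ f ‖h‖ := by
    intro h
    apply indicator_apply_nonneg
    intro _
    positivity
  have hN1 : ((N - 1 : ℕ) : ℝ) = N - 1 := by
    rw [Nat.cast_sub (by omega)]; simp
  have hyf : ∀ y ∈ Ioo (0 : ℝ) δ, y ^ (N - 1) • f y = y ^ (1 - 2 * s) := by
    intro y hy
    simp only [f, indicator_of_mem (show y ∈ Iio δ from hy.2), smul_eq_mul]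
    rw [← Real.rpow_natCast, ← Real.rpow_natCast, one_div, ← Real.rpow_neg hy.1.le,
      ← Real.rpow_add hy.1, ← Real.rpow_add hy.1, hN1]
    congr 1
    push_cast; ring
  have e0 : (0 : ℝ) < 2 - 2 * s := by linarith
  have hii : IntervalIntegrable (fun y : ℝ => y ^ (1 - 2 * s)) volume 0 δ :=
    intervalIntegral.intervalIntegrable_rpow' (by linarith)
  have hsupp : Function.support (fun h : Euc N => f ‖h‖) ⊆ Metric.ball 0 δ := by
    intro h hh
    by_contra hc
    apply hh
    simp only [f]
    apply indicator_of_notMem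
    simpa using hc
  have hintg : Integrable (fun h : Euc N => f ‖h‖) := by
    rw [← integrableOn_iff_integrable_of_support_subset hsupp]
    rw [integrableOn_fun_norm_addHaar, hfr]
    rw [intervalIntegrable_iff_integrableOn_Ioo_of_le hδ.le] at hii
    exact hii.congr_fun (fun y hy => (hyf y hy).symm) measurableSet_Ioo
  have h1 : ∫⁻ h : Euc N, ENNReal.ofReal (‖h‖ ^ 2) * wt N s δ ‖h‖ =
      ∫⁻ h : Euc N, ENNReal.ofReal (f ‖h‖) := by
    refine lintegral_congr fun h => ?_
    simp only [wt, f]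
    by_cases hh : ‖h‖ ∈ Iio δ
    · rw [indicator_of_mem hh, indicator_of_mem hh, ENNReal.ofReal_mul (by positivity)]
    · rw [indicator_of_notMem hh, indicator_of_notMem hh]; simp
  rw [h1, ← ofReal_integral_eq_lintegral_ofReal hintg (Eventually.of_forall hfn),
    integral_fun_norm_addHaar, hfr]
  congr 1
  rw [nsmul_eq_mul, smul_eq_mul, ← mul_assoc]
  congr 1
  have h2 : ∫ y in Ioi (0 : ℝ), y ^ (N - 1) • f y = ∫ y in Ioo (0 : ℝ) δ, y ^ (1 - 2 * s) := by
    rw [← setIntegral_congr_fun measurableSet_Ioo hyf]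
    apply setIntegral_eq_of_subset_of_forall_sdiff_eq_zero measurableSet_Ioi Ioo_subset_Ioi_self
    intro y hy
    have : y ∉ Iio δ := fun h => hy.2 ⟨hy.1, h⟩
    simp only [f]
    rw [indicator_of_notMem this, smul_zero]
  rw [h2, ← integral_Ioc_eq_integral_Ioo, ← intervalIntegral.integral_of_le hδ.le,
    integral_rpow (Or.inl (by linarith)), show 1 - 2 * s + 1 = 2 - 2 * s by ring,
    Real.zero_rpow e0.ne', sub_zero]

/-- the quadratic constant `κ`, near part. -/
def nearC (N : ℕ) (s δ : ℝ) : ℝ := om N * (δ ^ (2 - 2 * s) / (2 - 2 * s))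

theorem near_int {N : ℕ} (hN : 2 ≤ N) {s δ : ℝ} (hs1 : s < 1) (hδ : 0 < δ)
    (l : Euc N →L[ℝ] ℝ) :
    ∫⁻ h : Euc N, ENNReal.ofReal ((l h) ^ 2) * wt N s δ ‖h‖ =
      ENNReal.ofReal (nearC N s δ) * ENNReal.ofReal (‖l‖ ^ 2) := by
  let a := (InnerProductSpace.toDual ℝ (Euc N)).symm l
  have ha : ∀ h, l h = inner ℝ a h := fun h => by simp [a]
  have hna : ‖l‖ = ‖a‖ := by simp [a]
  have h1 := J_eq (measurable_wt N s δ) a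
  rw [radial_int hN hs1 hδ] at h1
  simp_rw [ha, hna]
  have hN0 : (N : ℝ≥0∞) ≠ 0 := by simp; omega
  have h2 : ENNReal.ofReal (N * om N * (δ ^ (2 - 2 * s) / (2 - 2 * s))) =
      N * ENNReal.ofReal (nearC N s δ) := by
    rw [mul_assoc, ENNReal.ofReal_mul (by positivity)]
    simp [nearC]
  rw [h2] at h1
  have h3 : (N : ℝ≥0∞) * ∫⁻ h : Euc N, ENNReal.ofReal ((inner ℝ a h : ℝ) ^ 2) * wt N s δ ‖h‖ =
      N * (ENNReal.ofReal (nearC N s δ) * ENNReal.ofReal (‖a‖ ^ 2)) := by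
    rw [h1]; ring
  exact (ENNReal.mul_right_inj hN0 (by simp)).1 h3

theorem near_quartic {N : ℕ} (hN : 2 ≤ N) {s δ : ℝ} (hs1 : s < 1) (hδ : 0 < δ) :
    ∫⁻ h : Euc N, ENNReal.ofReal (‖h‖ ^ 4) * wt N s δ ‖h‖ ≤
      ENNReal.ofReal (δ ^ 2 * N * nearC N s δ) := by
  have hm2 : Measurable (fun h : Euc N => ENNReal.ofReal (‖h‖ ^ 2) * wt N s δ ‖h‖) := by
    apply Measurable.mul (by fun_prop) ((measurable_wt N s δ).comp measurable_norm)
  calc _ ≤ ∫⁻ h : Euc N, ENNReal.ofReal (δ ^ 2) * (ENNReal.ofReal (‖h‖ ^ 2) * wt N s δ ‖h‖) := by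
        refine lintegral_mono fun h => ?_
        by_cases hh : ‖h‖ ∈ Iio δ
        · rw [← mul_assoc, ← ENNReal.ofReal_mul (by positivity)]
          gcongr
          have : ‖h‖ < δ := hh
          calc ‖h‖ ^ 4 = ‖h‖ ^ 2 * ‖h‖ ^ 2 := by ring
            _ ≤ _ := by gcongr
        · simp [wt, indicator_of_notMem hh]
    _ = _ := by
        rw [lintegral_const_mul _ hm2, radial_int hN hs1 hδ, ← ENNReal.ofReal_mul (by positivity)]
        congr 1
        unfold nearC; ring

/-- far constant -/
theorem far_int (N : ℕ) {δ : ℝ} (hδ : 0 < δ) (hδ1 : δ ≤ 1) :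
    ∃ C : ℝ, 0 ≤ C ∧ ∀ s : ℝ, 1 / 2 ≤ s → s < 1 →
      ∫⁻ h : Euc N, {h : Euc N | δ ≤ ‖h‖}.indicator
        (fun h => ENNReal.ofReal (1 / ‖h‖ ^ ((N : ℝ) + 2 * s))) h ≤ ENNReal.ofReal C := by
  have hfr : (Module.finrank ℝ (Euc N) : ℝ) < N + 1 := by simp
  have h1 := finite_integral_one_add_norm (μ := (volume : Measure (Euc N))) hfr
  set I := ∫⁻ x : Euc N, ENNReal.ofReal ((1 + ‖x‖) ^ (-((N : ℝ) + 1))) with hI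
  refine ⟨(2 / δ) ^ ((N : ℝ) + 2) * I.toReal, by positivity, fun s hs hs1 => ?_⟩
  rw [ENNReal.ofReal_mul (by positivity), ENNReal.ofReal_toReal h1.ne, hI]
  have hm : Measurable fun x : Euc N => ENNReal.ofReal ((1 + ‖x‖) ^ (-((N : ℝ) + 1))) := by
    fun_prop
  rw [← lintegral_const_mul _ hm]
  refine lintegral_mono fun h => ?_
  by_cases hh : h ∈ {h : Euc N | δ ≤ ‖h‖}
  · rw [indicator_of_mem hh, ← ENNReal.ofReal_mul (by positivity)]
    apply ENNReal.ofReal_le_ofReal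
    have hh' : δ ≤ ‖h‖ := hh
    have hp : 0 < ‖h‖ := by linarith
    have hn : (0 : ℝ) ≤ N := by positivity
    have e1 : 1 + ‖h‖ ≤ 2 / δ * ‖h‖ := by
      rw [div_mul_eq_mul_div, le_div_iff₀ hδ]; nlinarith
    have e2 : (1 + ‖h‖) ^ ((N : ℝ) + 1) ≤ (1 + ‖h‖) ^ ((N : ℝ) + 2 * s) :=
      Real.rpow_le_rpow_of_exponent_le (by linarith) (by linarith)
    have e3 : (1 + ‖h‖) ^ ((N : ℝ) + 2 * s) ≤ (2 / δ) ^ ((N : ℝ) + 2 * s) * ‖h‖ ^ ((N : ℝ) + 2 * s) := by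
      rw [← Real.mul_rpow (by positivity) hp.le]
      exact Real.rpow_le_rpow (by positivity) e1 (by linarith)
    have e4 : (2 / δ) ^ ((N : ℝ) + 2 * s) ≤ (2 / δ) ^ ((N : ℝ) + 2) :=
      Real.rpow_le_rpow_of_exponent_le (by rw [le_div_iff₀ hδ]; linarith) (by linarith)
    rw [Real.rpow_neg (by positivity), div_le_iff₀ (by positivity), mul_assoc, inv_mul_eq_div,
      ← mul_div_assoc, le_div_iff₀ (by positivity), one_mul]
    refine e2.trans (e3.trans ?_)
    gcongr
  · rw [indicator_of_notMem hh]; exact zero_le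

theorem cNs_eq (N : ℕ) {s : ℝ} (hs1 : s < 1) :
    cNs N s = (1 - s) * ((4 : ℝ) ^ s * s * Real.Gamma ((N : ℝ) / 2 + s) /
    (Real.pi ^ ((N : ℝ) / 2) * Real.Gamma (2 - s))) := by
  have h := Real.Gamma_add_one (s := 1 - s) (by linarith)
  rw [show 1 - s + 1 = 2 - s by ring] at h
  rw [h, cNs]
  have : Real.Gamma (1 - s) ≠ 0 := (Real.Gamma_pos_of_pos (by linarith)).ne'
  have : 1 - s ≠ 0 := by linarith
  have : Real.pi ^ ((N : ℝ) / 2) ≠ 0 := (Real.rpow_pos_of_pos Real.pi_pos _).ne'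
  field_simp

theorem cNs_pos (N : ℕ) {s : ℝ} (hs0 : 0 < s) (hs1 : s < 1) : 0 < cNs N s := by
  unfold cNs
  have h1 : 0 < Real.Gamma (1 - s) := Real.Gamma_pos_of_pos (by linarith)
  have h2 : 0 < Real.Gamma ((N : ℝ) / 2 + s) := Real.Gamma_pos_of_pos (by positivity)
  have := Real.pi_pos
  positivity

theorem om_eq {N : ℕ} (hN : 2 ≤ N) :
    om N = Real.pi ^ ((N : ℝ) / 2) / Real.Gamma ((N : ℝ) / 2 + 1) := by
  have : Nonempty (Fin N) := ⟨⟨0, by omega⟩⟩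
  have hG : 0 < Real.Gamma ((N : ℝ) / 2 + 1) := Real.Gamma_pos_of_pos (by positivity)
  rw [om, EuclideanSpace.volume_ball]
  simp only [ENNReal.ofReal_one, one_pow, one_mul, Fintype.card_fin]
  rw [ENNReal.toReal_ofReal (by positivity), Real.sqrt_eq_rpow, ← Real.rpow_natCast,
    ← Real.rpow_mul Real.pi_pos.le]
  congr 2; ring

/-- the ratio `c_s/(1-s)` tends to `4/om`. -/
theorem cNs_div_tendsto {N : ℕ} (hN : 2 ≤ N) :
    Tendsto (fun s => cNs N s / (1 - s)) (𝓝[<] 1) (𝓝 (4 / om N)) := by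
  have hG : 0 < Real.Gamma ((N : ℝ) / 2 + 1) := Real.Gamma_pos_of_pos (by positivity)
  have hc : ContinuousAt (fun s : ℝ => (4 : ℝ) ^ s * s * Real.Gamma ((N : ℝ) / 2 + s) /
    (Real.pi ^ ((N : ℝ) / 2) * Real.Gamma (2 - s))) 1 := by
    have g1 : ContinuousAt Real.Gamma ((N : ℝ) / 2 + 1) :=
      (Real.differentiableAt_Gamma (fun m => by
        have h1 : (0 : ℝ) ≤ m := by positivity
        have h2 : (0 : ℝ) ≤ N := by positivity
        intro h3
        linarith)).continuousAt
    have g2 : ContinuousAt Real.Gamma (2 - 1) :=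
      (Real.differentiableAt_Gamma (fun m => by
        have h1 : (0 : ℝ) ≤ m := by positivity
        intro h3
        linarith)).continuousAt
    have g1' : ContinuousAt (fun s : ℝ => Real.Gamma ((N : ℝ) / 2 + s)) 1 :=
      ContinuousAt.comp (f := fun s : ℝ => (N : ℝ) / 2 + s) g1 (by fun_prop)
    have g2' : ContinuousAt (fun s : ℝ => Real.Gamma (2 - s)) 1 :=
      ContinuousAt.comp (f := fun s : ℝ => 2 - s) g2 (by fun_prop)
    have g3 : ContinuousAt (fun s : ℝ => (4 : ℝ) ^ s) 1 :=
      (Real.continuous_const_rpow (by norm_num)).continuousAt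
    refine ContinuousAt.div ((g3.mul continuousAt_id).mul g1') (continuousAt_const.mul g2') ?_
    have := Real.pi_pos
    norm_num
    positivity
  have h1 := hc.tendsto.mono_left (nhdsWithin_le_nhds (s := Iio 1))
  have h2 : (4 : ℝ) ^ (1 : ℝ) * 1 * Real.Gamma ((N : ℝ) / 2 + 1) /
    (Real.pi ^ ((N : ℝ) / 2) * Real.Gamma (2 - 1)) = 4 / om N := by
    rw [om_eq hN]
    norm_num
    rw [div_div_eq_mul_div]
  rw [h2] at h1
  refine h1.congr' ?_
  filter_upwards [self_mem_nhdsWithin] with s hs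
  have hs' : s < 1 := hs
  rw [cNs_eq N hs', mul_div_cancel_left₀ _ (by linarith)]

theorem cNs_tendsto {N : ℕ} (hN : 2 ≤ N) :
    Tendsto (fun s => cNs N s) (𝓝[<] 1) (𝓝 0) := by
  have h1 := cNs_div_tendsto hN
  have h2 : Tendsto (fun s : ℝ => 1 - s) (𝓝[<] 1) (𝓝 0) := by
    have : Tendsto (fun s : ℝ => 1 - s) (𝓝 1) (𝓝 (1 - 1)) := Continuous.tendsto (by fun_prop) 1
    rw [sub_self] at this
    exact this.mono_left nhdsWithin_le_nhds
  have h3 := h1.mul h2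
  rw [mul_zero] at h3
  refine h3.congr' ?_
  filter_upwards [self_mem_nhdsWithin] with s hs
  have hs' : s < 1 := hs
  rw [div_mul_cancel₀ _ (by linarith)]

theorem kappa_tendsto {N : ℕ} (hN : 2 ≤ N) {δ : ℝ} (hδ : 0 < δ) :
    Tendsto (fun s => cNs N s / 2 * nearC N s δ) (𝓝[<] 1) (𝓝 1) := by
  have h1 := cNs_div_tendsto hN
  have h2 : Tendsto (fun s : ℝ => δ ^ (2 - 2 * s)) (𝓝[<] 1) (𝓝 1) := by
    have hc : Continuous (fun s : ℝ => δ ^ (2 - 2 * s)) :=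
      (Real.continuous_const_rpow hδ.ne').comp (by fun_prop)
    have : Tendsto (fun s : ℝ => δ ^ (2 - 2 * s)) (𝓝 1) (𝓝 (δ ^ (2 - 2 * (1 : ℝ)))) := hc.tendsto 1
    norm_num at this
    exact this.mono_left nhdsWithin_le_nhds
  have h3 := (h1.mul h2).mul_const (om N / 4)
  have hom := om_pos N
  have e : 4 / om N * 1 * (om N / 4) = 1 := by field_simp
  rw [e] at h3
  refine h3.congr' ?_
  filter_upwards [self_mem_nhdsWithin] with s hs
  have hs' : s < 1 := hs
  have : 1 - s ≠ 0 := by linarith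
  have e2 : 2 - 2 * s = 2 * (1 - s) := by ring
  unfold nearC
  generalize δ ^ (2 - 2 * s) = q
  rw [e2]
  field_simp
  ring


end

section

theorem sq_add_le (a b : ℝ) {ε : ℝ} (hε : 0 < ε) :
    (a + b) ^ 2 ≤ (1 + ε) * a ^ 2 + (1 + 1 / ε) * b ^ 2 := by
  have h : 0 ≤ (ε * a - b) ^ 2 / ε := by positivity
  have e : (ε * a - b) ^ 2 / ε = ε * a ^ 2 - 2 * a * b + 1 / ε * b ^ 2 := by
    field_simp; ring
  nlinarith

/-- far kernel -/
def fr (N : ℕ) (s δ : ℝ) (h : Euc N) : ℝ≥0∞ :=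
  {h : Euc N | δ ≤ ‖h‖}.indicator (fun h => ENNReal.ofReal (1 / ‖h‖ ^ ((N : ℝ) + 2 * s))) h

theorem measurable_fr (N : ℕ) (s δ : ℝ) : Measurable (fr N s δ) := by
  unfold fr
  apply Measurable.indicator _ (isClosed_le continuous_const continuous_norm).measurableSet
  fun_prop

theorem near_pt {N : ℕ} (hN : 2 ≤ N) {s δ ε : ℝ} (hs1 : s < 1) (hδ : 0 < δ) (hε : 0 < ε)
    {w : Euc N → ℝ} {w' : Euc N → (Euc N →L[ℝ] ℝ)} {M : ℝ} (hw : C2B N w w' M) (x : Euc N) :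
    ∫⁻ y, ENNReal.ofReal ((w x - w y) ^ 2) * wt N s δ ‖y - x‖ ≤
      ENNReal.ofReal (nearC N s δ) * (ENNReal.ofReal (1 + ε) * ENNReal.ofReal (‖w' x‖ ^ 2) +
        ENNReal.ofReal ((1 + 1 / ε) * M ^ 2 * (δ ^ 2 * N))) := by
  have hwm : Measurable fun h : Euc N => wt N s δ ‖h‖ := (measurable_wt N s δ).comp measurable_norm
  have hm1 : Measurable fun h : Euc N => ENNReal.ofReal ((w' x h) ^ 2) * wt N s δ ‖h‖ :=
    Measurable.mul ((by fun_prop : Continuous fun h : Euc N => (w' x h) ^ 2).measurable.ennreal_ofReal) hwm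
  have hm2 : Measurable fun h : Euc N => ENNReal.ofReal (‖h‖ ^ 4) * wt N s δ ‖h‖ :=
    Measurable.mul (by fun_prop) hwm
  calc _ ≤ ∫⁻ y, (fun h : Euc N => ENNReal.ofReal (1 + ε) * (ENNReal.ofReal ((w' x h) ^ 2) * wt N s δ ‖h‖)
        + ENNReal.ofReal ((1 + 1 / ε) * M ^ 2) * (ENNReal.ofReal (‖h‖ ^ 4) * wt N s δ ‖h‖)) (y - x) := by
        refine lintegral_mono fun y => ?_
        simp only
        rw [← mul_assoc, ← mul_assoc, ← add_mul]
        refine mul_le_mul_left (α := ℝ≥0∞) ?_ _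
        rw [← ENNReal.ofReal_mul (by positivity), ← ENNReal.ofReal_mul (by positivity),
          ← ENNReal.ofReal_add (by positivity) (by positivity)]
        apply ENNReal.ofReal_le_ofReal
        have ht := hw.taylor x y
        have h1 := sq_add_le (w' x (y - x)) (w y - w x - w' x (y - x)) hε
        have h2 : (w y - w x - w' x (y - x)) ^ 2 ≤ M ^ 2 * ‖y - x‖ ^ 4 := by
          rw [← sq_abs]
          calc _ ≤ (M * ‖y - x‖ ^ 2) ^ 2 := by gcongr
            _ = _ := by ring
        calc (w x - w y) ^ 2 = (w' x (y - x) + (w y - w x - w' x (y - x))) ^ 2 := by ring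
          _ ≤ _ := h1
          _ ≤ (1 + ε) * (w' x (y - x)) ^ 2 + (1 + 1 / ε) * (M ^ 2 * ‖y - x‖ ^ 4) := by gcongr
          _ = _ := by ring
    _ = ENNReal.ofReal (1 + ε) * (ENNReal.ofReal (nearC N s δ) * ENNReal.ofReal (‖w' x‖ ^ 2)) +
        ENNReal.ofReal ((1 + 1 / ε) * M ^ 2) * ∫⁻ h : Euc N, (ENNReal.ofReal (‖h‖ ^ 4) * wt N s δ ‖h‖) := by
        rw [lintegral_sub_right_eq_self (fun h : Euc N => ENNReal.ofReal (1 + ε) *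
          (ENNReal.ofReal ((w' x h) ^ 2) * wt N s δ ‖h‖)
          + ENNReal.ofReal ((1 + 1 / ε) * M ^ 2) * (ENNReal.ofReal (‖h‖ ^ 4) * wt N s δ ‖h‖)) x,
          lintegral_add_left (hm1.const_mul _),
          lintegral_const_mul _ hm1, lintegral_const_mul _ hm2, near_int hN hs1 hδ]
    _ ≤ ENNReal.ofReal (1 + ε) * (ENNReal.ofReal (nearC N s δ) * ENNReal.ofReal (‖w' x‖ ^ 2)) +
        ENNReal.ofReal ((1 + 1 / ε) * M ^ 2) * ENNReal.ofReal (δ ^ 2 * N * nearC N s δ) := by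
        gcongr
        exact near_quartic hN hs1 hδ
    _ = _ := by
        rw [ENNReal.ofReal_mul (p := δ ^ 2 * N) (by positivity),
          ENNReal.ofReal_mul (q := δ ^ 2 * N) (by positivity)]
        ring

theorem semiSq_le {N : ℕ} (hN : 2 ≤ N) {Ω : Set (Euc N)} {s δ ε : ℝ}
    (hs1 : s < 1) (hδ : 0 < δ) (hε : 0 < ε)
    {V a C : ℝ} (hV : 0 ≤ V)
    (hVv : volume (Metric.cthickening δ (closure Ω)) ≤ ENNReal.ofReal V)
    (hav : volume (Metric.cthickening δ (closure Ω) \ Ω) ≤ ENNReal.ofReal a)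
    (hC : ∫⁻ h : Euc N, fr N s δ h ≤ ENNReal.ofReal C) (hC0 : 0 ≤ C)
    {w : Euc N → ℝ} {w' : Euc N → (Euc N →L[ℝ] ℝ)} {M : ℝ} (hw : C2B N w w' M) :
    semiSq N s Ω w ≤ ENNReal.ofReal (nearC N s δ) * (ENNReal.ofReal (1 + ε) *
        ((∫⁻ x in Ω, ENNReal.ofReal (‖w' x‖ ^ 2)) + ENNReal.ofReal (M ^ 2 * a)) +
        ENNReal.ofReal ((1 + 1 / ε) * M ^ 2 * (δ ^ 2 * N) * V)) +
        ENNReal.ofReal (8 * M ^ 2 * V * C) := by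
  set T := Metric.cthickening δ (closure Ω) with hT
  have hTm : MeasurableSet T := Metric.isClosed_cthickening.measurableSet
  have hKm : MeasurableSet (closure Ω) := isClosed_closure.measurableSet
  have hΩT : Ω ⊆ T := subset_closure.trans (Metric.self_subset_cthickening _)
  have hwc := hw.cont
  have hwm : Measurable fun q : Euc N × Euc N => wt N s δ ‖q.2 - q.1‖ :=
    (measurable_wt N s δ).comp (by fun_prop)
  have hfm : Measurable fun q : Euc N × Euc N => fr N s δ (q.2 - q.1) :=
    (measurable_fr N s δ).comp (by fun_prop)
  have hDm : Measurable fun q : Euc N × Euc N => ENNReal.ofReal ((w q.1 - w q.2) ^ 2) :=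
    ((by fun_prop : Continuous fun q : Euc N × Euc N => (w q.1 - w q.2) ^ 2).measurable).ennreal_ofReal
  let A : Euc N × Euc N → ℝ≥0∞ := fun q => T.indicator 1 q.1 *
    (ENNReal.ofReal ((w q.1 - w q.2) ^ 2) * wt N s δ ‖q.2 - q.1‖)
  let B1 : Euc N × Euc N → ℝ≥0∞ := fun q => (closure Ω).indicator 1 q.1 *
    (ENNReal.ofReal (4 * M ^ 2) * fr N s δ (q.2 - q.1))
  let B2 : Euc N × Euc N → ℝ≥0∞ := fun q => (closure Ω).indicator 1 q.2 *
    (ENNReal.ofReal (4 * M ^ 2) * fr N s δ (q.2 - q.1))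
  have hAm : Measurable A := Measurable.mul
    ((measurable_one.indicator hTm).comp measurable_fst) (hDm.mul hwm)
  have hB1m : Measurable B1 := Measurable.mul
    ((measurable_one.indicator hKm).comp measurable_fst) (hfm.const_mul _)
  have hB2m : Measurable B2 := Measurable.mul
    ((measurable_one.indicator hKm).comp measurable_snd) (hfm.const_mul _)
  have hregm : MeasurableSet (reg N Ω) :=
    (measurable_fst hKm).union (measurable_snd hKm)
  have hpt : ∀ q, (reg N Ω).indicator
      (fun q => ENNReal.ofReal ((w q.1 - w q.2) ^ 2 / kern N s q.1 q.2)) q ≤ A q + (B1 q + B2 q) := by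
    intro q
    by_cases hq : q ∈ reg N Ω
    swap
    · rw [indicator_of_notMem hq]; exact zero_le
    rw [indicator_of_mem hq]
    have hk : kern N s q.1 q.2 = ‖q.2 - q.1‖ ^ ((N : ℝ) + 2 * s) := by
      rw [kern, norm_sub_rev]
    rw [hk, div_eq_mul_one_div, ENNReal.ofReal_mul (sq_nonneg _)]
    by_cases hd : ‖q.2 - q.1‖ < δ
    · have hqT : q.1 ∈ T := by
        rcases hq with h | h
        · exact Metric.self_subset_cthickening _ h
        · refine Metric.mem_cthickening_of_dist_le q.1 q.2 δ _ h ?_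
          rw [dist_comm, dist_eq_norm]; exact hd.le
      refine le_trans (le_of_eq ?_) le_self_add
      simp only [A]
      rw [indicator_of_mem hqT, wt, indicator_of_mem (show ‖q.2 - q.1‖ ∈ Iio δ from hd)]
      simp
    · have hfr : fr N s δ (q.2 - q.1) =
          ENNReal.ofReal (1 / ‖q.2 - q.1‖ ^ ((N : ℝ) + 2 * s)) := by
        rw [fr, indicator_of_mem (show q.2 - q.1 ∈ {h : Euc N | δ ≤ ‖h‖} from not_lt.1 hd)]
      have hsq : ENNReal.ofReal ((w q.1 - w q.2) ^ 2) ≤ ENNReal.ofReal (4 * M ^ 2) := by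
        apply ENNReal.ofReal_le_ofReal
        have h1 := abs_le.1 (hw.bd q.1)
        have h2 := abs_le.1 (hw.bd q.2)
        nlinarith [hw.nonneg]
      refine le_trans ?_ le_add_self
      simp only [B1, B2, hfr]
      rcases hq with h | h
      · refine le_trans ?_ le_self_add
        rw [indicator_of_mem h, Pi.one_apply, one_mul]
        exact mul_le_mul_left hsq _
      · refine le_trans ?_ le_add_self
        rw [indicator_of_mem h, Pi.one_apply, one_mul]
        exact mul_le_mul_left hsq _
  have hI : semiSq N s Ω w ≤ (∫⁻ q, A q) + ((∫⁻ q, B1 q) + ∫⁻ q, B2 q) := by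
    rw [semiSq, ← lintegral_indicator hregm, ← lintegral_add_left hB1m, ← lintegral_add_left hAm]
    exact lintegral_mono hpt
  have hVK : volume (closure Ω) ≤ ENNReal.ofReal V :=
    (measure_mono (Metric.self_subset_cthickening _)).trans hVv
  have hB1 : ∫⁻ q, B1 q ≤ ENNReal.ofReal (4 * M ^ 2 * V * C) := by
    rw [Measure.volume_eq_prod, lintegral_prod _ hB1m.aemeasurable]
    calc _ = ∫⁻ x, (closure Ω).indicator 1 x * (ENNReal.ofReal (4 * M ^ 2) * ∫⁻ h, fr N s δ h) := by
          refine lintegral_congr fun x => ?_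
          simp only [B1]
          have hfx : Measurable fun y : Euc N => fr N s δ (y - x) :=
            (measurable_fr N s δ).comp (by fun_prop)
          rw [lintegral_const_mul _ (hfx.const_mul _), lintegral_const_mul _ hfx,
            lintegral_sub_right_eq_self]
      _ = volume (closure Ω) * (ENNReal.ofReal (4 * M ^ 2) * ∫⁻ h, fr N s δ h) := by
          rw [lintegral_mul_const _ (measurable_one.indicator hKm), lintegral_indicator_one hKm]
      _ ≤ ENNReal.ofReal V * (ENNReal.ofReal (4 * M ^ 2) * ENNReal.ofReal C) := by gcongr
      _ = _ := by
          rw [← ENNReal.ofReal_mul (by positivity), ← ENNReal.ofReal_mul hV]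
          congr 1; ring
  have hB2 : ∫⁻ q, B2 q ≤ ENNReal.ofReal (4 * M ^ 2 * V * C) := by
    rw [Measure.volume_eq_prod, lintegral_prod_symm' _ hB2m]
    calc _ = ∫⁻ y, (closure Ω).indicator 1 y * (ENNReal.ofReal (4 * M ^ 2) * ∫⁻ h, fr N s δ h) := by
          refine lintegral_congr fun y => ?_
          simp only [B2]
          have hfx : Measurable fun x : Euc N => fr N s δ (y - x) :=
            (measurable_fr N s δ).comp (by fun_prop)
          rw [lintegral_const_mul _ (hfx.const_mul _), lintegral_const_mul _ hfx,
            lintegral_sub_left_eq_self (fun x => fr N s δ x) y]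
      _ = volume (closure Ω) * (ENNReal.ofReal (4 * M ^ 2) * ∫⁻ h, fr N s δ h) := by
          rw [lintegral_mul_const _ (measurable_one.indicator hKm), lintegral_indicator_one hKm]
      _ ≤ ENNReal.ofReal V * (ENNReal.ofReal (4 * M ^ 2) * ENNReal.ofReal C) := by gcongr
      _ = _ := by
          rw [← ENNReal.ofReal_mul (by positivity), ← ENNReal.ofReal_mul hV]
          congr 1; ring
  have hgm : Measurable fun x => ENNReal.ofReal (‖w' x‖ ^ 2) := by
    have := hw.cont'
    exact ((by fun_prop : Continuous fun x => ‖w' x‖ ^ 2).measurable).ennreal_ofReal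
  have hA : ∫⁻ q, A q ≤ ENNReal.ofReal (nearC N s δ) * (ENNReal.ofReal (1 + ε) *
        ((∫⁻ x in Ω, ENNReal.ofReal (‖w' x‖ ^ 2)) + ENNReal.ofReal (M ^ 2 * a)) +
        ENNReal.ofReal ((1 + 1 / ε) * M ^ 2 * (δ ^ 2 * N) * V)) := by
    rw [Measure.volume_eq_prod, lintegral_prod _ hAm.aemeasurable]
    set D := ENNReal.ofReal ((1 + 1 / ε) * M ^ 2 * (δ ^ 2 * N)) with hD
    calc _ ≤ ∫⁻ x, T.indicator (fun x => ENNReal.ofReal (nearC N s δ) *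
          (ENNReal.ofReal (1 + ε) * ENNReal.ofReal (‖w' x‖ ^ 2) + D)) x := by
          refine lintegral_mono fun x => ?_
          simp only [A]
          have hx : Measurable fun y : Euc N =>
              ENNReal.ofReal ((w x - w y) ^ 2) * wt N s δ ‖y - x‖ :=
            (hDm.mul hwm).comp (measurable_prodMk_left (x := x))
          rw [lintegral_const_mul _ hx]
          by_cases hxT : x ∈ T
          · rw [indicator_of_mem hxT, indicator_of_mem hxT, Pi.one_apply, one_mul]
            exact near_pt hN hs1 hδ hε hw x
          · rw [indicator_of_notMem hxT]; simp
      _ = ENNReal.ofReal (nearC N s δ) * (ENNReal.ofReal (1 + ε) *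
            (∫⁻ x in T, ENNReal.ofReal (‖w' x‖ ^ 2)) + D * volume T) := by
          rw [lintegral_indicator hTm,
            lintegral_const_mul _ (show Measurable fun x => ENNReal.ofReal (1 + ε) *
              ENNReal.ofReal (‖w' x‖ ^ 2) + D from (hgm.const_mul _).add measurable_const),
            lintegral_add_left (hgm.const_mul _), lintegral_const_mul _ hgm, setLIntegral_const]
      _ ≤ _ := by
          have h1 : ∫⁻ x in T, ENNReal.ofReal (‖w' x‖ ^ 2) ≤
              (∫⁻ x in Ω, ENNReal.ofReal (‖w' x‖ ^ 2)) + ENNReal.ofReal (M ^ 2 * a) := by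
            have h0 := lintegral_union_le (μ := volume) (fun x => ENNReal.ofReal (‖w' x‖ ^ 2))
              Ω (T \ Ω)
            rw [union_sdiff_cancel hΩT] at h0
            refine h0.trans (add_le_add le_rfl ?_)
            calc _ ≤ ∫⁻ x in T \ Ω, ENNReal.ofReal (M ^ 2) := by
                  refine lintegral_mono fun x => ENNReal.ofReal_le_ofReal ?_
                  have := hw.bd' x
                  gcongr
              _ = ENNReal.ofReal (M ^ 2) * volume (T \ Ω) := setLIntegral_const _ _
              _ ≤ ENNReal.ofReal (M ^ 2) * ENNReal.ofReal a := by gcongr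
              _ = _ := by rw [← ENNReal.ofReal_mul (by positivity)]
          have h2 : D * volume T ≤ ENNReal.ofReal ((1 + 1 / ε) * M ^ 2 * (δ ^ 2 * N) * V) := by
            rw [ENNReal.ofReal_mul (by positivity)]
            gcongr
          gcongr
  refine hI.trans (add_le_add hA ((add_le_add hB1 hB2).trans (le_of_eq ?_)))
  rw [← ENNReal.ofReal_add (by positivity) (by positivity)]
  congr 1; ring

theorem thick_small {N : ℕ} {Ω : Set (Euc N)} (hΩ : IsOpen Ω) (hb : IsBounded Ω)
    (hcl : volume (closure Ω) ≤ volume Ω) {a : ℝ} (ha : 0 < a) :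
    ∀ᶠ δ in 𝓝[>] (0 : ℝ), volume (Metric.cthickening δ (closure Ω) \ Ω) ≤ ENNReal.ofReal a := by
  have hfin : volume Ω ≠ ⊤ := hb.measure_lt_top.ne
  have h1 := tendsto_measure_cthickening_of_isClosed (μ := (volume : Measure (Euc N)))
    (s := closure Ω) ⟨1, one_pos, (hb.closure.cthickening).measure_lt_top.ne⟩ isClosed_closure
  have h2 : ∀ᶠ δ in 𝓝 (0 : ℝ), volume (Metric.cthickening δ (closure Ω)) <
      volume Ω + ENNReal.ofReal a := by
    apply h1.eventually
    apply gt_mem_nhds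
    refine lt_of_le_of_lt hcl ?_
    exact ENNReal.lt_add_right hfin (by simpa using ha)
  filter_upwards [nhdsWithin_le_nhds h2] with δ hδ
  have hsub : Ω ⊆ Metric.cthickening δ (closure Ω) :=
    subset_closure.trans (Metric.self_subset_cthickening _)
  rw [measure_sdiff hsub hΩ.measurableSet.nullMeasurableSet hfin]
  exact tsub_le_iff_left.2 hδ.le

theorem lemma_U {N : ℕ} (hN : 2 ≤ N) {Ω : Set (Euc N)} (hΩ : IsOpen Ω) (hb : IsBounded Ω)
    (hcl : volume (closure Ω) ≤ volume Ω) {η : ℝ} (hη : 0 < η) :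
    ∀ᶠ s in 𝓝[<] (1 : ℝ), ∀ (w : Euc N → ℝ) (w' : Euc N → (Euc N →L[ℝ] ℝ)) (M : ℝ),
      C2B N w w' M → ENNReal.ofReal (cNs N s / 2) * semiSq N s Ω w ≤
        ENNReal.ofReal (1 + η) * (∫⁻ x in Ω, ENNReal.ofReal (‖w' x‖ ^ 2)) +
          ENNReal.ofReal (η * M ^ 2) := by
  obtain ⟨ε, hε, hε1, hε2⟩ : ∃ ε : ℝ, 0 < ε ∧ ε ≤ 1 ∧ 3 * ε ≤ η :=
    ⟨min 1 (η / 3), by positivity, min_le_left _ _, by linarith [min_le_right 1 (η / 3)]⟩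
  set V := (volume (Metric.cthickening 1 (closure Ω))).toReal with hV
  have hV0 : 0 ≤ V := ENNReal.toReal_nonneg
  have hVtop : volume (Metric.cthickening 1 (closure Ω)) ≠ ⊤ :=
    (hb.closure.cthickening).measure_lt_top.ne
  have ha0 : 0 < η / 12 := by positivity
  have hδev : ∀ᶠ δ in 𝓝[>] (0 : ℝ), 2 * ((1 + 1 / ε) * (δ ^ 2 * N) * V) < η / 3 := by
    have : Tendsto (fun δ : ℝ => 2 * ((1 + 1 / ε) * (δ ^ 2 * N) * V)) (𝓝[>] 0)
      (𝓝 (2 * ((1 + 1 / ε) * (0 ^ 2 * N) * V))) :=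
      (Continuous.tendsto (by fun_prop) 0).mono_left nhdsWithin_le_nhds
    apply this.eventually_lt_const
    simpa using hη
  obtain ⟨δ, hδ1, hδ2, hδ3⟩ := ((thick_small hΩ hb hcl ha0).and
    (hδev.and (Ioc_mem_nhdsGT one_pos))).exists
  obtain ⟨C, hC0, hC⟩ := far_int N hδ3.1 hδ3.2
  have hk := (kappa_tendsto hN hδ3.1).eventually (gt_mem_nhds (show (1 : ℝ) < 1 + ε by linarith))
  have hcs : ∀ᶠ s in 𝓝[<] (1 : ℝ), cNs N s * (4 * V * C) < η / 3 := by
    have := (cNs_tendsto hN).mul_const (4 * V * C)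
    apply this.eventually_lt_const
    simpa using hη
  filter_upwards [hk, hcs, Ico_mem_nhdsLT (show (1 / 2 : ℝ) < 1 by norm_num)] with s hk hcs hs w w' M hw
  have hc0 := cNs_pos N (by linarith [hs.1] : 0 < s) hs.2
  have hVv : volume (Metric.cthickening δ (closure Ω)) ≤ ENNReal.ofReal V := by
    rw [hV, ENNReal.ofReal_toReal hVtop]
    exact measure_mono (Metric.cthickening_mono hδ3.2 _)
  have hmain := semiSq_le hN hs.2 hδ3.1 hε hV0 hVv hδ1 (hC s hs.1 hs.2) hC0 hw
  have hn0 : 0 ≤ nearC N s δ := by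
    have := om_pos N
    have := hδ3.1
    have : 0 < 2 - 2 * s := by linarith [hs.2]
    unfold nearC
    positivity
  set G := ∫⁻ x in Ω, ENNReal.ofReal (‖w' x‖ ^ 2)
  set κ := cNs N s / 2 * nearC N s δ with hκ
  have hκ0 : 0 ≤ κ := by positivity
  calc _ ≤ ENNReal.ofReal (cNs N s / 2) * _ := mul_le_mul_right hmain _
    _ = ENNReal.ofReal (κ * (1 + ε)) * G + ENNReal.ofReal (M ^ 2 * (κ * (1 + ε) * (η / 12) +
          κ * ((1 + 1 / ε) * (δ ^ 2 * N) * V) + cNs N s * (4 * V * C))) := by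
        have E1 : ENNReal.ofReal (κ * (1 + ε)) = ENNReal.ofReal (cNs N s / 2) *
            ENNReal.ofReal (nearC N s δ) * ENNReal.ofReal (1 + ε) := by
          rw [← ENNReal.ofReal_mul (by positivity), ← ENNReal.ofReal_mul (by positivity)]
        have E2 : ENNReal.ofReal (M ^ 2 * (κ * (1 + ε) * (η / 12) +
          κ * ((1 + 1 / ε) * (δ ^ 2 * N) * V) + cNs N s * (4 * V * C))) =
            ENNReal.ofReal (cNs N s / 2) * ENNReal.ofReal (nearC N s δ) * ENNReal.ofReal (1 + ε) *
              ENNReal.ofReal (M ^ 2 * (η / 12)) +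
            ENNReal.ofReal (cNs N s / 2) * ENNReal.ofReal (nearC N s δ) *
              ENNReal.ofReal ((1 + 1 / ε) * M ^ 2 * (δ ^ 2 * N) * V) +
            ENNReal.ofReal (cNs N s / 2) * ENNReal.ofReal (8 * M ^ 2 * V * C) := by
          rw [← ENNReal.ofReal_mul (by positivity), ← ENNReal.ofReal_mul (by positivity),
            ← ENNReal.ofReal_mul (by positivity), ← ENNReal.ofReal_mul (by positivity),
            ← ENNReal.ofReal_mul (by positivity), ← ENNReal.ofReal_add (by positivity)
            (by positivity), ← ENNReal.ofReal_add (by positivity) (by positivity)]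
          congr 1
          simp only [hκ]
          ring
        rw [E1, E2]
        ring
    _ ≤ _ := by
        refine add_le_add (mul_le_mul_left (ENNReal.ofReal_le_ofReal ?_) _)
          (ENNReal.ofReal_le_ofReal ?_)
        · nlinarith
        · rw [mul_comm η]
          have e1 : κ * (1 + ε) * (η / 12) ≤ η / 3 := by
            have : κ * (1 + ε) ≤ 4 := by nlinarith
            nlinarith
          have e2 : κ * ((1 + 1 / ε) * (δ ^ 2 * N) * V) ≤ η / 3 := by
            refine le_trans ?_ hδ2.le
            gcongr
            linarith
          gcongr
          linarith


end

section

/-- inner region -/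
def Win (N : ℕ) (Ω : Set (Euc N)) (d : ℝ) : Set (Euc N) := {x | Metric.ball x (2 * d) ⊆ Ω}

theorem isClosed_Win (N : ℕ) (Ω : Set (Euc N)) (d : ℝ) : IsClosed (Win N Ω d) := by
  have : Win N Ω d = (⋃ y ∈ Ωᶜ, Metric.ball y (2 * d))ᶜ := by
    ext x
    simp only [Win, mem_compl_iff, mem_iUnion, Metric.mem_ball, not_exists, Set.mem_ofPred_eq]
    constructor
    · intro h y hy hd
      exact hy (h (by rwa [Metric.mem_ball, dist_comm]))
    · intro h y hy
      by_contra hc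
      exact h y hc (by rwa [Metric.mem_ball, dist_comm] at hy)
  rw [this]
  exact (isOpen_biUnion fun y _ => Metric.isOpen_ball).isClosed_compl

theorem Win_subset {N : ℕ} {Ω : Set (Euc N)} {d : ℝ} (hd : 0 < d) : Win N Ω d ⊆ Ω :=
  fun x hx => hx (Metric.mem_ball_self (by linarith))

theorem Moll.lint_left {N : ℕ} {ρ : Euc N → ℝ} {δ B : ℝ} (hρ : Moll N δ ρ B) (x : Euc N) :
    ∫⁻ y, ENNReal.ofReal (ρ (x - y)) = 1 := by
  rw [lintegral_sub_left_eq_self (fun z => ENNReal.ofReal (ρ z)) x, hρ.int1]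

theorem Moll.lint_right {N : ℕ} {ρ : Euc N → ℝ} {δ B : ℝ} (hρ : Moll N δ ρ B) (x : Euc N) :
    ∫⁻ y, ENNReal.ofReal (ρ (y - x)) = 1 := by
  rw [lintegral_sub_right_eq_self (fun z => ENNReal.ofReal (ρ z)) x, hρ.int1]

theorem mol_integrable {N : ℕ} {Ω : Set (Euc N)} {ρ u : Euc N → ℝ} {δ B : ℝ} (hρ : Moll N δ ρ B)
    (hu : IntegrableOn u Ω) (x : Euc N) : IntegrableOn (fun y => ρ (x - y) * u y) Ω := by
  have hρc := hρ.smooth.continuous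
  have hi : Integrable (fun y => B * |u y|) (volume.restrict Ω) := hu.abs.const_mul B
  refine hi.mono' ((Continuous.aestronglyMeasurable (by fun_prop)).mul hu.aestronglyMeasurable)
    (Eventually.of_forall fun y => ?_)
  rw [norm_mul]; exact mul_le_mul_of_nonneg_right (hρ.bd _) (norm_nonneg _)

/-- Jensen in convolution form, integrated. -/
theorem moll_int_le {N : ℕ} {ρ : Euc N → ℝ} {δ B : ℝ} (hρ : Moll N δ ρ B)
    {D : Euc N → ℝ≥0∞} (hD : Measurable D) :
    ∫⁻ x, ∫⁻ y, ENNReal.ofReal (ρ (x - y)) * D y ≤ ∫⁻ y, D y := by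
  have hρc := hρ.smooth.continuous
  have hm : Measurable (fun p : Euc N × Euc N => ENNReal.ofReal (ρ (p.1 - p.2)) * D p.2) :=
    ((by fun_prop : Continuous fun p : Euc N × Euc N => ρ (p.1 - p.2)).measurable.ennreal_ofReal).mul
      (hD.comp measurable_snd)
  rw [lintegral_lintegral_swap hm.aemeasurable]
  refine le_of_eq (lintegral_congr fun y => ?_)
  have hmy : Measurable fun x : Euc N => ENNReal.ofReal (ρ (x - y)) :=
    (by fun_prop : Continuous fun x : Euc N => ρ (x - y)).measurable.ennreal_ofReal
  rw [lintegral_mul_const _ hmy, hρ.lint_right, one_mul]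

/-- finite differences inside `Ω` -/
def fD (N : ℕ) (Ω : Set (Euc N)) (u : Euc N → ℝ) (h y : Euc N) : ℝ :=
  {p : Euc N × Euc N | p.2 ∈ Ω ∧ p.2 + p.1 ∈ Ω}.indicator (fun p => u (p.2 + p.1) - u p.2) (h, y)

theorem measurable_fD {N : ℕ} {Ω : Set (Euc N)} (hΩ : IsOpen Ω) {u : Euc N → ℝ}
    (hu : Measurable u) : Measurable (fun p : Euc N × Euc N => fD N Ω u p.1 p.2) := by
  unfold fD
  apply Measurable.indicator
  · exact (hu.comp (by fun_prop)).sub (hu.comp (by fun_prop))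
  · exact (measurable_snd hΩ.measurableSet).inter
      ((by fun_prop : Measurable fun p : Euc N × Euc N => p.2 + p.1) hΩ.measurableSet)

theorem mol_diff {N : ℕ} {Ω : Set (Euc N)} (hΩ : IsOpen Ω) {ρ u : Euc N → ℝ} {d B : ℝ}
    (hρ : Moll N d ρ B) (hu : IntegrableOn u Ω) {x h : Euc N} (hx : x ∈ Win N Ω d)
    (hh : ‖h‖ < d) :
    mol N Ω ρ u (x + h) - mol N Ω ρ u x = ∫ y, ρ (x - y) • fD N Ω u h y := by
  have i1 := (integrable_indicator_iff hΩ.measurableSet).2 (mol_integrable hρ hu x)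
  have i2 := ((integrable_indicator_iff hΩ.measurableSet).2
    (mol_integrable hρ hu (x + h))).comp_add_right h
  unfold mol
  rw [← integral_indicator hΩ.measurableSet, ← integral_indicator hΩ.measurableSet,
    ← integral_add_right_eq_self (Ω.indicator fun y => ρ (x + h - y) * u y) h, ← integral_sub i2 i1]
  refine integral_congr_ae (Eventually.of_forall fun y => ?_)
  simp only [smul_eq_mul]
  have hxy : x + h - (y + h) = x - y := by abel
  by_cases hr : ρ (x - y) = 0
  · have e1 : Ω.indicator (fun y => ρ (x + h - y) * u y) (y + h) = 0 :=
      indicator_apply_eq_zero.2 (fun _ => by rw [hxy, hr, zero_mul])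
    have e2 : Ω.indicator (fun y => ρ (x - y) * u y) y = 0 :=
      indicator_apply_eq_zero.2 (fun _ => by rw [hr, zero_mul])
    rw [e1, e2, hr]; simp
  · have hm : x - y ∈ Metric.ball (0 : Euc N) d := by
      rw [← hρ.supp]; exact hr
    rw [mem_ball_zero_iff] at hm
    have hy : y ∈ Ω := hx (by
      rw [Metric.mem_ball, dist_comm, dist_eq_norm]; linarith [norm_nonneg h])
    have hy2 : y + h ∈ Ω := hx (by
      rw [Metric.mem_ball, dist_comm, dist_eq_norm]
      calc ‖x - (y + h)‖ = ‖(x - y) - h‖ := by congr 1; abel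
        _ ≤ ‖x - y‖ + ‖h‖ := norm_sub_le _ _
        _ < _ := by linarith)
    rw [indicator_of_mem hy, indicator_of_mem hy2, fD,
      indicator_of_mem (show ((h, y) : Euc N × Euc N) ∈
        {p : Euc N × Euc N | p.2 ∈ Ω ∧ p.2 + p.1 ∈ Ω} from ⟨hy, hy2⟩), hxy]
    ring

theorem mol_diff_int {N : ℕ} {Ω : Set (Euc N)} (hΩ : IsOpen Ω) {ρ u : Euc N → ℝ} {d B : ℝ}
    (hρ : Moll N d ρ B) (hum : Measurable u) (hu : IntegrableOn u Ω) {h : Euc N} (hh : ‖h‖ < d) :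
    ∫⁻ x in Win N Ω d, ENNReal.ofReal ((mol N Ω ρ u (x + h) - mol N Ω ρ u x) ^ 2) ≤
      ∫⁻ y, ENNReal.ofReal ((fD N Ω u h y) ^ 2) := by
  have hρc := hρ.smooth.continuous
  have hDm : Measurable fun y => fD N Ω u h y :=
    (measurable_fD hΩ hum).comp (measurable_prodMk_left (x := h))
  calc _ ≤ ∫⁻ x in Win N Ω d, ∫⁻ y, ENNReal.ofReal (ρ (x - y)) * ENNReal.ofReal ((fD N Ω u h y) ^ 2) := by
        refine setLIntegral_mono' (isClosed_Win N Ω d).measurableSet fun x hx => ?_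
        rw [mol_diff hΩ hρ hu hx hh]
        have := jensen_sq (μ := volume) (fun y => ρ (x - y)) (fun y => hρ.nonneg _)
          ((by fun_prop : Continuous fun y => ρ (x - y)).measurable) (hρ.lint_left x).le
          (fun y => fD N Ω u h y) hDm.enorm.aemeasurable
        simpa [Real.norm_eq_abs, sq_abs] using this
    _ ≤ ∫⁻ x, ∫⁻ y, ENNReal.ofReal (ρ (x - y)) * ENNReal.ofReal ((fD N Ω u h y) ^ 2) :=
        setLIntegral_le_lintegral _ _
    _ ≤ _ := moll_int_le hρ (by fun_prop)

theorem fD_semi {N : ℕ} {Ω : Set (Euc N)} (hΩ : IsOpen Ω) {u : Euc N → ℝ} (hum : Measurable u)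
    (s δ : ℝ) :
    ∫⁻ h : Euc N, wt N s δ ‖h‖ * ∫⁻ y, ENNReal.ofReal ((fD N Ω u h y) ^ 2) ≤ semiSqOn N s Ω u := by
  have hfm := measurable_fD hΩ hum
  have hwm : Measurable fun p : Euc N × Euc N => wt N s δ ‖p.1‖ :=
    (measurable_wt N s δ).comp (by fun_prop)
  have hFm : Measurable fun q : Euc N × Euc N => (Ω ×ˢ Ω).indicator
      (fun q => ENNReal.ofReal ((u q.1 - u q.2) ^ 2 / kern N s q.1 q.2)) q := by
    apply Measurable.indicator _ (hΩ.measurableSet.prod hΩ.measurableSet)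
    unfold kern
    fun_prop
  have hm2 : Measurable fun p : Euc N × Euc N => wt N s δ ‖p.1‖ * ENNReal.ofReal ((fD N Ω u p.1 p.2) ^ 2) :=
    hwm.mul (by fun_prop)
  rw [semiSqOn, ← lintegral_indicator (hΩ.measurableSet.prod hΩ.measurableSet),
    Measure.volume_eq_prod, lintegral_prod _ hFm.aemeasurable]
  calc _ = ∫⁻ h : Euc N, ∫⁻ y, wt N s δ ‖h‖ * ENNReal.ofReal ((fD N Ω u h y) ^ 2) := by
        refine lintegral_congr fun h => ?_
        have : Measurable fun y => fD N Ω u h y := hfm.comp (measurable_prodMk_left (x := h))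
        rw [lintegral_const_mul _ (by fun_prop)]
    _ = ∫⁻ y, ∫⁻ h : Euc N, wt N s δ ‖h‖ * ENNReal.ofReal ((fD N Ω u h y) ^ 2) :=
        lintegral_lintegral_swap hm2.aemeasurable
    _ ≤ _ := by
        refine lintegral_mono fun y => ?_
        refine le_trans ?_ (lintegral_add_right_eq_self (fun z => (Ω ×ˢ Ω).indicator
          (fun q : Euc N × Euc N => ENNReal.ofReal ((u q.1 - u q.2) ^ 2 / kern N s q.1 q.2)) (y, z)) y).le
        refine lintegral_mono fun h => ?_
        simp only
        by_cases hp : ((h, y) : Euc N × Euc N) ∈ {p : Euc N × Euc N | p.2 ∈ Ω ∧ p.2 + p.1 ∈ Ω}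
        · have hq : (y, h + y) ∈ Ω ×ˢ Ω := ⟨hp.1, by simpa [add_comm] using hp.2⟩
          rw [indicator_of_mem hq, fD, indicator_of_mem hp, div_eq_mul_one_div,
            ENNReal.ofReal_mul (sq_nonneg _), mul_comm]
          simp only [kern]
          have e1 : ‖y - (h + y)‖ = ‖h‖ := by
            rw [← norm_neg]; congr 1; abel
          rw [e1, add_comm y h, ← neg_sub (u y), neg_sq]
          refine mul_le_mul_right (α := ℝ≥0∞) ?_ _
          unfold wt
          exact indicator_le_self _ _ _
        · rw [fD, indicator_of_notMem hp]; simp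

theorem near_lower {N : ℕ} (hN : 2 ≤ N) {Ω : Set (Euc N)} (hΩ : IsOpen Ω) {ρ u : Euc N → ℝ}
    {d B s δ ε V : ℝ} (hd : 0 < d) (hV : volume Ω ≤ ENNReal.ofReal V)
    (hρ : Moll N d ρ B) (hum : Measurable u) (hu : IntegrableOn u Ω) (hs1 : s < 1)
    (hδ : 0 < δ) (hδd : δ ≤ d) (hε : 0 < ε) {M : ℝ} (hw : C2B N (mol N Ω ρ u) (mol' N Ω ρ u) M) :
    ENNReal.ofReal (nearC N s δ) * ∫⁻ x in Win N Ω d, ENNReal.ofReal (‖mol' N Ω ρ u x‖ ^ 2) ≤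
      ENNReal.ofReal (1 + ε) * semiSqOn N s Ω u +
        ENNReal.ofReal (nearC N s δ) * (ENNReal.ofReal ((1 + 1 / ε) * (δ ^ 2 * N) * V)
          * ENNReal.ofReal (M ^ 2)) := by
  have hVt : volume (Win N Ω d) ≤ ENNReal.ofReal V := (measure_mono (Win_subset hd)).trans hV
  have hc' := hw.cont'
  have hc := hw.cont
  set v := mol N Ω ρ u
  set v' := mol' N Ω ρ u
  set W := Win N Ω d
  have hgm : Measurable fun x => ENNReal.ofReal (‖v' x‖ ^ 2) :=
    ((by fun_prop : Continuous fun x => ‖v' x‖ ^ 2).measurable).ennreal_ofReal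
  have hwm : Measurable fun h : Euc N => wt N s δ ‖h‖ := (measurable_wt N s δ).comp measurable_norm
  have hw2 : Measurable fun p : Euc N × Euc N => wt N s δ ‖p.2‖ := hwm.comp measurable_snd
  have hm2 : Measurable fun p : Euc N × Euc N => ENNReal.ofReal ((v' p.1 p.2) ^ 2) * wt N s δ ‖p.2‖ :=
    ((by fun_prop : Continuous fun p : Euc N × Euc N => (v' p.1 p.2) ^ 2).measurable.ennreal_ofReal).mul hw2
  have hq4 : Measurable fun h : Euc N => ENNReal.ofReal (‖h‖ ^ 4) * wt N s δ ‖h‖ :=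
    Measurable.mul (by fun_prop) hwm
  have hdm : ∀ h : Euc N, Measurable fun x => ENNReal.ofReal ((v (x + h) - v x) ^ 2) := fun h =>
    (by fun_prop : Continuous fun x => (v (x + h) - v x) ^ 2).measurable.ennreal_ofReal
  have hdm2 : Measurable fun p : Euc N × Euc N => ENNReal.ofReal ((v (p.1 + p.2) - v p.1) ^ 2) :=
    (by fun_prop : Continuous fun p : Euc N × Euc N => (v (p.1 + p.2) - v p.1) ^ 2).measurable.ennreal_ofReal
  have hinner : Measurable fun h => ∫⁻ x in W, ENNReal.ofReal ((v (x + h) - v x) ^ 2) :=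
    hdm2.lintegral_prod_left'
  have hwi : Measurable fun h => wt N s δ ‖h‖ * ∫⁻ x in W, ENNReal.ofReal ((v (x + h) - v x) ^ 2) :=
    hwm.mul hinner
  set Q := (1 + 1 / ε) * M ^ 2 with hQ
  have hQ0 : 0 ≤ Q := by positivity
  calc _ = ∫⁻ x in W, ∫⁻ h : Euc N, ENNReal.ofReal ((v' x h) ^ 2) * wt N s δ ‖h‖ := by
        rw [← lintegral_const_mul _ hgm]
        refine lintegral_congr fun x => ?_
        rw [near_int hN hs1 hδ]
    _ = ∫⁻ h : Euc N, ∫⁻ x in W, ENNReal.ofReal ((v' x h) ^ 2) * wt N s δ ‖h‖ :=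
        lintegral_lintegral_swap hm2.aemeasurable
    _ ≤ ∫⁻ h : Euc N, (ENNReal.ofReal (1 + ε) *
          (wt N s δ ‖h‖ * ∫⁻ x in W, ENNReal.ofReal ((v (x + h) - v x) ^ 2)) +
          ENNReal.ofReal Q * ENNReal.ofReal V * (ENNReal.ofReal (‖h‖ ^ 4) * wt N s δ ‖h‖)) := by
        refine lintegral_mono fun h => ?_
        simp only
        calc _ ≤ ∫⁻ x in W, ((ENNReal.ofReal (1 + ε) * wt N s δ ‖h‖) *
              ENNReal.ofReal ((v (x + h) - v x) ^ 2) +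
              ENNReal.ofReal Q * (ENNReal.ofReal (‖h‖ ^ 4) * wt N s δ ‖h‖)) := by
              refine lintegral_mono fun x => ?_
              simp only
              have key : ENNReal.ofReal ((v' x h) ^ 2) ≤ ENNReal.ofReal (1 + ε) *
                  ENNReal.ofReal ((v (x + h) - v x) ^ 2) + ENNReal.ofReal Q * ENNReal.ofReal (‖h‖ ^ 4) := by
                rw [← ENNReal.ofReal_mul (by positivity), ← ENNReal.ofReal_mul (by positivity),
                  ← ENNReal.ofReal_add (by positivity) (by positivity)]
                apply ENNReal.ofReal_le_ofReal
                have ht := hw.taylor x (x + h)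
                rw [add_sub_cancel_left] at ht
                have h1 := sq_add_le (v (x + h) - v x) (v' x h - (v (x + h) - v x)) hε
                have h2 : (v' x h - (v (x + h) - v x)) ^ 2 ≤ M ^ 2 * ‖h‖ ^ 4 := by
                  rw [← sq_abs, abs_sub_comm]
                  calc _ ≤ (M * ‖h‖ ^ 2) ^ 2 := by gcongr
                    _ = _ := by ring
                calc (v' x h) ^ 2 = ((v (x + h) - v x) + (v' x h - (v (x + h) - v x))) ^ 2 := by ring
                  _ ≤ _ := h1
                  _ ≤ (1 + ε) * (v (x + h) - v x) ^ 2 + (1 + 1 / ε) * (M ^ 2 * ‖h‖ ^ 4) := by gcongr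
                  _ = _ := by rw [hQ]; ring
              calc _ ≤ _ := mul_le_mul_left key (wt N s δ ‖h‖)
                _ = _ := by ring
          _ = ENNReal.ofReal (1 + ε) * wt N s δ ‖h‖ *
                (∫⁻ x in W, ENNReal.ofReal ((v (x + h) - v x) ^ 2)) +
              ENNReal.ofReal Q * (ENNReal.ofReal (‖h‖ ^ 4) * wt N s δ ‖h‖) * volume W := by
              rw [lintegral_add_left ((hdm h).const_mul _), lintegral_const_mul _ (hdm h),
                setLIntegral_const]
          _ ≤ ENNReal.ofReal (1 + ε) * wt N s δ ‖h‖ *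
                (∫⁻ x in W, ENNReal.ofReal ((v (x + h) - v x) ^ 2)) +
              ENNReal.ofReal Q * (ENNReal.ofReal (‖h‖ ^ 4) * wt N s δ ‖h‖) * ENNReal.ofReal V :=
              add_le_add le_rfl (mul_le_mul_right hVt _)
          _ = _ := by ring
    _ = ENNReal.ofReal (1 + ε) * (∫⁻ h : Euc N,
          (wt N s δ ‖h‖ * ∫⁻ x in W, ENNReal.ofReal ((v (x + h) - v x) ^ 2))) +
          ENNReal.ofReal Q * ENNReal.ofReal V *
            ∫⁻ h : Euc N, (ENNReal.ofReal (‖h‖ ^ 4) * wt N s δ ‖h‖) := by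
        rw [lintegral_add_left (hwi.const_mul _), lintegral_const_mul _ hwi,
          lintegral_const_mul _ hq4]
    _ ≤ ENNReal.ofReal (1 + ε) * semiSqOn N s Ω u +
          ENNReal.ofReal Q * ENNReal.ofReal V * ENNReal.ofReal (δ ^ 2 * N * nearC N s δ) := by
        refine add_le_add (mul_le_mul_right ?_ _) (mul_le_mul_right (near_quartic hN hs1 hδ) _)
        refine le_trans (lintegral_mono fun h => ?_) (fD_semi hΩ hum s δ)
        by_cases hh : ‖h‖ < δ
        · exact mul_le_mul_right (mol_diff_int hΩ hρ hum hu (hh.trans_le hδd)) _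
        · have : wt N s δ ‖h‖ = 0 := by
            unfold wt
            exact indicator_of_notMem (show ‖h‖ ∉ Iio δ from hh) _
          rw [this]; simp
    _ = _ := by
        rw [hQ, ENNReal.ofReal_mul (p := δ ^ 2 * N) (by positivity),
          ENNReal.ofReal_mul (p := (1 + 1 / ε) * (δ ^ 2 * N)) (by positivity),
          ENNReal.ofReal_mul (p := 1 + 1 / ε) (by positivity),
          ENNReal.ofReal_mul (p := 1 + 1 / ε) (by positivity)]
        ring

theorem lemma_L {N : ℕ} (hN : 2 ≤ N) {Ω : Set (Euc N)} (hΩ : IsOpen Ω) (hb : IsBounded Ω)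
    {ρ : Euc N → ℝ} {d B : ℝ} (hd : 0 < d) (hρ : Moll N d ρ B) {η : ℝ} (hη : 0 < η) :
    ∀ᶠ s in 𝓝[<] (1 : ℝ), ∀ u : Euc N → ℝ, Measurable u → l2sq N Ω u < ⊤ →
      ∫⁻ x in Win N Ω d, ENNReal.ofReal (‖mol' N Ω ρ u x‖ ^ 2) ≤
        ENNReal.ofReal (1 + η) * (ENNReal.ofReal (cNs N s / 2) * semiSqOn N s Ω u) +
          ENNReal.ofReal η * l2sq N Ω u := by
  set V := (volume Ω).toReal with hV
  have hV0 : 0 ≤ V := ENNReal.toReal_nonneg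
  have hVv : volume Ω = ENNReal.ofReal V := (ENNReal.ofReal_toReal hb.measure_lt_top.ne).symm
  set ε := η / 2 with hε
  have hε0 : 0 < ε := by positivity
  have hδev : ∀ᶠ δ in 𝓝[>] (0 : ℝ), ((1 + 1 / ε) * (δ ^ 2 * N) * V) * (B ^ 2 * V) < η := by
    have : Tendsto (fun δ : ℝ => ((1 + 1 / ε) * (δ ^ 2 * N) * V) * (B ^ 2 * V)) (𝓝[>] 0)
      (𝓝 (((1 + 1 / ε) * (0 ^ 2 * N) * V) * (B ^ 2 * V))) :=
      (Continuous.tendsto (by fun_prop) 0).mono_left nhdsWithin_le_nhds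
    apply this.eventually_lt_const
    simpa using hη
  obtain ⟨δ, hδ2, hδ3⟩ := (hδev.and (Ioc_mem_nhdsGT hd)).exists
  have hlt : (1 + ε) / (1 + η) < 1 := by
    rw [div_lt_one (by positivity)]; linarith
  have hk := (kappa_tendsto hN hδ3.1).eventually_const_lt hlt
  filter_upwards [hk, Ico_mem_nhdsLT (show (1 / 2 : ℝ) < 1 by norm_num)] with s hk hs u hum hu2
  have hc0 := cNs_pos N (by linarith [hs.1] : 0 < s) hs.2
  obtain ⟨hu, _, h12⟩ := l1_le_l2 hb hum hu2
  have hw := mol_C2B hρ hu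
  have hmain := near_lower hN hΩ hd hVv.le hρ hum hu hs.2 hδ3.1 hδ3.2 hε0 hw
  have hn0 : 0 ≤ nearC N s δ := by
    have := om_pos N
    have := hδ3.1
    have : 0 < 2 - 2 * s := by linarith [hs.2]
    unfold nearC
    positivity
  set κ := cNs N s / 2 * nearC N s δ with hκ
  have hκ0 : 0 < κ := lt_of_le_of_lt (by positivity) hk
  set A := ∫⁻ x in Win N Ω d, ENNReal.ofReal (‖mol' N Ω ρ u x‖ ^ 2)
  have hM : ENNReal.ofReal ((B * ∫ y in Ω, |u y|) ^ 2) ≤ ENNReal.ofReal (B ^ 2 * V) * l2sq N Ω u := by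
    rw [mul_pow, ENNReal.ofReal_mul (by positivity), ENNReal.ofReal_mul (by positivity), mul_assoc,
      ← hVv]
    exact mul_le_mul_right h12 _
  have h3 : ENNReal.ofReal κ * A ≤ ENNReal.ofReal (1 + ε) * (ENNReal.ofReal (cNs N s / 2) * semiSqOn N s Ω u)
      + ENNReal.ofReal κ * (ENNReal.ofReal η * l2sq N Ω u) := by
    rw [hκ, ENNReal.ofReal_mul (by positivity)]
    calc _ = ENNReal.ofReal (cNs N s / 2) * (ENNReal.ofReal (nearC N s δ) * A) := by ring
      _ ≤ _ := mul_le_mul_right hmain _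
      _ ≤ ENNReal.ofReal (cNs N s / 2) * (ENNReal.ofReal (1 + ε) * semiSqOn N s Ω u +
        ENNReal.ofReal (nearC N s δ) * (ENNReal.ofReal ((1 + 1 / ε) * (δ ^ 2 * N) * V)
          * (ENNReal.ofReal (B ^ 2 * V) * l2sq N Ω u))) := by gcongr
      _ = ENNReal.ofReal (1 + ε) * (ENNReal.ofReal (cNs N s / 2) * semiSqOn N s Ω u)
          + ENNReal.ofReal (cNs N s / 2) * ENNReal.ofReal (nearC N s δ) *
          (ENNReal.ofReal ((1 + 1 / ε) * (δ ^ 2 * N) * V * (B ^ 2 * V)) * l2sq N Ω u) := by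
          rw [ENNReal.ofReal_mul (q := B ^ 2 * V) (by positivity)]
          ring
      _ ≤ _ := by
          gcongr
  have h4 : ENNReal.ofReal (1 / κ) * ENNReal.ofReal κ = 1 := by
    rw [← ENNReal.ofReal_mul (by positivity), one_div_mul_cancel hκ0.ne', ENNReal.ofReal_one]
  calc A = ENNReal.ofReal (1 / κ) * (ENNReal.ofReal κ * A) := by rw [← mul_assoc, h4, one_mul]
    _ ≤ _ := mul_le_mul_right h3 _
    _ = ENNReal.ofReal (1 / κ) * ENNReal.ofReal (1 + ε) * (ENNReal.ofReal (cNs N s / 2) * semiSqOn N s Ω u)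
      + (ENNReal.ofReal (1 / κ) * ENNReal.ofReal κ) * (ENNReal.ofReal η * l2sq N Ω u) := by ring
    _ ≤ _ := by
      rw [h4, one_mul, ← ENNReal.ofReal_mul (by positivity)]
      refine add_le_add (mul_le_mul_left (ENNReal.ofReal_le_ofReal ?_) _) le_rfl
      rw [div_lt_iff₀ (by positivity)] at hk
      rw [one_div_mul_eq_div, div_le_iff₀ hκ0]
      linarith


end

section

/-- The geometric data attached to a bounded Lipschitz domain. -/
structure Geo (N : ℕ) (Ω : Set (Euc N)) (X : Euc N → Euc N) (L c0 t0 : ℝ) : Prop where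
  isOpen : IsOpen Ω
  bdd : IsBounded Ω
  ne : Ω.Nonempty
  smooth : ContDiff ℝ (⊤ : ℕ∞) X
  Lpos : 0 < L
  bd : ∀ x, ‖X x‖ ≤ L
  bd' : ∀ x, ‖fderiv ℝ X x‖ ≤ L
  lip' : ∀ x y, ‖fderiv ℝ X x - fderiv ℝ X y‖ ≤ L * ‖x - y‖
  lip : ∀ x y, ‖X x - X y‖ ≤ L * ‖x - y‖
  cpos : 0 < c0
  tpos : 0 < t0
  t1 : t0 ≤ 1
  tL : t0 * L ≤ 1 / 2
  tc : L * (L + c0) * t0 ≤ c0 / 2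
  ball : ∀ t : ℝ, 0 < t → t ≤ t0 → ∀ x ∈ closure Ω, Metric.ball (x + t • X x) (c0 * t) ⊆ Ω

theorem exists_Geo {N : ℕ} {Ω : Set (Euc N)} (hΩ : IsLipschitzDomain N Ω) :
    ∃ X L c0 t0, Geo N Ω X L c0 t0 := by
  obtain ⟨X, hX, hXc, c, hc, t0, ht0, hball⟩ := geom hΩ
  obtain ⟨B, hB, h1, h2, h3, h4⟩ := smooth_compact_bounds hX hXc
  refine ⟨X, B, c, min t0 (min 1 (min (1 / 2 / B) (c / 2 / (B * (B + c))))), hΩ.1, hΩ.2.1, hΩ.2.2.1.1, hX, hB, h1,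
    h2, h3, h4, hc, by positivity, ?_, ?_, ?_, fun t ht htt => hball t ht (htt.trans (min_le_left _ _))⟩
  · exact (min_le_right _ _).trans (min_le_left _ _)
  · rw [← le_div_iff₀ hB]
    exact (min_le_right _ _).trans ((min_le_right _ _).trans (min_le_left _ _))
  · rw [mul_comm, ← le_div_iff₀ (by positivity)]
    exact (min_le_right _ _).trans ((min_le_right _ _).trans (min_le_right _ _))

def Top (N : ℕ) (Ω : Set (Euc N)) (X : Euc N → Euc N) (ρ : Euc N → ℝ) (t : ℝ) (u : Euc N → ℝ)
    (x : Euc N) : ℝ := mol N Ω ρ u (x + t • X x)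

def Top' (N : ℕ) (Ω : Set (Euc N)) (X : Euc N → Euc N) (ρ : Euc N → ℝ) (t : ℝ) (u : Euc N → ℝ)
    (x : Euc N) : Euc N →L[ℝ] ℝ :=
  (mol' N Ω ρ u (x + t • X x)).comp (ContinuousLinearMap.id ℝ _ + t • fderiv ℝ X x)

section
variable {N : ℕ} {Ω : Set (Euc N)} {X : Euc N → Euc N} {L c0 t0 : ℝ}

theorem Geo.mem_Win (G : Geo N Ω X L c0 t0) {t : ℝ} (ht : 0 < t) (htt : t ≤ t0) {x : Euc N}
    (hx : x ∈ closure Ω) : x + t • X x ∈ Win N Ω (c0 * t / 2) := by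
  have := G.ball t ht htt x hx
  unfold Win
  rw [Set.mem_ofPred_eq]
  convert this using 2
  ring

theorem Geo.Top_C2B (G : Geo N Ω X L c0 t0) {t : ℝ} (ht : 0 < t) (htt : t ≤ t0) {δ B : ℝ}
    {ρ u : Euc N → ℝ} (hρ : Moll N δ ρ B) (hu : IntegrableOn u Ω) :
    C2B N (Top N Ω X ρ t u) (Top' N Ω X ρ t u) (B * (∫ y in Ω, |u y|) * ((1 + L) ^ 2 + L)) :=
  (mol_C2B hρ hu).comp_shift (G.smooth.differentiable (by simp)) G.Lpos.le G.bd' G.lip' G.lip ht.le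
    (htt.trans G.t1)

theorem Geo.tL_lt (G : Geo N Ω X L c0 t0) {t : ℝ} (htt : t ≤ t0) : t * L < 1 := by
  have := G.tL
  have := mul_le_mul_of_nonneg_right htt G.Lpos.le
  linarith

theorem Geo.comp_le (G : Geo N Ω X L c0 t0) {t : ℝ} (ht : 0 < t) (htt : t ≤ t0)
    {F : Euc N → ℝ≥0∞} (hF : Measurable F) :
    ∫⁻ x in Ω, F (x + t • X x) ≤ Kf N L t * ∫⁻ x in Win N Ω (c0 * t / 2), F x := by
  have hXc := G.smooth.continuous
  have hW := (isClosed_Win N Ω (c0 * t / 2)).measurableSet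
  rw [← lintegral_indicator hW]
  have := lintegral_comp_le (Φ := fun x => x + t • X x) (by fun_prop)
    (antilipschitz_shift ht.le G.lip (G.tL_lt htt)) (hF.indicator hW)
  refine le_trans ?_ this
  refine le_trans (setLIntegral_mono' G.isOpen.measurableSet fun x hx => ?_)
    (setLIntegral_le_lintegral Ω _)
  rw [indicator_of_mem (G.mem_Win ht htt (subset_closure hx))]

theorem Geo.Top'_int (G : Geo N Ω X L c0 t0) {t : ℝ} (ht : 0 < t) (htt : t ≤ t0) {B : ℝ}
    {ρ u : Euc N → ℝ} (hρ : Moll N (c0 * t / 2) ρ B) (hu : IntegrableOn u Ω) :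
    ∫⁻ x in Ω, ENNReal.ofReal (‖Top' N Ω X ρ t u x‖ ^ 2) ≤
      ENNReal.ofReal ((1 + t * L) ^ 2) * Kf N L t *
        ∫⁻ x in Win N Ω (c0 * t / 2), ENNReal.ofReal (‖mol' N Ω ρ u x‖ ^ 2) := by
  have hL := G.Lpos
  have hc := (mol_C2B hρ hu).cont'
  have hm : Measurable fun x => ENNReal.ofReal (‖mol' N Ω ρ u x‖ ^ 2) :=
    (by fun_prop : Continuous fun x => ‖mol' N Ω ρ u x‖ ^ 2).measurable.ennreal_ofReal
  have hXc := G.smooth.continuous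
  rw [mul_assoc]
  refine le_trans ?_ (mul_le_mul_right (G.comp_le ht htt hm) _)
  have hm' : Measurable fun x => ENNReal.ofReal (‖mol' N Ω ρ u (x + t • X x)‖ ^ 2) :=
    hm.comp (by fun_prop : Measurable fun x => x + t • X x)
  rw [← lintegral_const_mul _ hm']
  refine lintegral_mono fun x => ?_
  simp only
  rw [← ENNReal.ofReal_mul (by positivity), ← mul_pow]
  apply ENNReal.ofReal_le_ofReal
  gcongr
  unfold Top'
  refine (ContinuousLinearMap.opNorm_comp_le _ _).trans ?_
  rw [mul_comm]
  gcongr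
  refine (norm_add_le _ _).trans (add_le_add ContinuousLinearMap.norm_id_le ?_)
  rw [norm_smul, Real.norm_eq_abs, abs_of_pos ht]
  exact mul_le_mul_of_nonneg_left (G.bd' x) ht.le

theorem mol'_weak (hΩ : IsOpen Ω) (hb : IsBounded Ω) {d B : ℝ} (hd : 0 < d)
    {ρ u : Euc N → ℝ} (hρ : Moll N d ρ B) (hu : IntegrableOn u Ω) {g : Euc N → Euc N}
    (hg : IsWeakGradient N Ω u g) :
    ∫⁻ x in Win N Ω d, ENNReal.ofReal (‖mol' N Ω ρ u x‖ ^ 2) ≤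
      ∫⁻ x in Ω, ENNReal.ofReal (‖g x‖ ^ 2) := by
  obtain ⟨hgm, hg2, hgw⟩ := hg
  have hρc := hρ.smooth.continuous
  have hf'c : Continuous (fderiv ℝ ρ) := hρ.smooth.continuous_fderiv (by simp)
  have hgi : IntegrableOn g Ω := by
    have h1 : l2sq N Ω (fun x => ‖g x‖) < ⊤ := hg2
    exact (integrable_norm_iff hgm.aestronglyMeasurable).1 (l1_le_l2 hb hgm.norm h1).1
  have key : ∀ x ∈ Win N Ω d, ‖mol' N Ω ρ u x‖ = ‖∫ y in Ω, ρ (x - y) • g y‖ := by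
    intro x hx
    have hintg : IntegrableOn (fun y => ρ (x - y) • g y) Ω := by
      have hi : Integrable (fun y => B * ‖g y‖) (volume.restrict Ω) := hgi.norm.const_mul B
      refine hi.mono' ((by fun_prop : Continuous fun y => ρ (x - y)).aestronglyMeasurable.smul
        hgm.aestronglyMeasurable) (Eventually.of_forall fun y => ?_)
      rw [norm_smul]; exact mul_le_mul_of_nonneg_right (hρ.bd _) (norm_nonneg _)
    have hint2 : IntegrableOn (fun y => u y • fderiv ℝ ρ (x - y)) Ω := by
      have hi : Integrable (fun y => B * |u y|) (volume.restrict Ω) := hu.abs.const_mul B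
      refine hi.mono' (hu.aestronglyMeasurable.smul
        (Continuous.aestronglyMeasurable (by fun_prop))) (Eventually.of_forall fun y => ?_)
      rw [norm_smul, mul_comm]; exact mul_le_mul_of_nonneg_right (hρ.bd' _) (norm_nonneg _)
    have e : mol' N Ω ρ u x = innerSL ℝ (∫ y in Ω, ρ (x - y) • g y) := by
      have hb1 : ∀ i : Fin N, mol' N Ω ρ u x (EuclideanSpace.single i 1) =
          (∫ y in Ω, ρ (x - y) • g y) i := by
        intro i
        have hts : tsupport (fun y => ρ (x - y)) ⊆ Metric.closedBall x d := by
          apply closure_minimal _ Metric.isClosed_closedBall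
          intro y hy
          have : x - y ∈ Function.support ρ := hy
          rw [hρ.supp, mem_ball_zero_iff] at this
          rw [Metric.mem_closedBall, dist_comm, dist_eq_norm]; exact this.le
        have h := hgw (fun y => ρ (x - y)) (hρ.smooth.comp (contDiff_const.sub contDiff_id))
          ((isCompact_closedBall x d).of_isClosed_subset (isClosed_tsupport _) hts)
          (hts.trans (Subset.trans (Metric.closedBall_subset_ball (by linarith)) hx)) i
        have hder : ∀ y, fderiv ℝ (fun y => ρ (x - y)) y (EuclideanSpace.single i 1) =
            - fderiv ℝ ρ (x - y) (EuclideanSpace.single i 1) := by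
          intro y
          have h1 : HasFDerivAt ρ (fderiv ℝ ρ (x - y)) (x - y) :=
            (hρ.smooth.differentiable (by simp) _).hasFDerivAt
          have h2 : HasFDerivAt (fun y => x - y) (-ContinuousLinearMap.id ℝ (Euc N)) y :=
            (hasFDerivAt_id y).const_sub x
          have h3 : HasFDerivAt (fun y => ρ (x - y))
            ((fderiv ℝ ρ (x - y)).comp (-ContinuousLinearMap.id ℝ (Euc N))) y := h1.comp y h2
          rw [h3.fderiv]
          simp
        simp only [hder, mul_neg, integral_neg, neg_inj] at h
        unfold mol'
        have h5 := ContinuousLinearMap.integral_comp_comm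
          (EuclideanSpace.proj i : Euc N →L[ℝ] ℝ) hintg
        rw [ContinuousLinearMap.integral_apply hint2]
        simp only [EuclideanSpace.coe_proj] at h5
        rw [← h5]
        simp only [ContinuousLinearMap.smul_apply, smul_eq_mul, PiLp.smul_apply]
        rw [h]
        exact integral_congr_ae (Eventually.of_forall fun y => mul_comm _ _)
      apply ContinuousLinearMap.coe_injective
      refine (EuclideanSpace.basisFun (Fin N) ℝ).toBasis.ext fun i => ?_
      simp only [OrthonormalBasis.coe_toBasis, EuclideanSpace.basisFun_apply,
        ContinuousLinearMap.coe_coe, innerSL_apply_apply]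
      rw [hb1, EuclideanSpace.inner_single_right]
      simp
    rw [e, innerSL_apply_norm]
  calc _ ≤ ∫⁻ x in Win N Ω d, ∫⁻ y, ENNReal.ofReal (ρ (x - y)) * Ω.indicator (fun y => ENNReal.ofReal (‖g y‖ ^ 2)) y := by
        refine setLIntegral_mono' (isClosed_Win N Ω d).measurableSet fun x hx => ?_
        rw [key x hx]
        have := jensen_sq (μ := volume.restrict Ω) (fun y => ρ (x - y)) (fun y => hρ.nonneg _)
          ((by fun_prop : Continuous fun y => ρ (x - y)).measurable)
          ((setLIntegral_le_lintegral _ _).trans (hρ.lint_left x).le) g hgm.enorm.aemeasurable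
        refine this.trans ?_
        rw [← lintegral_indicator hΩ.measurableSet]
        refine lintegral_mono fun y => ?_
        by_cases hy : y ∈ Ω <;> simp [hy]
    _ ≤ ∫⁻ x, ∫⁻ y, ENNReal.ofReal (ρ (x - y)) * Ω.indicator (fun y => ENNReal.ofReal (‖g y‖ ^ 2)) y :=
        setLIntegral_le_lintegral _ _
    _ ≤ _ := (moll_int_le hρ (Measurable.indicator (by fun_prop) hΩ.measurableSet)).trans
        (lintegral_indicator hΩ.measurableSet _).le

theorem mol'_gradSq (hΩ : IsOpen Ω) (hb : IsBounded Ω) {d B : ℝ} (hd : 0 < d)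
    {ρ u : Euc N → ℝ} (hρ : Moll N d ρ B) (hu : IntegrableOn u Ω) :
    ∫⁻ x in Win N Ω d, ENNReal.ofReal (‖mol' N Ω ρ u x‖ ^ 2) ≤ gradSq N Ω u :=
  le_iInf fun _ => le_iInf fun hg => mol'_weak hΩ hb hd hρ hu hg

end


end

section

section
variable {N : ℕ} {Ω : Set (Euc N)}

theorem C2B.l2sq_lt {w : Euc N → ℝ} {w' : Euc N → (Euc N →L[ℝ] ℝ)} {M : ℝ}
    (h : C2B N w w' M) (hb : IsBounded Ω) : l2sq N Ω w < ⊤ := by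
  unfold l2sq
  calc _ ≤ ∫⁻ x in Ω, ENNReal.ofReal (M ^ 2) := by
        refine lintegral_mono fun x => ENNReal.ofReal_le_ofReal ?_
        rw [← sq_abs]; exact pow_le_pow_left₀ (abs_nonneg _) (h.bd x) 2
    _ = ENNReal.ofReal (M ^ 2) * volume Ω := setLIntegral_const _ _
    _ < ⊤ := ENNReal.mul_lt_top ENNReal.ofReal_lt_top hb.measure_lt_top

theorem C2B.weak {w : Euc N → ℝ} {w' : Euc N → (Euc N →L[ℝ] ℝ)} {M : ℝ}
    (h : C2B N w w' M) (hb : IsBounded Ω) :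
    IsWeakGradient N Ω w (fun x => (InnerProductSpace.toDual ℝ (Euc N)).symm (w' x)) := by
  have hc := h.cont
  have hc' := h.cont'
  refine ⟨Continuous.measurable (by fun_prop), ?_, ?_⟩
  · calc _ ≤ ∫⁻ x in Ω, ENNReal.ofReal (M ^ 2) := by
          refine lintegral_mono fun x => ENNReal.ofReal_le_ofReal ?_
          rw [LinearIsometryEquiv.norm_map]
          exact pow_le_pow_left₀ (norm_nonneg _) (h.bd' x) 2
      _ = ENNReal.ofReal (M ^ 2) * volume Ω := setLIntegral_const _ _
      _ < ⊤ := ENNReal.mul_lt_top ENNReal.ofReal_lt_top hb.measure_lt_top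
  · intro φ hφ hφc hsub i
    have hφcont := hφ.continuous
    have hφ'c : Continuous (fderiv ℝ φ) := hφ.continuous_fderiv (by simp)
    set e : Euc N := EuclideanSpace.single i 1 with he
    have hg : ∀ x, ((InnerProductSpace.toDual ℝ (Euc N)).symm (w' x)) i = w' x e := by
      intro x
      have := InnerProductSpace.toDual_symm_apply (x := e) (y := w' x)
      rw [← this, he, EuclideanSpace.inner_single_right]
      simp
    have hw' : ∀ x, fderiv ℝ w x = w' x := fun x => (h.hasF x).fderiv
    have hz : ∀ x, x ∉ Ω → φ x = 0 := fun x hx => image_eq_zero_of_notMem_tsupport (fun hh => hx (hsub hh))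
    have hz' : ∀ x, x ∉ Ω → fderiv ℝ φ x = 0 := fun x hx =>
      image_eq_zero_of_notMem_tsupport (fun hh => hx (hsub (tsupport_fderiv_subset ℝ hh)))
    have hz'e : HasCompactSupport fun x => fderiv ℝ φ x e := hφc.fderiv_apply ℝ e
    have key := integral_mul_fderiv_eq_neg_fderiv_mul_of_integrable (μ := (volume : Measure (Euc N)))
      (f := w) (g := φ) (v := e) ?_ ?_ ?_ (fun x _ => (h.hasF x).differentiableAt)
      (fun x _ => hφ.differentiable (by simp) x)
    · rw [setIntegral_eq_integral_of_forall_compl_eq_zero (fun x hx => by rw [hz' x hx]; simp), key,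
        setIntegral_eq_integral_of_forall_compl_eq_zero (fun x hx => by rw [hz x hx]; simp)]
      simp only [hw', hg]
    · simp only [hw']
      exact Continuous.integrable_of_hasCompactSupport (by fun_prop) hφc.mul_left
    · exact Continuous.integrable_of_hasCompactSupport (by fun_prop) hz'e.mul_left
    · exact Continuous.integrable_of_hasCompactSupport (by fun_prop) hφc.mul_left

theorem C2B.memH1 {w : Euc N → ℝ} {w' : Euc N → (Euc N →L[ℝ] ℝ)} {M : ℝ}
    (h : C2B N w w' M) (hb : IsBounded Ω) : memH1 N Ω w :=
  ⟨h.cont.measurable, h.l2sq_lt hb, _, h.weak hb⟩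

theorem C2B.gradSq_le {w : Euc N → ℝ} {w' : Euc N → (Euc N →L[ℝ] ℝ)} {M : ℝ}
    (h : C2B N w w' M) (hb : IsBounded Ω) :
    gradSq N Ω w ≤ ∫⁻ x in Ω, ENNReal.ofReal (‖w' x‖ ^ 2) := by
  refine (iInf₂_le _ (h.weak hb)).trans ?_
  simp

theorem l2sq_add_le {u v : Euc N → ℝ} (hu : Measurable u) {ε : ℝ} (hε : 0 < ε) :
    l2sq N Ω (fun x => u x + v x) ≤ ENNReal.ofReal (1 + ε) * l2sq N Ω u +
      ENNReal.ofReal (1 + 1 / ε) * l2sq N Ω v := by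
  unfold l2sq
  have h1 : Measurable fun x => ENNReal.ofReal ((u x) ^ 2) := by fun_prop
  rw [← lintegral_const_mul _ h1, ← lintegral_const_mul' _ _ ENNReal.ofReal_ne_top,
    ← lintegral_add_left (h1.const_mul _)]
  refine lintegral_mono fun x => ?_
  simp only
  rw [← ENNReal.ofReal_mul (by positivity), ← ENNReal.ofReal_mul (by positivity),
    ← ENNReal.ofReal_add (by positivity) (by positivity)]
  exact ENNReal.ofReal_le_ofReal (sq_add_le _ _ hε)

theorem l2sq_congr {u v : Euc N → ℝ} (h : ∀ x, (u x) ^ 2 = (v x) ^ 2) : l2sq N Ω u = l2sq N Ω v := by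
  unfold l2sq; simp only [h]

/-- The mean over `Ω`. -/
def mean (N : ℕ) (Ω : Set (Euc N)) (u : Euc N → ℝ) : ℝ := (volume Ω).toReal⁻¹ * ∫ x in Ω, u x

theorem vol_pos (hΩ : IsOpen Ω) (hne : Ω.Nonempty) (hb : IsBounded Ω) : 0 < (volume Ω).toReal :=
  ENNReal.toReal_pos (hΩ.measure_pos volume hne).ne' hb.measure_lt_top.ne

theorem mean_le (hΩ : IsOpen Ω) (hne : Ω.Nonempty) (hb : IsBounded Ω) {u : Euc N → ℝ} {M : ℝ}
    (hu : ∀ x, |u x| ≤ M) : |mean N Ω u| ≤ M := by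
  have hv := vol_pos hΩ hne hb
  unfold mean
  rw [abs_mul, abs_of_pos (by positivity), inv_mul_eq_div, div_le_iff₀ hv]
  exact norm_setIntegral_le_of_norm_le_const (f := u) hb.measure_lt_top (fun x _ => hu x)

theorem mean_sq (hΩ : IsOpen Ω) (hne : Ω.Nonempty) (hb : IsBounded Ω) {u : Euc N → ℝ}
    (hu : Measurable u) (h2 : l2sq N Ω u < ⊤) :
    l2sq N Ω (fun _ => mean N Ω u) ≤ l2sq N Ω u := by
  have hv := vol_pos hΩ hne hb
  set V := (volume Ω).toReal with hV
  have hVv : volume Ω = ENNReal.ofReal V := (ENNReal.ofReal_toReal hb.measure_lt_top.ne).symm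
  obtain ⟨_, _, h⟩ := l1_le_l2 hb hu h2
  have h3 : ENNReal.ofReal (mean N Ω u ^ 2) ≤ ENNReal.ofReal (V⁻¹ ^ 2) * (volume Ω * l2sq N Ω u) := by
    refine le_trans ?_ (mul_le_mul_right h _)
    rw [← ENNReal.ofReal_mul (by positivity), ← mul_pow]
    apply ENNReal.ofReal_le_ofReal
    rw [← sq_abs, mean, abs_mul, abs_of_pos (by positivity)]
    gcongr
    exact abs_integral_le_integral_abs
  calc l2sq N Ω (fun _ => mean N Ω u) = ENNReal.ofReal (mean N Ω u ^ 2) * volume Ω := by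
        unfold l2sq; exact setLIntegral_const _ _
    _ ≤ _ := mul_le_mul_left h3 _
    _ = ENNReal.ofReal (V⁻¹ ^ 2 * V * V) * l2sq N Ω u := by
        rw [hVv, ENNReal.ofReal_mul (by positivity), ENNReal.ofReal_mul (by positivity)]; ring
    _ = _ := by
        rw [show V⁻¹ ^ 2 * V * V = 1 by field_simp]; simp

theorem semiSqOn_le (s : ℝ) (u : Euc N → ℝ) : semiSqOn N s Ω u ≤ semiSq N s Ω u :=
  lintegral_mono_set fun _ hq => Or.inl (subset_closure hq.1)

end


end

section

section
variable {N : ℕ} {Ω : Set (Euc N)} {X : Euc N → Euc N} {L c0 t0 : ℝ}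

theorem l2sq_eq (u : Euc N → ℝ) : l2sq N Ω u = (eLpNorm u 2 (volume.restrict Ω)) ^ 2 := by
  rw [eLpNorm_eq_lintegral_rpow_enorm_toReal (by norm_num) (by norm_num), ← ENNReal.rpow_natCast,
    ← ENNReal.rpow_mul]
  unfold l2sq
  simp only [ENNReal.toReal_ofNat, Nat.cast_ofNat, one_div]
  rw [inv_mul_cancel₀ (by norm_num), ENNReal.rpow_one]
  refine lintegral_congr fun x => ?_
  rw [← sq_abs, ENNReal.ofReal_pow (abs_nonneg _), ← Real.norm_eq_abs, ofReal_norm]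
  exact (ENNReal.rpow_natCast _ 2).symm

theorem mol_sq_le' {δ B : ℝ} {ρ u : Euc N → ℝ} (hρ : Moll N δ ρ B) (hu : Measurable u) (z : Euc N) :
    ENNReal.ofReal ((mol N Ω ρ u z) ^ 2) ≤
      ∫⁻ y in Ω, ENNReal.ofReal (ρ (z - y)) * ENNReal.ofReal ((u y) ^ 2) := by
  have hρc := hρ.smooth.continuous
  have := jensen_sq (μ := volume.restrict Ω) (fun y => ρ (z - y)) (fun y => hρ.nonneg _)
    ((by fun_prop : Continuous fun y => ρ (z - y)).measurable)
    ((setLIntegral_le_lintegral _ _).trans (hρ.lint_left z).le) u hu.enorm.aemeasurable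
  simpa [Real.norm_eq_abs, sq_abs, mol] using this

theorem Geo.Top_l2 (G : Geo N Ω X L c0 t0) {t : ℝ} (ht : 0 < t) (htt : t ≤ t0) {B : ℝ}
    {ρ u : Euc N → ℝ} (hρ : Moll N (c0 * t / 2) ρ B) (hum : Measurable u) (hu : IntegrableOn u Ω) :
    l2sq N Ω (Top N Ω X ρ t u) ≤ Kf N L t * l2sq N Ω u := by
  have hc := (mol_C2B hρ hu).cont
  have hm : Measurable fun x => ENNReal.ofReal ((mol N Ω ρ u x) ^ 2) :=
    (by fun_prop : Continuous fun x => (mol N Ω ρ u x) ^ 2).measurable.ennreal_ofReal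
  refine (G.comp_le ht htt hm).trans (mul_le_mul_right ?_ _)
  refine (setLIntegral_le_lintegral _ _).trans ?_
  calc _ ≤ ∫⁻ x, ∫⁻ y, ENNReal.ofReal (ρ (x - y)) * Ω.indicator (fun y => ENNReal.ofReal ((u y) ^ 2)) y := by
        refine lintegral_mono fun x => (mol_sq_le' hρ hum x).trans ?_
        rw [← lintegral_indicator G.isOpen.measurableSet]
        refine lintegral_mono fun y => ?_
        by_cases hy : y ∈ Ω <;> simp [hy]
    _ ≤ _ := (moll_int_le hρ (Measurable.indicator (by fun_prop) G.isOpen.measurableSet)).trans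
        (lintegral_indicator G.isOpen.measurableSet _).le

theorem Geo.int_rho (G : Geo N Ω X L c0 t0) {t : ℝ} (ht : 0 < t) (htt : t ≤ t0) {B : ℝ}
    {ρ : Euc N → ℝ} (hρ : Moll N (c0 * t / 2) ρ B) {x : Euc N} (hx : x ∈ closure Ω) :
    ∫ y in Ω, ρ (x + t • X x - y) = 1 := by
  have hρc := hρ.smooth.continuous
  have hW := G.mem_Win ht htt hx
  have hct : 0 < c0 * t := mul_pos G.cpos ht
  rw [setIntegral_eq_integral_of_forall_compl_eq_zero, integral_eq_lintegral_of_nonneg_ae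
    (Eventually.of_forall fun y => hρ.nonneg _) (Continuous.aestronglyMeasurable (by fun_prop)),
    hρ.lint_left]
  · simp
  · intro y hy
    by_contra hne
    have hm : x + t • X x - y ∈ Metric.ball (0 : Euc N) (c0 * t / 2) := by
      rw [← hρ.supp]; exact hne
    rw [mem_ball_zero_iff] at hm
    exact hy (hW (by rw [Metric.mem_ball, dist_comm, dist_eq_norm]; linarith))

theorem Geo.Top_sub (G : Geo N Ω X L c0 t0) {t : ℝ} (ht : 0 < t) (htt : t ≤ t0) {B : ℝ}
    {ρ u : Euc N → ℝ} (hρ : Moll N (c0 * t / 2) ρ B) (hum : Measurable u) (hu : IntegrableOn u Ω)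
    {x : Euc N} (hx : x ∈ closure Ω) :
    ENNReal.ofReal ((Top N Ω X ρ t u x - u x) ^ 2) ≤
      ∫⁻ y in Ω, ENNReal.ofReal (ρ (x + t • X x - y)) * ENNReal.ofReal ((u y - u x) ^ 2) := by
  have hρc := hρ.smooth.continuous
  have hfin : IsFiniteMeasure (volume.restrict Ω) := ⟨by simpa using G.bdd.measure_lt_top⟩
  have hci : IntegrableOn (fun _ : Euc N => u x) Ω := integrable_const _
  have e : Top N Ω X ρ t u x - u x = mol N Ω ρ (fun y => u y - u x) (x + t • X x) := by
    have h1 := mol_integrable hρ hu (x + t • X x)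
    have h2 := mol_integrable hρ hci (x + t • X x)
    unfold Top mol
    simp only [mul_sub]
    rw [integral_sub h1 h2, integral_mul_const, G.int_rho ht htt hρ hx, one_mul]
  rw [e]
  exact mol_sq_le' hρ (by fun_prop) _

theorem Geo.Top_sub_Gf (G : Geo N Ω X L c0 t0) {t : ℝ} (ht : 0 < t) (htt : t ≤ t0) {B : ℝ}
    {ρ u : Euc N → ℝ} (hρ : Moll N (c0 * t / 2) ρ B) (hum : Measurable u) (hu : IntegrableOn u Ω) :
    l2sq N Ω (fun x => Top N Ω X ρ t u x - u x) ≤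
      ENNReal.ofReal (1 / (volume (Metric.closedBall (0 : Euc N) (c0 * t / 2 / 2))).toReal) *
        Gf Ω X u t (c0 / 2) := by
  unfold l2sq Gf
  have hXc := G.smooth.continuous
  have hmS : Measurable fun q : Euc N × Euc N => (Sset Ω X t (c0 / 2)).indicator (Dd u) q :=
    (measurable_Dd hum).indicator (measurableSet_Sset G.isOpen hXc t _)
  rw [← lintegral_const_mul _ hmS.lintegral_prod_right']
  refine le_trans (setLIntegral_mono' G.isOpen.measurableSet fun x hx => ?_)
    (setLIntegral_le_lintegral Ω _)
  refine (G.Top_sub ht htt hρ hum hu (subset_closure hx)).trans ?_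
  have hmx : Measurable fun y => (Sset Ω X t (c0 / 2)).indicator (Dd u) (x, y) :=
    hmS.comp measurable_prodMk_left
  rw [← lintegral_const_mul _ hmx]
  refine (setLIntegral_le_lintegral Ω _).trans (lintegral_mono fun y => ?_)
  simp only
  by_cases hr : ρ (x + t • X x - y) = 0
  · rw [hr]; simp
  · have hm : x + t • X x - y ∈ Metric.ball (0 : Euc N) (c0 * t / 2) := by
      rw [← hρ.supp]; exact hr
    rw [mem_ball_zero_iff, ← norm_neg] at hm
    have hS : (x, y) ∈ Sset Ω X t (c0 / 2) := by
      refine ⟨hx, ?_⟩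
      simp only
      calc _ = ‖-(x + t • X x - y)‖ := by congr 1; abel
        _ < _ := by linarith
    rw [indicator_of_mem hS, Dd]
    simp only
    rw [← neg_sub (u x), neg_sq]
    exact mul_le_mul_left (ENNReal.ofReal_le_ofReal (hρ.sup _)) _

theorem Geo.Hs_close (hN : 2 ≤ N) (G : Geo N Ω X L c0 t0) : ∃ C : ℝ, 0 < C ∧
    ∀ᶠ s in 𝓝[<] (1 : ℝ), ∀ t, 0 < t → t ≤ t0 → ∀ (ρ : Euc N → ℝ) (B : ℝ) (u : Euc N → ℝ),
      Moll N (c0 * t / 2) ρ B → Measurable u → IntegrableOn u Ω →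
      l2sq N Ω (fun x => Top N Ω X ρ t u x - u x) ≤
        ENNReal.ofReal (C * t) * (ENNReal.ofReal (cNs N s / 2) * semiSqOn N s Ω u) := by
  have hom := om_pos N
  have hc0 := G.cpos
  have hLp := G.Lpos
  set v := (volume (Metric.ball (0 : Euc N) 1)).toReal with hv
  have hv0 : 0 < v := ENNReal.toReal_pos (Metric.measure_ball_pos volume _ one_pos).ne'
    measure_ball_lt_top.ne
  set K := (max 1 (L + c0)) ^ ((N : ℝ) + 2) with hK
  have hK0 : 0 < K := by positivity
  refine ⟨8 * om N * K / ((c0 / 4) ^ N * v), by positivity, ?_⟩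
  have hlt : 1 / om N < 4 / om N := by gcongr; norm_num
  filter_upwards [(cNs_div_tendsto hN).eventually_const_lt hlt,
    Ico_mem_nhdsLT (show (1 / 2 : ℝ) < 1 by norm_num)] with s hs1 hs t ht htt ρ B u hρ hum hu
  have h1s : 0 < 1 - s := by linarith [hs.2]
  have hcp := cNs_pos N (by linarith [hs.1] : 0 < s) hs.2
  have hq : 1 - s ≤ om N * cNs N s := by
    rw [div_lt_div_iff₀ hom h1s] at hs1; linarith
  have ht1 : t ≤ 1 := htt.trans G.t1
  have hL0 := G.tc
  have hGf := Gf_bound (c := c0 / 2) (s := s) (M := L) G.isOpen G.smooth.continuous G.Lpos.le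
    (by positivity) G.bd G.lip G.ball hum ht htt
    (by have : L * (L + c0) * t ≤ L * (L + c0) * t0 := by gcongr
        linarith) hs.1 hs.2
  refine (G.Top_sub_Gf ht htt hρ hum hu).trans ((mul_le_mul_right hGf _).trans ?_)
  rw [← mul_assoc, ← mul_assoc, ← ENNReal.ofReal_mul (by positivity), ← ENNReal.ofReal_mul (by positivity)]
  refine mul_le_mul_left (ENNReal.ofReal_le_ofReal ?_) _
  have hvol : (volume (Metric.closedBall (0 : Euc N) (c0 * t / 2 / 2))).toReal = (c0 / 4) ^ N * v * t ^ N := by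
    rw [Measure.addHaar_closedBall _ _ (by positivity), ENNReal.toReal_mul,
      ENNReal.toReal_ofReal (by positivity), ← hv, finrank_euclideanSpace_fin,
      show c0 * t / 2 / 2 = c0 / 4 * t by ring, mul_pow]
    ring
  have hpow : ((L + c0) * t) ^ ((N : ℝ) + 2 * s) ≤ K * (t ^ N * t) := by
    rw [Real.mul_rpow (by positivity) ht.le]
    have e1 : (L + c0) ^ ((N : ℝ) + 2 * s) ≤ K := by
      calc _ ≤ (max 1 (L + c0)) ^ ((N : ℝ) + 2 * s) :=
            Real.rpow_le_rpow (by positivity) (le_max_right _ _) (by have := hs.1; positivity)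
        _ ≤ _ := Real.rpow_le_rpow_of_exponent_le (le_max_left _ _) (by linarith [hs.2])
    have e2 : t ^ ((N : ℝ) + 2 * s) ≤ t ^ N * t := by
      rw [Real.rpow_add ht, Real.rpow_natCast]
      gcongr
      calc t ^ (2 * s) ≤ t ^ (1 : ℝ) := Real.rpow_le_rpow_of_exponent_ge ht ht1 (by linarith [hs.1])
        _ = t := Real.rpow_one t
    gcongr
  rw [hvol]
  calc _ ≤ 1 / ((c0 / 4) ^ N * v * t ^ N) * (4 * (om N * cNs N s) * (K * (t ^ N * t))) := by gcongr
    _ = _ := by field_simp; ring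

theorem Top_add_sub {δ B : ℝ} {ρ u g : Euc N → ℝ} {t : ℝ} (hρ : Moll N δ ρ B)
    (hu : IntegrableOn u Ω) (hg : IntegrableOn g Ω) (x : Euc N) :
    Top N Ω X ρ t (fun y => u y - g y) x = Top N Ω X ρ t u x - Top N Ω X ρ t g x := by
  unfold Top mol
  simp only [mul_sub]
  exact integral_sub (mol_integrable hρ hu _) (mol_integrable hρ hg _)

theorem Geo.L2_close_cont (G : Geo N Ω X L c0 t0) {g : Euc N → ℝ} (hg : Continuous g)
    (hgc : HasCompactSupport g) (hgi : IntegrableOn g Ω) {η : ℝ} (hη : 0 < η) :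
    ∀ᶠ t in 𝓝[>] (0 : ℝ), ∀ (ρ : Euc N → ℝ) (B : ℝ), Moll N (c0 * t / 2) ρ B →
      l2sq N Ω (fun x => Top N Ω X ρ t g x - g x) ≤ ENNReal.ofReal η := by
  have hc0 := G.cpos
  have hv := vol_pos G.isOpen G.ne G.bdd
  set V := (volume Ω).toReal with hV
  have hVv : volume Ω = ENNReal.ofReal V := (ENNReal.ofReal_toReal G.bdd.measure_lt_top.ne).symm
  have huc := hgc.uniformContinuous_of_continuous hg
  rw [Metric.uniformContinuous_iff] at huc
  obtain ⟨r, hr, H⟩ := huc (Real.sqrt (η / V)) (Real.sqrt_pos.2 (by positivity))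
  have hev : ∀ᶠ t in 𝓝[>] (0 : ℝ), t * L + c0 * t / 2 < r := by
    have : Tendsto (fun t : ℝ => t * L + c0 * t / 2) (𝓝[>] 0) (𝓝 (0 * L + c0 * 0 / 2)) :=
      (Continuous.tendsto (by fun_prop) 0).mono_left nhdsWithin_le_nhds
    exact this.eventually_lt_const (by simpa using hr)
  filter_upwards [hev, Ioc_mem_nhdsGT G.tpos] with t htr ht ρ B hρ
  unfold l2sq
  calc _ ≤ ∫⁻ x in Ω, ENNReal.ofReal (η / V) := by
        refine setLIntegral_mono' G.isOpen.measurableSet fun x hx => ?_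
        refine (G.Top_sub ht.1 ht.2 hρ hg.measurable hgi (subset_closure hx)).trans ?_
        calc _ ≤ ∫⁻ y, ENNReal.ofReal (ρ (x + t • X x - y)) * ENNReal.ofReal (η / V) := by
              refine (setLIntegral_le_lintegral _ _).trans (lintegral_mono fun y => ?_)
              simp only
              by_cases hr : ρ (x + t • X x - y) = 0
              · rw [hr]; simp
              · have hm : x + t • X x - y ∈ Metric.ball (0 : Euc N) (c0 * t / 2) := by
                  rw [← hρ.supp]; exact hr
                rw [mem_ball_zero_iff, ← norm_neg] at hm
                refine mul_le_mul_right (α := ℝ≥0∞) (ENNReal.ofReal_le_ofReal ?_) _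
                have hd : dist y x < r := by
                  rw [dist_eq_norm]
                  calc ‖y - x‖ = ‖-(x + t • X x - y) + t • X x‖ := by congr 1; abel
                    _ ≤ _ := norm_add_le _ _
                    _ ≤ c0 * t / 2 + t * L := by
                      refine add_le_add hm.le ?_
                      rw [norm_smul, Real.norm_eq_abs, abs_of_pos ht.1]
                      exact mul_le_mul_of_nonneg_left (G.bd x) ht.1.le
                    _ < r := by linarith
                have := (H hd).le
                rw [Real.dist_eq] at this
                rw [← sq_abs]
                calc _ ≤ (Real.sqrt (η / V)) ^ 2 := by gcongr
                  _ = _ := Real.sq_sqrt (by positivity)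
          _ = _ := by
              rw [lintegral_mul_const' _ _ ENNReal.ofReal_ne_top, hρ.lint_left, one_mul]
    _ = ENNReal.ofReal (η / V) * volume Ω := setLIntegral_const _ _
    _ = _ := by
      rw [hVv, ← ENNReal.ofReal_mul (by positivity), div_mul_cancel₀ _ hv.ne']

theorem Geo.L2_close (G : Geo N Ω X L c0 t0) {u : Euc N → ℝ} (hu : Measurable u)
    (hu2 : l2sq N Ω u < ⊤) {η : ℝ} (hη : 0 < η) :
    ∀ᶠ t in 𝓝[>] (0 : ℝ), ∀ (ρ : Euc N → ℝ) (B : ℝ), Moll N (c0 * t / 2) ρ B →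
      l2sq N Ω (fun x => Top N Ω X ρ t u x - u x) ≤ ENNReal.ofReal η := by
  obtain ⟨hui, huM, _⟩ := l1_le_l2 G.bdd hu hu2
  set ε := Real.sqrt (η / 16) with hε
  have hε0 : 0 < ε := Real.sqrt_pos.2 (by positivity)
  obtain ⟨g, hgc, hgd, hg, hgM⟩ := huM.exists_hasCompactSupport_eLpNorm_sub_le (by norm_num)
    (ε := ENNReal.ofReal ε) (by simpa using hε0)
  have hgi : IntegrableOn g Ω := hg.integrable_of_hasCompactSupport hgc |>.integrableOn
  have hgl : l2sq N Ω (fun x => u x - g x) ≤ ENNReal.ofReal (η / 16) := by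
    rw [l2sq_eq, ← Real.sq_sqrt (show 0 ≤ η / 16 by positivity), ENNReal.ofReal_pow hε0.le]
    exact pow_le_pow_left₀ (zero_le) hgd 2
  have hK := (Kf_tendsto N L).eventually_lt_const (show (1 : ℝ≥0∞) < 2 by norm_num)
  filter_upwards [G.L2_close_cont hg hgc hgi (show 0 < η / 16 by positivity),
    hK, Ioc_mem_nhdsGT G.tpos] with t h1 hK ht ρ B hρ
  have h1 := h1 ρ B hρ
  have hdm : Measurable fun x => u x - g x := hu.sub hg.measurable
  have h2 := G.Top_l2 ht.1 ht.2 hρ hdm (hui.sub hgi)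
  have hTc : Measurable (Top N Ω X ρ t fun x => u x - g x) :=
    (G.Top_C2B ht.1 ht.2 hρ (hui.sub hgi)).cont.measurable
  have hTg : Measurable (Top N Ω X ρ t g) := (G.Top_C2B ht.1 ht.2 hρ hgi).cont.measurable
  have e : (fun x => Top N Ω X ρ t u x - u x) = fun x => Top N Ω X ρ t (fun y => u y - g y) x +
      ((Top N Ω X ρ t g x - g x) + -(u x - g x)) := by
    funext x; rw [Top_add_sub hρ hui hgi]; ring
  have hneg : l2sq N Ω (fun x => -(u x - g x)) = l2sq N Ω (fun x => u x - g x) :=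
    l2sq_congr fun x => by ring
  rw [e]
  refine (l2sq_add_le hTc one_pos).trans ?_
  refine (add_le_add le_rfl (mul_le_mul_right (l2sq_add_le (hTg.sub hg.measurable) one_pos) _)).trans ?_
  rw [hneg]
  calc _ ≤ ENNReal.ofReal (1 + 1) * (2 * ENNReal.ofReal (η / 16)) + ENNReal.ofReal (1 + 1 / 1) *
      (ENNReal.ofReal (1 + 1) * ENNReal.ofReal (η / 16) + ENNReal.ofReal (1 + 1 / 1) * ENNReal.ofReal (η / 16)) := by
        refine add_le_add (mul_le_mul_right ?_ _) (mul_le_mul_right (add_le_add (mul_le_mul_right h1 _)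
          (mul_le_mul_right hgl _)) _)
        exact h2.trans (mul_le_mul' hK.le hgl)
    _ ≤ ENNReal.ofReal η := by
        rw [show (2 : ℝ≥0∞) = ENNReal.ofReal 2 by simp]
        rw [← ENNReal.ofReal_mul (by norm_num), ← ENNReal.ofReal_mul (by norm_num),
          ← ENNReal.ofReal_mul (by norm_num), ← ENNReal.ofReal_mul (by norm_num),
          ← ENNReal.ofReal_add (by positivity) (by positivity), ← ENNReal.ofReal_mul (by norm_num),
          ← ENNReal.ofReal_add (by positivity) (by positivity)]
        apply ENNReal.ofReal_le_ofReal
        linarith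

end


end

section

section
variable {N : ℕ} {Ω : Set (Euc N)} {X : Euc N → Euc N} {L c0 t0 : ℝ}

/-- The regularization, corrected to have zero mean. -/
def Pop (N : ℕ) (Ω : Set (Euc N)) (X : Euc N → Euc N) (ρ : Euc N → ℝ) (t : ℝ) (u : Euc N → ℝ)
    (x : Euc N) : ℝ := Top N Ω X ρ t u x - mean N Ω (Top N Ω X ρ t u)

theorem Geo.Pop_C2B (G : Geo N Ω X L c0 t0) {t : ℝ} (ht : 0 < t) (htt : t ≤ t0) {δ B : ℝ}
    {ρ u : Euc N → ℝ} (hρ : Moll N δ ρ B) (hu : IntegrableOn u Ω) :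
    C2B N (Pop N Ω X ρ t u) (Top' N Ω X ρ t u)
      (2 * (B * (∫ y in Ω, |u y|) * ((1 + L) ^ 2 + L))) :=
  (G.Top_C2B ht htt hρ hu).sub_const
    (mean_le G.isOpen G.ne G.bdd (G.Top_C2B ht htt hρ hu).bd)

theorem C2B.intOn {w : Euc N → ℝ} {w' : Euc N → (Euc N →L[ℝ] ℝ)} {M : ℝ}
    (h : C2B N w w' M) (hb : IsBounded Ω) : IntegrableOn w Ω :=
  (l1_le_l2 hb h.cont.measurable (h.l2sq_lt hb)).1

theorem Geo.Pop_mean (G : Geo N Ω X L c0 t0) {t : ℝ} (ht : 0 < t) (htt : t ≤ t0) {δ B : ℝ}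
    {ρ u : Euc N → ℝ} (hρ : Moll N δ ρ B) (hu : IntegrableOn u Ω) :
    ∫ x in Ω, Pop N Ω X ρ t u x = 0 := by
  have hfin : IsFiniteMeasure (volume.restrict Ω) := ⟨by simpa using G.bdd.measure_lt_top⟩
  have hv := vol_pos G.isOpen G.ne G.bdd
  unfold Pop
  rw [integral_sub ((G.Top_C2B ht htt hρ hu).intOn G.bdd) (integrable_const _), integral_const,
    mean, smul_eq_mul, measureReal_restrict_apply_univ, measureReal_def, ← mul_assoc,
    mul_inv_cancel₀ hv.ne', one_mul, sub_self]

theorem Geo.Pop_close (G : Geo N Ω X L c0 t0) {t : ℝ} (ht : 0 < t) (htt : t ≤ t0) {δ B : ℝ}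
    {ρ u : Euc N → ℝ} (hρ : Moll N δ ρ B) (hum : Measurable u) (hu2 : l2sq N Ω u < ⊤)
    (hu0 : ∫ x in Ω, u x = 0) :
    l2sq N Ω (fun x => Pop N Ω X ρ t u x - u x) ≤
      4 * l2sq N Ω (fun x => Top N Ω X ρ t u x - u x) := by
  have hu := (l1_le_l2 G.bdd hum hu2).1
  have hT := G.Top_C2B ht htt hρ hu
  have hTm := hT.cont.measurable
  have hm : mean N Ω (fun x => Top N Ω X ρ t u x - u x) = mean N Ω (Top N Ω X ρ t u) := by
    unfold mean
    rw [integral_sub (hT.intOn G.bdd) hu, hu0, sub_zero]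
  have hl : l2sq N Ω (fun x => Top N Ω X ρ t u x - u x) < ⊤ := by
    have h := l2sq_add_le (Ω := Ω) (v := fun x => - u x) hTm one_pos
    have hn : l2sq N Ω (fun x => - u x) = l2sq N Ω u := l2sq_congr fun x => by ring
    rw [hn] at h
    refine lt_of_le_of_lt h (ENNReal.add_lt_top.2 ⟨?_, ?_⟩)
    · exact ENNReal.mul_lt_top ENNReal.ofReal_lt_top (hT.l2sq_lt G.bdd)
    · exact ENNReal.mul_lt_top ENNReal.ofReal_lt_top hu2
  have h1 := mean_sq G.isOpen G.ne G.bdd (hTm.sub hum) hl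
  have h2 := l2sq_add_le (Ω := Ω) (v := fun _ => - mean N Ω (Top N Ω X ρ t u)) (hTm.sub hum) one_pos
  have e : (fun x => Pop N Ω X ρ t u x - u x) =
      fun x => (Top N Ω X ρ t u - u) x + - mean N Ω (Top N Ω X ρ t u) := by
    funext x; simp only [Pop, Pi.sub_apply]; ring
  have e2 : l2sq N Ω (fun _ => - mean N Ω (Top N Ω X ρ t u)) =
      l2sq N Ω (fun _ => mean N Ω (fun x => Top N Ω X ρ t u x - u x)) :=
    l2sq_congr fun x => by rw [hm]; ring
  rw [e]
  refine h2.trans ?_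
  rw [e2]
  calc _ ≤ ENNReal.ofReal (1 + 1) * l2sq N Ω (fun x => Top N Ω X ρ t u x - u x) +
      ENNReal.ofReal (1 + 1 / 1) * l2sq N Ω (fun x => Top N Ω X ρ t u x - u x) :=
        add_le_add le_rfl (mul_le_mul_right h1 _)
    _ = _ := by
      rw [← add_mul, ← ENNReal.ofReal_add (by norm_num) (by norm_num)]
      norm_num

theorem Top_add {δ B : ℝ} {ρ u g : Euc N → ℝ} {t : ℝ} (hρ : Moll N δ ρ B)
    (hu : IntegrableOn u Ω) (hg : IntegrableOn g Ω) :
    Top N Ω X ρ t (u + g) = Top N Ω X ρ t u + Top N Ω X ρ t g := by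
  funext x
  simp only [Top, mol, Pi.add_apply, mul_add]
  exact integral_add (mol_integrable hρ hu _) (mol_integrable hρ hg _)

theorem Top_smul {ρ u : Euc N → ℝ} {t : ℝ} (c : ℝ) :
    Top N Ω X ρ t (c • u) = c • Top N Ω X ρ t u := by
  funext x
  simp only [Top, mol, Pi.smul_apply, smul_eq_mul]
  rw [← integral_const_mul]
  exact integral_congr_ae (Eventually.of_forall fun y => by ring)

/-- `Top` as a linear map. -/
def TopL (X : Euc N → Euc N) {A : Submodule ℝ (Euc N → ℝ)} (hA : ∀ u ∈ A, IntegrableOn u Ω) {δ B : ℝ}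
    {ρ : Euc N → ℝ} (hρ : Moll N δ ρ B) (t : ℝ) : A →ₗ[ℝ] (Euc N → ℝ) where
  toFun u := Top N Ω X ρ t u
  map_add' u v := by
    rw [Submodule.coe_add]; exact Top_add hρ (hA u u.2) (hA v v.2)
  map_smul' c u := by
    rw [Submodule.coe_smul]; exact Top_smul c

/-- `Pop` as a linear map. -/
def PopL (G : Geo N Ω X L c0 t0) {t : ℝ} (ht : 0 < t) (htt : t ≤ t0)
    {A : Submodule ℝ (Euc N → ℝ)} (hA : ∀ u ∈ A, IntegrableOn u Ω) {δ B : ℝ}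
    {ρ : Euc N → ℝ} (hρ : Moll N δ ρ B) : A →ₗ[ℝ] (Euc N → ℝ) where
  toFun u := Pop N Ω X ρ t u
  map_add' u v := by
    funext x
    have h1 := Top_add (X := X) (t := t) hρ (hA u u.2) (hA v v.2)
    have i1 := (G.Top_C2B ht htt hρ (hA u u.2)).intOn G.bdd
    have i2 := (G.Top_C2B ht htt hρ (hA v v.2)).intOn G.bdd
    rw [Submodule.coe_add]
    simp only [Pop, Pi.add_apply, h1, mean]
    rw [integral_add i1 i2]
    ring
  map_smul' c u := by
    funext x
    have h1 := Top_smul (N := N) (Ω := Ω) (X := X) (t := t) (ρ := ρ) (u := u) c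
    rw [Submodule.coe_smul]
    simp only [Pop, Pi.smul_apply, h1, mean, smul_eq_mul, RingHom.id_apply]
    rw [integral_const_mul]
    ring

theorem l2sq_zero {u : Euc N → ℝ} (hu : Measurable u) :
    l2sq N Ω u = 0 ↔ u =ᵐ[volume.restrict Ω] 0 := by
  unfold l2sq
  rw [lintegral_eq_zero_iff (by fun_prop)]
  constructor
  · intro h
    filter_upwards [h] with x hx
    simp only [Pi.zero_apply, ENNReal.ofReal_eq_zero] at hx ⊢
    nlinarith [sq_nonneg (u x), pow_eq_zero_iff (two_ne_zero) |>.1 (le_antisymm hx (sq_nonneg (u x)))]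
  · intro h
    filter_upwards [h] with x hx
    simp only [Pi.zero_apply] at hx ⊢
    rw [hx]; simp

theorem transfer {A : Submodule ℝ (Euc N → ℝ)} (P : A →ₗ[ℝ] (Euc N → ℝ)) {n : ℕ}
    (hn : Module.finrank ℝ A = n) {ε k : ℝ} (hε : 0 < ε) (hε1 : ε < 1) (hk : 0 ≤ k)
    (F : (Euc N → ℝ) → ℝ≥0∞) (hl2 : ∀ u : A, l2sq N Ω (u : Euc N → ℝ) < ⊤)
    (hz : ∀ u : A, l2sq N Ω (u : Euc N → ℝ) = 0 → u = 0)
    (hPm : ∀ u : A, Measurable (P u))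
    (hcl : ∀ u : A, l2sq N Ω (fun x => P u x - (u : Euc N → ℝ) x) ≤
      ENNReal.ofReal (ε ^ 2 / (1 + ε)) * l2sq N Ω (u : Euc N → ℝ))
    (hF : ∀ u : A, F (P u) ≤ ENNReal.ofReal k * l2sq N Ω (u : Euc N → ℝ)) :
    Module.finrank ℝ (LinearMap.range P) = n ∧
    (∀ w ∈ LinearMap.range P, w =ᵐ[volume.restrict Ω] 0 → w = 0) ∧
    ∀ w ∈ LinearMap.range P, F w / l2sq N Ω w ≤ ENNReal.ofReal (k * (1 + ε) / (1 - ε)) := by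
  have key : ∀ u : A, ENNReal.ofReal (1 - ε) * l2sq N Ω (u : Euc N → ℝ) ≤
      ENNReal.ofReal (1 + ε) * l2sq N Ω (P u) := by
    intro u
    set l := l2sq N Ω (u : Euc N → ℝ) with hl
    have h1 := l2sq_add_le (Ω := Ω) (v := fun x => (u : Euc N → ℝ) x - P u x) (hPm u) hε
    have e1 : (fun x => P u x + ((u : Euc N → ℝ) x - P u x)) = (u : Euc N → ℝ) := by
      funext x; ring
    have e2 : l2sq N Ω (fun x => (u : Euc N → ℝ) x - P u x) =
      l2sq N Ω (fun x => P u x - (u : Euc N → ℝ) x) := l2sq_congr fun x => by ring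
    rw [e1, e2, ← hl] at h1
    have h2 : l ≤ ENNReal.ofReal (1 + ε) * l2sq N Ω (P u) + ENNReal.ofReal ε * l := by
      refine h1.trans (add_le_add le_rfl ((mul_le_mul_right (hcl u) _).trans (le_of_eq ?_)))
      rw [← mul_assoc, ← ENNReal.ofReal_mul (by positivity)]
      congr 2
      field_simp
      ring
    have h3 : ENNReal.ofReal (1 - ε) * l + ENNReal.ofReal ε * l = l := by
      rw [← add_mul, ← ENNReal.ofReal_add (by linarith) hε.le]; simp
    have hfin : ENNReal.ofReal ε * l ≠ ⊤ := (ENNReal.mul_lt_top ENNReal.ofReal_lt_top (hl2 u)).ne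
    rw [← ENNReal.add_le_add_iff_right hfin, h3]
    exact h2
  have hker : ∀ u : A, P u =ᵐ[volume.restrict Ω] 0 → u = 0 := by
    intro u hu
    have h1 := (l2sq_zero (hPm u)).2 hu
    have h2 := key u
    rw [h1, mul_zero, nonpos_iff_eq_zero, mul_eq_zero] at h2
    rcases h2 with h2 | h2
    · rw [ENNReal.ofReal_eq_zero] at h2; linarith
    · exact hz u h2
  refine ⟨?_, ?_, ?_⟩
  · rw [LinearMap.finrank_range_of_inj, hn]
    rw [← LinearMap.ker_eq_bot, LinearMap.ker_eq_bot']
    intro u hu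
    exact hker u (by rw [hu])
  · rintro w ⟨u, rfl⟩ hw
    rw [hker u hw, map_zero]
  · rintro w ⟨u, rfl⟩
    apply ENNReal.div_le_of_le_mul
    calc F (P u) ≤ _ := hF u
      _ = ENNReal.ofReal (k / (1 - ε)) * (ENNReal.ofReal (1 - ε) * l2sq N Ω (u : Euc N → ℝ)) := by
        rw [← mul_assoc, ← ENNReal.ofReal_mul (div_nonneg hk (by linarith)),
          div_mul_cancel₀ _ (by linarith)]
      _ ≤ _ := mul_le_mul_right (key u) _
      _ = _ := by
        rw [← mul_assoc, ← ENNReal.ofReal_mul (div_nonneg hk (by linarith))]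
        congr 2
        ring

theorem final_real {Λ Λ1 : ℝ} (h : Λ < Λ1) : ∃ ε : ℝ, 0 < ε ∧ ε < 1 ∧
    ((1 + ε) ^ 2 * Λ + ε) * (1 + ε) / (1 - ε) < Λ1 := by
  have hc : ContinuousAt (fun ε : ℝ => ((1 + ε) ^ 2 * Λ + ε) * (1 + ε) / (1 - ε)) 0 :=
    ContinuousAt.div (by fun_prop) (by fun_prop) (by norm_num)
  have ht : Tendsto (fun ε : ℝ => ((1 + ε) ^ 2 * Λ + ε) * (1 + ε) / (1 - ε)) (𝓝[>] 0)
      (𝓝 (((1 + 0) ^ 2 * Λ + 0) * (1 + 0) / (1 - 0))) := hc.tendsto.mono_left nhdsWithin_le_nhds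
  have := ht.eventually_lt_const (u := Λ1) (by simpa using h)
  obtain ⟨ε, h1, h2⟩ := (this.and (Ioo_mem_nhdsGT one_pos)).exists
  exact ⟨ε, h2.1, h2.2, h1⟩

theorem fin_close (G : Geo N Ω X L c0 t0) {A : Submodule ℝ (Euc N → ℝ)} {n : ℕ}
    (hn : Module.finrank ℝ A = n) (hn0 : n ≠ 0) (hm : ∀ u ∈ A, Measurable u)
    (hl2 : ∀ u ∈ A, l2sq N Ω u < ⊤) (hz : ∀ u ∈ A, l2sq N Ω u = 0 → u = 0) {η : ℝ} (hη : 0 < η) :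
    ∀ᶠ t in 𝓝[>] (0 : ℝ), ∀ (ρ : Euc N → ℝ) (B : ℝ), Moll N (c0 * t / 2) ρ B → ∀ u ∈ A,
      l2sq N Ω (fun x => Top N Ω X ρ t u x - u x) ≤ ENNReal.ofReal η * l2sq N Ω u := by
  have hfd : FiniteDimensional ℝ A := FiniteDimensional.of_finrank_pos (by omega)
  have hA : ∀ u ∈ A, IntegrableOn u Ω := fun u hu => (l1_le_l2 G.bdd (hm u hu) (hl2 u hu)).1
  have hM : ∀ u : A, MemLp (u : Euc N → ℝ) 2 (volume.restrict Ω) := fun u =>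
    (l1_le_l2 G.bdd (hm u u.2) (hl2 u u.2)).2.1
  obtain ⟨m, hm'⟩ : ∃ m, Module.finrank ℝ A = m := ⟨_, rfl⟩
  let b := Module.finBasisOfFinrankEq ℝ A hm'
  let J : A →ₗ[ℝ] Lp ℝ 2 (volume.restrict Ω) :=
    { toFun := fun u => (hM u).toLp _
      map_add' := fun u v => MemLp.toLp_add (hM u) (hM v)
      map_smul' := fun c u => MemLp.toLp_const_smul c (hM u) }
  have hJn : ∀ u : A, ENNReal.ofReal (‖J u‖ ^ 2) = l2sq N Ω (u : Euc N → ℝ) := by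
    intro u
    have : ‖J u‖ = (eLpNorm (u : Euc N → ℝ) 2 (volume.restrict Ω)).toReal := Lp.norm_toLp _ (hM u)
    rw [this, l2sq_eq, ENNReal.ofReal_pow ENNReal.toReal_nonneg, ENNReal.ofReal_toReal (hM u).2.ne]
  let ψ : (Fin m → ℝ) →ₗ[ℝ] Lp ℝ 2 (volume.restrict Ω) :=
    J ∘ₗ b.equivFun.symm.toLinearMap
  have hψ : LinearMap.ker ψ = ⊥ := by
    rw [LinearMap.ker_eq_bot']
    intro a ha
    have h1 : J (b.equivFun.symm a) = 0 := ha
    have h2 := hJn (b.equivFun.symm a)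
    rw [h1, norm_zero] at h2
    have h3 := hz _ (b.equivFun.symm a).2 (by rw [← h2]; simp)
    have h4 : b.equivFun.symm a = 0 := Subtype.ext h3
    exact (LinearEquiv.map_eq_zero_iff b.equivFun.symm).1 h4
  obtain ⟨K, hK0, hK⟩ := LinearMap.exists_antilipschitzWith ψ hψ
  set η' := η / ((m : ℝ) * K ^ 2 * m + 1) with hη'
  have hη0 : 0 < η' := by positivity
  have hev : ∀ᶠ t in 𝓝[>] (0 : ℝ), ∀ i : Fin m, ∀ (ρ : Euc N → ℝ) (B : ℝ), Moll N (c0 * t / 2) ρ B →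
      l2sq N Ω (fun x => Top N Ω X ρ t (b i : Euc N → ℝ) x - (b i : Euc N → ℝ) x) ≤ ENNReal.ofReal η' := by
    rw [eventually_all]
    intro i
    exact G.L2_close (hm _ (b i).2) (hl2 _ (b i).2) hη0
  filter_upwards [hev, Ioc_mem_nhdsGT G.tpos] with t ht htt ρ B hρ u hu
  set a := b.equivFun ⟨u, hu⟩ with ha
  have hsum : ∑ i, a i • b i = (⟨u, hu⟩ : A) := b.sum_equivFun _
  have hau : ∀ i, ENNReal.ofReal ((a i) ^ 2) ≤ ENNReal.ofReal (K ^ 2) * l2sq N Ω u := by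
    intro i
    have h1 := hK.le_mul_dist a 0
    rw [dist_zero_right, map_zero, dist_zero_right] at h1
    have h2 : ψ a = J ⟨u, hu⟩ := by
      show J (b.equivFun.symm (b.equivFun ⟨u, hu⟩)) = _
      rw [LinearEquiv.symm_apply_apply]
    rw [h2] at h1
    rw [← hJn ⟨u, hu⟩, ← ENNReal.ofReal_mul (by positivity), ← mul_pow]
    apply ENNReal.ofReal_le_ofReal
    rw [← sq_abs]
    exact pow_le_pow_left₀ (abs_nonneg _) ((norm_le_pi_norm a i).trans h1) 2
  have e : ∀ x, Top N Ω X ρ t u x - u x =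
      ∑ i, a i * (Top N Ω X ρ t (b i : Euc N → ℝ) x - (b i : Euc N → ℝ) x) := by
    intro x
    have h1 : TopL X hA hρ t ⟨u, hu⟩ = ∑ i, a i • TopL X hA hρ t (b i) := by
      rw [← hsum, map_sum]; simp only [map_smul]
    have h2 : u = ∑ i, a i • (b i : Euc N → ℝ) := by
      have := congrArg (Subtype.val) hsum
      rw [Submodule.coe_sum] at this
      simpa using this.symm
    have h1x := congrFun h1 x
    have h2x := congrFun h2 x
    rw [Finset.sum_apply] at h1x h2x
    simp only [Pi.smul_apply, smul_eq_mul] at h1x h2x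
    simp only [mul_sub, Finset.sum_sub_distrib]
    rw [← h2x]
    congr 1
  have hTm : ∀ i, Measurable fun x => ENNReal.ofReal ((Top N Ω X ρ t (b i : Euc N → ℝ) x - (b i : Euc N → ℝ) x) ^ 2) := by
    intro i
    have h1 := (G.Top_C2B htt.1 htt.2 hρ (hA _ (b i).2)).cont.measurable
    have h2 := hm _ (b i).2
    fun_prop
  calc l2sq N Ω (fun x => Top N Ω X ρ t u x - u x) ≤ ∫⁻ x in Ω, ENNReal.ofReal (∑ i, (a i) ^ 2) *
        ∑ i, ENNReal.ofReal ((Top N Ω X ρ t (b i : Euc N → ℝ) x - (b i : Euc N → ℝ) x) ^ 2) := by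
        unfold l2sq
        refine lintegral_mono fun x => ?_
        simp only
        rw [← ENNReal.ofReal_sum_of_nonneg (fun i _ => sq_nonneg _), ← ENNReal.ofReal_mul (by positivity), e]
        exact ENNReal.ofReal_le_ofReal (Finset.sum_mul_sq_le_sq_mul_sq _ _ _)
    _ = ENNReal.ofReal (∑ i, (a i) ^ 2) *
        ∑ i, l2sq N Ω (fun x => Top N Ω X ρ t (b i : Euc N → ℝ) x - (b i : Euc N → ℝ) x) := by
        rw [lintegral_const_mul' _ _ ENNReal.ofReal_ne_top, lintegral_finsetSum _ (fun i _ => hTm i)]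
        rfl
    _ ≤ (∑ i : Fin m, ENNReal.ofReal (K ^ 2) * l2sq N Ω u) * ∑ i : Fin m, ENNReal.ofReal η' := by
        rw [ENNReal.ofReal_sum_of_nonneg (fun i _ => sq_nonneg _)]
        exact mul_le_mul' (Finset.sum_le_sum fun i _ => hau i) (Finset.sum_le_sum fun i _ => ht i ρ B hρ)
    _ = ENNReal.ofReal ((m : ℝ) * K ^ 2 * (m * η')) * l2sq N Ω u := by
        rw [ENNReal.ofReal_mul (by positivity), ENNReal.ofReal_mul (by positivity),
          ENNReal.ofReal_mul (by positivity), ENNReal.ofReal_natCast]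
        simp
        ring
    _ ≤ _ := by
        refine mul_le_mul_left (ENNReal.ofReal_le_ofReal ?_) _
        rw [hη', ← mul_assoc, ← mul_div_assoc, div_le_iff₀ (by positivity)]
        nlinarith

end


end

section

section

variable {N : ℕ} {Ω : Set (Euc N)} {X : Euc N → Euc N} {L c0 t0 : ℝ}

theorem K_bound (N : ℕ) (L : ℝ) {ε : ℝ} (hε : 0 < ε) :
    ∀ᶠ t in 𝓝[>] (0 : ℝ), ENNReal.ofReal ((1 + t * L) ^ 2) * Kf N L t ≤ ENNReal.ofReal (1 + ε) := by
  have h1 : Tendsto (fun t : ℝ => ENNReal.ofReal ((1 + t * L) ^ 2)) (𝓝[>] (0 : ℝ)) (𝓝 1) := by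
    have h : Continuous fun t : ℝ => ENNReal.ofReal ((1 + t * L) ^ 2) :=
      ENNReal.continuous_ofReal.comp (by fun_prop)
    have h2 := h.tendsto 0
    simp only [zero_mul, add_zero, one_pow, ENNReal.ofReal_one] at h2
    exact h2.mono_left nhdsWithin_le_nhds
  have h2 := ENNReal.Tendsto.mul h1 (Or.inl one_ne_zero) (Kf_tendsto N L) (Or.inl one_ne_zero)
  rw [one_mul] at h2
  have h3 : (1 : ℝ≥0∞) < ENNReal.ofReal (1 + ε) := by
    rw [← ENNReal.ofReal_one]
    exact (ENNReal.ofReal_lt_ofReal_iff (by linarith)).2 (by linarith)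
  filter_upwards [h2.eventually_lt_const h3] with t ht using ht.le

theorem gradSq_zero : gradSq N Ω (0 : Euc N → ℝ) = 0 := by
  refine le_antisymm ?_ bot_le
  unfold gradSq
  refine (iInf₂_le (fun _ => (0 : Euc N)) ⟨measurable_const, by simp, ?_⟩).trans (by simp)
  intros
  simp

theorem zero_of_semiSq {s : ℝ} (hs0 : 0 < s) (hs1 : s < 1) (hΩ : IsOpen Ω) (hne : Ω.Nonempty)
    {u : Euc N → ℝ} (hu : Measurable u) (h0 : l2sq N Ω u = 0) (hsm : semiSq N s Ω u = 0) :
    u =ᵐ[(volume : Measure (Euc N))] 0 := by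
  have hz := (l2sq_zero hu).1 h0
  have hz' : ∀ᵐ x ∂(volume : Measure (Euc N)), x ∈ Ω → u x = 0 :=
    (ae_restrict_iff' hΩ.measurableSet).1 hz
  have hmeas : Measurable fun q : Euc N × Euc N =>
      ENNReal.ofReal ((u q.1 - u q.2) ^ 2 / kern N s q.1 q.2) := by
    unfold kern
    fun_prop
  have hreg : MeasurableSet (reg N Ω) := by
    have : reg N Ω = (Prod.fst ⁻¹' closure Ω) ∪ (Prod.snd ⁻¹' closure Ω) := rfl
    rw [this]
    exact (measurable_fst isClosed_closure.measurableSet).union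
      (measurable_snd isClosed_closure.measurableSet)
  unfold semiSq at hsm
  rw [lintegral_eq_zero_iff hmeas] at hsm
  have h2 : ∀ᵐ q ∂(volume : Measure (Euc N × Euc N)), q ∈ reg N Ω →
      ENNReal.ofReal ((u q.1 - u q.2) ^ 2 / kern N s q.1 q.2) = 0 :=
    (ae_restrict_iff' hreg).1 hsm
  have h3 : ∀ᵐ x ∂(volume : Measure (Euc N)), ∀ᵐ y ∂(volume : Measure (Euc N)), (x, y) ∈ reg N Ω →
      ENNReal.ofReal ((u x - u y) ^ 2 / kern N s x y) = 0 :=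
    Measure.ae_ae_of_ae_prod h2
  have h4 := hz'.and h3
  obtain ⟨x, hx, hxz, hxy⟩ : ∃ x, x ∈ Ω ∧ (x ∈ Ω → u x = 0) ∧
      ∀ᵐ y ∂(volume : Measure (Euc N)), (x, y) ∈ reg N Ω →
      ENNReal.ofReal ((u x - u y) ^ 2 / kern N s x y) = 0 := by
    by_contra hcon
    have h5 : volume Ω = 0 := by
      refine measure_mono_null ?_ h4
      intro x hx hh
      exact hcon ⟨x, hx, hh.1, hh.2⟩
    exact (hΩ.measure_pos volume hne).ne' h5
  filter_upwards [hxy] with y hy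
  have h6 := hy (Or.inl (subset_closure hx))
  rw [hxz hx] at h6
  by_contra hne0
  change u y ≠ 0 at hne0
  have hxy' : x ≠ y := by
    rintro rfl
    exact hne0 (hxz hx)
  have hk : 0 < kern N s x y := Real.rpow_pos_of_pos (norm_pos_iff.2 (sub_ne_zero.2 hxy')) _
  have h7 : 0 < (0 - u y) ^ 2 / kern N s x y := by
    have : (0 - u y) ^ 2 = (u y) ^ 2 := by ring
    rw [this]
    positivity
  exact (ENNReal.ofReal_pos.2 h7).ne' h6

theorem upper (hN : 2 ≤ N) (G : Geo N Ω X L c0 t0) {n : ℕ} (hn0 : n ≠ 0) {Λ Λ1 : ℝ} (hΛ0 : 0 ≤ Λ)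
    (hΛ : Λ < Λ1) (h : muN1 N Ω n < ENNReal.ofReal Λ) :
    ∀ᶠ s in 𝓝[<] (1 : ℝ), muNs N s Ω n ≤ ENNReal.ofReal Λ1 := by
  unfold muN1 at h
  obtain ⟨A, hA⟩ := iInf_lt_iff.1 h
  obtain ⟨⟨hn, hmem, hz⟩, hsup⟩ := iInf_lt_iff.1 hA
  have hm : ∀ u ∈ A, Measurable u := fun u hu => (hmem u hu).1.1
  have hl2 : ∀ u ∈ A, l2sq N Ω u < ⊤ := fun u hu => (hmem u hu).1.2.1
  have hz' : ∀ u ∈ A, l2sq N Ω u = 0 → u = 0 := fun u hu h0 =>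
    hz u hu ((l2sq_zero (hm u hu)).1 h0)
  have hI : ∀ u ∈ A, IntegrableOn u Ω := fun u hu => (l1_le_l2 G.bdd (hm u hu) (hl2 u hu)).1
  have hgrad : ∀ u ∈ A, gradSq N Ω u ≤ ENNReal.ofReal Λ * l2sq N Ω u := by
    intro u hu
    by_cases hu0 : u = 0
    · rw [hu0, gradSq_zero]; exact bot_le
    · have h1 : rayleigh1 N Ω u ≤ ENNReal.ofReal Λ :=
        (le_iSup₂ (f := fun (u : Euc N → ℝ) (_ : u ∈ A ∧ u ≠ 0) => rayleigh1 N Ω u) u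
          ⟨hu, hu0⟩).trans hsup.le
      unfold rayleigh1 at h1
      exact (ENNReal.div_le_iff (fun h0 => hu0 (hz' u hu h0)) (hl2 u hu).ne).1 h1
  obtain ⟨ε, hε, hε1, hfin⟩ := final_real hΛ
  have hη1 : 0 < ε ^ 2 / (1 + ε) / 4 := by positivity
  obtain ⟨t, hclose, hK, htt⟩ := ((fin_close G hn hn0 hm hl2 hz' hη1).and
    ((K_bound N L hε).and (Ioc_mem_nhdsGT G.tpos))).exists
  have hct : 0 < c0 * t / 2 := by have := G.cpos; have := htt.1; positivity
  obtain ⟨ρ, B, hρ⟩ := exists_moll N hct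
  have hB := hρ.Bpos
  have hL := G.Lpos
  set V := (volume Ω).toReal with hV
  have hVtop : volume Ω ≠ ⊤ := G.bdd.measure_lt_top.ne
  have hVe : volume Ω = ENNReal.ofReal V := (ENNReal.ofReal_toReal hVtop).symm
  have hV0 : 0 ≤ V := ENNReal.toReal_nonneg
  set D := 4 * B ^ 2 * ((1 + L) ^ 2 + L) ^ 2 with hD
  have hD0 : 0 ≤ D := by positivity
  set η := ε / (1 + D * V) with hη
  have hDV : 0 ≤ D * V := by positivity
  have hη0 : 0 < η := by positivity
  have hηε : η ≤ ε := by
    rw [hη, div_le_iff₀ (by positivity)]; nlinarith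
  have hηε' : η * D * V ≤ ε := by
    rw [hη, mul_assoc, div_mul_eq_mul_div, div_le_iff₀ (by positivity)]; nlinarith
  filter_upwards [lemma_U hN G.isOpen G.bdd (volume_closure_le G.cpos G.tpos G.lip G.ball) hη0,
    Ico_mem_nhdsLT (show (1/2 : ℝ) < 1 by norm_num)] with s hs hs1
  have hc : 0 < cNs N s := cNs_pos N (by linarith [hs1.1]) hs1.2
  set P := PopL G htt.1 htt.2 hI hρ with hP
  have hPe : ∀ u : A, P u = Pop N Ω X ρ t u := fun u => rfl
  have hC : ∀ u : A, C2B N (P u) (Top' N Ω X ρ t u)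
      (2 * ((B * ∫ y in Ω, |(u : Euc N → ℝ) y|) * ((1 + L) ^ 2 + L))) := fun u =>
    G.Pop_C2B htt.1 htt.2 hρ (hI u u.2)
  have hF : ∀ u : A, ENNReal.ofReal (cNs N s / 2) * semiSq N s Ω (P u) ≤
      ENNReal.ofReal ((1 + ε) ^ 2 * Λ + ε) * l2sq N Ω (u : Euc N → ℝ) := by
    intro u
    refine (hs _ _ _ (hC u)).trans ?_
    have h1 : ∫⁻ x in Ω, ENNReal.ofReal (‖Top' N Ω X ρ t u x‖ ^ 2) ≤
        ENNReal.ofReal (1 + ε) * (ENNReal.ofReal Λ * l2sq N Ω (u : Euc N → ℝ)) :=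
      (G.Top'_int htt.1 htt.2 hρ (hI u u.2)).trans (mul_le_mul' hK
        ((mol'_gradSq G.isOpen G.bdd hct hρ (hI u u.2)).trans (hgrad u u.2)))
    have h2 : ENNReal.ofReal (η * (2 * ((B * ∫ y in Ω, |(u : Euc N → ℝ) y|) * ((1 + L) ^ 2 + L))) ^ 2)
        ≤ ENNReal.ofReal ε * l2sq N Ω (u : Euc N → ℝ) := by
      have e1 : η * (2 * ((B * ∫ y in Ω, |(u : Euc N → ℝ) y|) * ((1 + L) ^ 2 + L))) ^ 2 =
          (η * D) * (∫ y in Ω, |(u : Euc N → ℝ) y|) ^ 2 := by rw [hD]; ring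
      rw [e1, ENNReal.ofReal_mul (by positivity)]
      refine (mul_le_mul' le_rfl (l1_le_l2 G.bdd (hm u u.2) (hl2 u u.2)).2.2).trans ?_
      rw [hVe, ← mul_assoc, ← ENNReal.ofReal_mul (by positivity)]
      exact mul_le_mul' (ENNReal.ofReal_le_ofReal hηε') le_rfl
    calc _ ≤ ENNReal.ofReal (1 + ε) * (ENNReal.ofReal (1 + ε) * (ENNReal.ofReal Λ * l2sq N Ω (u : Euc N → ℝ)))
          + ENNReal.ofReal ε * l2sq N Ω (u : Euc N → ℝ) :=
          add_le_add (mul_le_mul' (ENNReal.ofReal_le_ofReal (by linarith)) h1) h2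
      _ = _ := by
          have e1 : ENNReal.ofReal ((1 + ε) ^ 2 * Λ + ε) = ENNReal.ofReal (1 + ε) *
              ENNReal.ofReal (1 + ε) * ENNReal.ofReal Λ + ENNReal.ofReal ε := by
            rw [← ENNReal.ofReal_mul (by positivity), ← ENNReal.ofReal_mul (by positivity),
              ← ENNReal.ofReal_add (by positivity) hε.le, pow_two]
          rw [e1]
          ring
  obtain ⟨r1, r2, r3⟩ := transfer (Ω := Ω) P hn hε hε1 (k := (1 + ε) ^ 2 * Λ + ε) (by positivity)
    (fun w => ENNReal.ofReal (cNs N s / 2) * semiSq N s Ω w) (fun u => hl2 u u.2)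
    (fun u h0 => Subtype.ext (hz' u u.2 h0))
    (fun u => by
      have : Continuous (P u) := continuous_iff_continuousAt.2 fun x => ((hC u).hasF x).continuousAt
      exact this.measurable)
    (fun u => by
      refine (G.Pop_close htt.1 htt.2 hρ (hm u u.2) (hl2 u u.2) (hmem u u.2).2).trans ?_
      refine (mul_le_mul' le_rfl (hclose ρ B hρ u u.2)).trans ?_
      have e4 : (4 : ℝ≥0∞) = ENNReal.ofReal 4 := by simp
      rw [e4, ← mul_assoc, ← ENNReal.ofReal_mul (by norm_num)]
      exact mul_le_mul' (ENNReal.ofReal_le_ofReal (by linarith)) le_rfl) hF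
  unfold muNs
  refine iInf_le_of_le (LinearMap.range P) (iInf_le_of_le ⟨r1, ?_, ?_⟩ ?_)
  · rintro w ⟨u, rfl⟩
    refine ⟨⟨?_, (hC u).l2sq_lt G.bdd, ?_⟩, G.Pop_mean htt.1 htt.2 hρ (hI u u.2)⟩
    · have : Continuous (P u) := continuous_iff_continuousAt.2 fun x => ((hC u).hasF x).continuousAt
      exact this.measurable
    · have h1 : ENNReal.ofReal (cNs N s / 2) * semiSq N s Ω (P u) < ⊤ :=
        (hF u).trans_lt (ENNReal.mul_lt_top ENNReal.ofReal_lt_top (hl2 u u.2))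
      rcases ENNReal.mul_lt_top_iff.1 h1 with h2 | h2 | h2
      · exact h2.2
      · exact absurd h2 (ENNReal.ofReal_pos.2 (by positivity)).ne'
      · rw [h2]; exact ENNReal.zero_lt_top
  · intro w hw h0
    exact r2 w hw (ae_restrict_of_ae h0)
  · refine iSup₂_le fun w hw => ?_
    exact (r3 w hw.1).trans (ENNReal.ofReal_le_ofReal hfin.le)

theorem lower (hN : 2 ≤ N) (G : Geo N Ω X L c0 t0) {n : ℕ} (hn0 : n ≠ 0) {Λ Λ1 : ℝ} (hΛ0 : 0 ≤ Λ)
    (hΛ : Λ < Λ1) (h : ENNReal.ofReal Λ1 < muN1 N Ω n) :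
    ∀ᶠ s in 𝓝[<] (1 : ℝ), ENNReal.ofReal Λ ≤ muNs N s Ω n := by
  obtain ⟨ε, hε, hε1, hfin⟩ := final_real hΛ
  obtain ⟨C, hC0, hHs⟩ := G.Hs_close hN
  set τ := ε ^ 2 / (1 + ε) / (4 * C * (Λ + 1)) with hτ
  have hτ0 : 0 < τ := by positivity
  have ev1 : ∀ᶠ t in 𝓝[>] (0 : ℝ), t ∈ Ioc 0 t0 := Ioc_mem_nhdsGT G.tpos
  have ev2 : ∀ᶠ t in 𝓝[>] (0 : ℝ), t ∈ Ioc 0 τ := Ioc_mem_nhdsGT hτ0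
  obtain ⟨t, hK, htt, htτ⟩ := ((K_bound N L hε).and (ev1.and ev2)).exists
  have ht := htt.1
  have hct : 0 < c0 * t / 2 := by have := G.cpos; positivity
  obtain ⟨ρ, B, hρ⟩ := exists_moll N hct
  have hCt : 4 * (C * t * Λ) ≤ ε ^ 2 / (1 + ε) := by
    have h1 := htτ.2
    rw [hτ, le_div_iff₀ (by positivity)] at h1
    have : 0 < C * t := by positivity
    nlinarith
  filter_upwards [lemma_L hN G.isOpen G.bdd hct hρ (half_pos hε), hHs,
    Ico_mem_nhdsLT (show (1/2 : ℝ) < 1 by norm_num)] with s hs hHs hs1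
  have hs0 : 0 < s := by linarith [hs1.1]
  have hc : 0 < cNs N s := cNs_pos N hs0 hs1.2
  by_contra hcon
  rw [not_le] at hcon
  unfold muNs at hcon
  obtain ⟨A, hA⟩ := iInf_lt_iff.1 hcon
  obtain ⟨⟨hn, hmem, hz⟩, hsup⟩ := iInf_lt_iff.1 hA
  have hm : ∀ u ∈ A, Measurable u := fun u hu => (hmem u hu).1.1
  have hl2 : ∀ u ∈ A, l2sq N Ω u < ⊤ := fun u hu => (hmem u hu).1.2.1
  have hray : ∀ u ∈ A, u ≠ 0 → rayleighS N s Ω u ≤ ENNReal.ofReal Λ := fun u hu hu0 =>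
    (le_iSup₂ (f := fun (u : Euc N → ℝ) (_ : u ∈ A ∧ u ≠ 0) => rayleighS N s Ω u) u
          ⟨hu, hu0⟩).trans hsup.le
  have hz' : ∀ u ∈ A, l2sq N Ω u = 0 → u = 0 := by
    intro u hu h0
    by_contra hu0
    have h1 := hray u hu hu0
    unfold rayleighS at h1
    rw [h0] at h1
    have h2 : ENNReal.ofReal (cNs N s / 2) * semiSq N s Ω u = 0 := by
      by_contra h3
      rw [ENNReal.div_zero h3] at h1
      exact absurd (top_le_iff.1 h1) ENNReal.ofReal_ne_top
    rcases mul_eq_zero.1 h2 with h3 | h3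
    · exact (ENNReal.ofReal_pos.2 (by positivity)).ne' h3
    · exact hu0 (hz u hu (zero_of_semiSq hs0 hs1.2 G.isOpen G.ne (hm u hu) h0 h3))
  have hI : ∀ u ∈ A, IntegrableOn u Ω := fun u hu => (l1_le_l2 G.bdd (hm u hu) (hl2 u hu)).1
  have hsemi : ∀ u ∈ A, ENNReal.ofReal (cNs N s / 2) * semiSqOn N s Ω u ≤
      ENNReal.ofReal Λ * l2sq N Ω u := by
    intro u hu
    by_cases hu0 : u = 0
    · rw [hu0]; simp [semiSqOn]
    · have h1 := hray u hu hu0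
      unfold rayleighS at h1
      exact (mul_le_mul' le_rfl (semiSqOn_le s u)).trans
        ((ENNReal.div_le_iff (fun h0 => hu0 (hz' u hu h0)) (hl2 u hu).ne).1 h1)
  set P := PopL G htt.1 htt.2 hI hρ with hP
  have hC : ∀ u : A, C2B N (P u) (Top' N Ω X ρ t u)
      (2 * ((B * ∫ y in Ω, |(u : Euc N → ℝ) y|) * ((1 + L) ^ 2 + L))) := fun u =>
    G.Pop_C2B htt.1 htt.2 hρ (hI u u.2)
  have hF : ∀ u : A, gradSq N Ω (P u) ≤
      ENNReal.ofReal ((1 + ε) ^ 2 * Λ + ε) * l2sq N Ω (u : Euc N → ℝ) := by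
    intro u
    refine ((hC u).gradSq_le G.bdd).trans ((G.Top'_int htt.1 htt.2 hρ (hI u u.2)).trans ?_)
    refine (mul_le_mul' hK (hs u (hm u u.2) (hl2 u u.2))).trans ?_
    calc _ ≤ ENNReal.ofReal (1 + ε) * (ENNReal.ofReal (1 + ε / 2) * (ENNReal.ofReal Λ * l2sq N Ω (u : Euc N → ℝ))
          + ENNReal.ofReal (ε / 2) * l2sq N Ω (u : Euc N → ℝ)) := by
          exact mul_le_mul' le_rfl (add_le_add (mul_le_mul' le_rfl (hsemi u u.2)) le_rfl)
      _ = ENNReal.ofReal ((1 + ε) * ((1 + ε / 2) * Λ + ε / 2)) * l2sq N Ω (u : Euc N → ℝ) := by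
          have e1 : ENNReal.ofReal ((1 + ε) * ((1 + ε / 2) * Λ + ε / 2)) = ENNReal.ofReal (1 + ε) *
              (ENNReal.ofReal (1 + ε / 2) * ENNReal.ofReal Λ + ENNReal.ofReal (ε / 2)) := by
            rw [← ENNReal.ofReal_mul (by positivity), ← ENNReal.ofReal_add (by positivity) (by positivity),
              ← ENNReal.ofReal_mul (by positivity)]
          rw [e1]
          ring
      _ ≤ _ := by
          refine mul_le_mul' (ENNReal.ofReal_le_ofReal ?_) le_rfl
          nlinarith [mul_nonneg hε.le hΛ0, mul_nonneg (mul_nonneg hε.le hε.le) hΛ0]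
  obtain ⟨r1, r2, r3⟩ := transfer (Ω := Ω) P hn hε hε1 (k := (1 + ε) ^ 2 * Λ + ε) (by positivity)
    (fun w => gradSq N Ω w) (fun u => hl2 u u.2)
    (fun u h0 => Subtype.ext (hz' u u.2 h0))
    (fun u => by
      have : Continuous (P u) := continuous_iff_continuousAt.2 fun x => ((hC u).hasF x).continuousAt
      exact this.measurable)
    (fun u => by
      refine (G.Pop_close htt.1 htt.2 hρ (hm u u.2) (hl2 u u.2) (hmem u u.2).2).trans ?_
      refine (mul_le_mul' le_rfl ((hHs t htt.1 htt.2 ρ B u hρ (hm u u.2) (hI u u.2)).trans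
        (mul_le_mul' le_rfl (hsemi u u.2)))).trans ?_
      have e4 : (4 : ℝ≥0∞) = ENNReal.ofReal 4 := by simp
      rw [e4, ← mul_assoc (ENNReal.ofReal (C * t)), ← mul_assoc, ← ENNReal.ofReal_mul (by positivity),
        ← ENNReal.ofReal_mul (by norm_num)]
      exact mul_le_mul' (ENNReal.ofReal_le_ofReal hCt) le_rfl) hF
  have hle : muN1 N Ω n ≤ ENNReal.ofReal Λ1 := by
    unfold muN1
    refine iInf_le_of_le (LinearMap.range P) (iInf_le_of_le ⟨r1, ?_, r2⟩ ?_)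
    · rintro w ⟨u, rfl⟩
      exact ⟨(hC u).memH1 G.bdd, G.Pop_mean htt.1 htt.2 hρ (hI u u.2)⟩
    · refine iSup₂_le fun w hw => ?_
      exact (r3 w hw.1).trans (ENNReal.ofReal_le_ofReal hfin.le)
  exact absurd h (not_lt.2 hle)

end


end


/-- Theorem 3.1, eigenvalue convergence: for every `n ∈ ℕ`,
`μ_n^{(s)}(Ω) → μ_n^{(1)}(Ω)` as `s → 1⁻`. -/
theorem statement6 (N : ℕ) (hN : 2 ≤ N) (Ω : Set (Euc N)) (hΩ : IsLipschitzDomain N Ω)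
    (n : ℕ) :
    Filter.Tendsto (fun s : ℝ => muNsFull N s Ω n)
      (nhdsWithin 1 (Set.Ioo (0 : ℝ) 1)) (nhds (muN1Full N Ω n)) := by
  by_cases hn0 : n = 0
  · simp only [muNsFull, muN1Full, if_pos hn0]
    exact tendsto_const_nhds
  simp only [muNsFull, muN1Full, if_neg hn0]
  obtain ⟨X, L, c0, t0, G⟩ := exists_Geo hΩ
  refine Tendsto.mono_left ?_ (nhdsWithin_mono 1 Ioo_subset_Iio_self)
  refine tendsto_order.2 ⟨fun a ha => ?_, fun a ha => ?_⟩
  · obtain ⟨p, hp0, hap, hp⟩ := ENNReal.lt_iff_exists_real_btwn.1 ha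
    obtain ⟨q, hq0, hpq, hq⟩ := ENNReal.lt_iff_exists_real_btwn.1 hp
    have hpq' : p < q := (ENNReal.ofReal_lt_ofReal_iff_of_nonneg hp0).1 hpq
    filter_upwards [lower hN G hn0 hp0 hpq' hq] with s hs using hap.trans_le hs
  · obtain ⟨p, hp0, hap, hp⟩ := ENNReal.lt_iff_exists_real_btwn.1 ha
    obtain ⟨q, hq0, hpq, hq⟩ := ENNReal.lt_iff_exists_real_btwn.1 hp
    have hpq' : p < q := (ENNReal.ofReal_lt_ofReal_iff_of_nonneg hp0).1 hpq
    filter_upwards [upper hN G hn0 hp0 hpq' hap] with s hs using hs.trans_lt hq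

end FracNeumann
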